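/- Suppose f is non-degenerate over ℝ, τ₀ is compact, s₀ ∉ ℤ, and −1 < s₀ < 0. Then, for each sign ±, the integral ∫_{(0,∞)^{n−ρ}} f_{τ₀}(1,…,1,y_{ρ+1},…,y_n)_±^{s₀} dy is finite, and there is an open neighbourhood U of 0 in ℝⁿ such that for every C^∞ function φ with compact support contained in U, every meromorphic continuation G of Z̄_±(s) = ∫_{(0,∞)ⁿ} f_±(x)^s φ(x) dx satisfies lim_{s→s₀} (s−s₀)^ρ G(s) = n! · Vol(C) · φ(0) · ∫_{(0,∞)^{n−ρ}} f_{τ₀}(1,…,1,y_{ρ+1},…,y_n)_±^{s₀} dy. -/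

import Mathlib

/-!
The Taylor series of `f` is written, near `0`, as a finite sum `F = ∑_{α ∈ A} x ^ α g_α` with smooth
`g_α` (`exists_data`), and the positive orthant is parametrized by `x = e ^ u`. Let
`M = ∑_{α ∈ A} x ^ α`. Non-degeneracy says that near the origin the logarithmic gradient of `F` is
comparable to `M` (`key_ineq`), so that there is a vector field `c` with `c · ∂F = 1` whose
coefficients and all their derivatives are `O(M⁻¹)` (`exists_setup`).

*Continuation.* Integration by parts along `c` trades a power of `M` for a unit shift of `s`.
Combined with integration by parts along the constant fields given by finitely many test vectors,
which raises the order of vanishing of the amplitude, it shows that `Z(s)` times a polynomial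
continues holomorphically to any half-plane (`cont_mh`). Hence every meromorphic continuation,
whatever its domain, agrees with this one near `s₀`, and the limit can be computed along
`s = s₀ + ε`, `ε → 0+` (`mero_limit`), as soon as `Z` is holomorphic for `Re s > s₀`
(`differentiableOn_J`).

*The limit.* Compactness of `τ₀` and the complementarity hypothesis give coordinates
`u = ℓ(a / ε) + b`, where `ℓ` parametrizes the span of the normals of the faces through
`(t₀, …, t₀)` and `b` ranges over the last `n - ρ` coordinates (`Geo`, `exists_geo`). In these
coordinates `ε ^ ρ Z(s₀ + ε)` is an integral whose integrand converges almost everywhere to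
`φ(0) · e ^ {t₀ ∑ ℓ a} · F₀(b)_+ ^ {s₀}` where `-ℓ a` lies in the cone `Pc` of normals and to `0`
elsewhere; here `F₀` is the normalized face polynomial on `(1, …, 1, y)` with `y = e ^ b`. The factors other than the power of the normalized phase are
dominated (`Geo.domination`). That power is not bounded near the zeros of `F`, but `s₀ > -1` and one
regularized integration by parts along `c` bound its integrals slightly beyond the exponent `s₀`
(`uniform_bound`), and the resulting uniform integrability suffices (`tendsto_integral_of_tail`,
`main_limit`). Fatou's lemma gives the finiteness of the limit integral at the same time.

*The constant.* The cone of normals is generated by the facet normals `ξ_j` (`cone_gen`), and the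
functional `L` equal to `1` on all generators of `C` satisfies
`∫ e ^ {-L} = n! vol {L ≤ 1}` over the cone generated by `C` (`lintegral_cone`). This identifies the
integral over `a` with `n! Vol(C)` (`volume_hull`).

The negative part is treated by replacing `f` with `-f`.
-/

open MeasureTheory Filter Topology Complex

noncomputable section
open scoped Classical

/-- Inner product `⟨a, y⟩ = ∑ i, a i * y i` on `Fin n → ℝ`. -/
def dotR {n : ℕ} (a y : Fin n → ℝ) : ℝ := ∑ i, a i * y i

/-- The Newton polyhedron of a support set `S ⊆ ℕⁿ`: the convex hull of `S + [0,∞)ⁿ`. -/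
def newtonPolyhedron {n : ℕ} (S : Set (Fin n → ℕ)) : Set (Fin n → ℝ) :=
  convexHull ℝ {x : Fin n → ℝ | ∃ α ∈ S, ∀ i, (α i : ℝ) ≤ x i}

/-- The face of `Γ` cut out by a nonnegative linear functional `u`:
the set of minimizers of `⟨u, ·⟩` on `Γ`. -/
def traceFace {n : ℕ} (Γ : Set (Fin n → ℝ)) (u : Fin n → ℝ) : Set (Fin n → ℝ) :=
  {y ∈ Γ | ∀ z ∈ Γ, dotR u y ≤ dotR u z}

/-- `τ` is a face of `Γ`: the set of minimizers of some nonnegative linear functional. -/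
def IsFaceOf {n : ℕ} (Γ τ : Set (Fin n → ℝ)) : Prop :=
  ∃ u : Fin n → ℝ, (∀ i, 0 ≤ u i) ∧ τ = traceFace Γ u

/-- The dimension of (the affine span of) a subset of `ℝⁿ`. -/
def faceDim {n : ℕ} (τ : Set (Fin n → ℝ)) : ℕ := Module.finrank ℝ (vectorSpan ℝ τ)

/-- Given Taylor coefficients `a : ℕⁿ → ℝ` and a region `γ ⊆ ℝⁿ`, the polynomial
`f_γ(x) = ∑_{α ∈ γ ∩ ℕⁿ} a_α x^α`. -/
def facePoly {n : ℕ} (a : (Fin n → ℕ) → ℝ) (γ : Set (Fin n → ℝ)) (x : Fin n → ℝ) : ℝ :=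
  ∑' α : Fin n → ℕ, if (fun i => (α i : ℝ)) ∈ γ then a α * ∏ i, x i ^ α i else 0

/-- `f` (with Taylor coefficients `a` and Newton polyhedron `Γ`) is non-degenerate over ℝ:
for every compact face `γ` of `Γ`, the polynomial `f_γ` has no critical point in `(ℝ∖{0})ⁿ`. -/
def NonDegenerateR {n : ℕ} (a : (Fin n → ℕ) → ℝ) (Γ : Set (Fin n → ℝ)) : Prop :=
  ∀ γ : Set (Fin n → ℝ), IsFaceOf Γ γ → IsCompact γ →
    ∀ x : Fin n → ℝ, (∀ i, x i ≠ 0) → fderiv ℝ (facePoly a γ) x ≠ 0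

/-- The positive open orthant `(0,∞)^m`. -/
def posOrthant (m : ℕ) : Set (Fin m → ℝ) := {y | ∀ i, 0 < y i}

/-- `pad ρ y = (1,…,1,y_{ρ+1},…,y_n)`: the first `ρ` coordinates are `1`,
the remaining ones come from `y`. -/
def padR {n : ℕ} (ρ : ℕ) (y : Fin (n - ρ) → ℝ) : Fin n → ℝ :=
  fun i => if h : (i : ℕ) < ρ then 1 else y ⟨(i : ℕ) - ρ, by have := i.isLt; omega⟩

/-- `pPow u s = u^s` for `u > 0`, and `0` otherwise (so in particular `0^s = 0`). -/
def pPow (u s : ℝ) : ℝ := if 0 < u then u ^ s else 0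

/-- `G` is a meromorphic continuation of `Z` (defined for `Re s > 0`) to a connected open
set containing the half-plane `{Re s > 0}` and the point `s₀`. -/
def IsMeroCont (Z : ℂ → ℂ) (s₀ : ℂ) (G : ℂ → ℂ) : Prop :=
  ∃ U : Set ℂ, IsOpen U ∧ IsConnected U ∧ ({s : ℂ | 0 < s.re} ∪ {s₀}) ⊆ U ∧
    MeromorphicOn G U ∧ ∀ s : ℂ, 0 < s.re → G s = Z s

/-- The positive part `max (σ • f) 0`; for `σ = 1` this is `f₊`, for `σ = -1` it is `f₋`. -/
def sgnPart (σ : ℝ) (u : ℝ) : ℝ := max (σ * u) 0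
/-! ### Finite monomial presentation of an analytic germ -/

/-- The monomial `x ^ α`. -/
def mon {n : ℕ} (α : Fin n → ℕ) (x : Fin n → ℝ) : ℝ := ∏ i, x i ^ α i

/-- The total degree of a multi-exponent. -/
def tdeg {n : ℕ} (α : Fin n → ℕ) : ℕ := ∑ i, α i

lemma mon_add {n : ℕ} (α β : Fin n → ℕ) (x : Fin n → ℝ) : mon (α + β) x = mon α x * mon β x := by
  simp [mon, pow_add, Finset.prod_mul_distrib]

lemma mon_single {n : ℕ} (i : Fin n) (x : Fin n → ℝ) : mon (Pi.single i 1) x = x i := by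
  rw [mon, Finset.prod_eq_single i] <;> simp +contextual

lemma mon_zero {n : ℕ} (x : Fin n → ℝ) : mon 0 x = 1 := by simp [mon]

lemma contDiff_mon {n : ℕ} (α : Fin n → ℕ) : ContDiff ℝ (⊤ : ℕ∞) (mon α) := by
  unfold mon; fun_prop

lemma abs_mon_le {n : ℕ} (α : Fin n → ℕ) (x : Fin n → ℝ) {R : ℝ} (hx : ‖x‖ ≤ R) :
    |mon α x| ≤ R ^ tdeg α := by
  rw [mon, tdeg, Finset.abs_prod, ← Finset.prod_pow_eq_pow_sum]
  refine Finset.prod_le_prod (fun i _ => abs_nonneg _) fun i _ => ?_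
  rw [abs_pow]
  exact pow_le_pow_left₀ (abs_nonneg _) ((norm_le_pi_norm x i).trans hx) _

lemma hasFDerivAt_mon {n : ℕ} (α : Fin n → ℕ) (x : Fin n → ℝ) :
    HasFDerivAt (mon α) (∑ i, ((α i : ℝ) * mon (α - Pi.single i 1) x) •
      (ContinuousLinearMap.proj i : (Fin n → ℝ) →L[ℝ] ℝ)) x := by
  have h := HasFDerivAt.finsetProd (𝕜 := ℝ) (u := Finset.univ) (x := x)
    (g := fun (i : Fin n) (y : Fin n → ℝ) => y i ^ α i)
    (g' := fun i => ((α i : ℝ) * x i ^ (α i - 1)) •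
      (ContinuousLinearMap.proj i : (Fin n → ℝ) →L[ℝ] ℝ)) (by
      intro i _
      have := (hasFDerivAt_apply (𝕜 := ℝ) i x).pow (α i)
      simpa [smul_smul] using this)
  change HasFDerivAt (fun y : Fin n → ℝ => ∏ i, y i ^ α i) _ x
  refine h.congr_fderiv ?_
  refine Finset.sum_congr rfl fun i _ => ?_
  rw [smul_smul]
  congr 1
  rw [mon, ← Finset.mul_prod_erase Finset.univ _ (Finset.mem_univ i)]
  have : ∏ j ∈ Finset.univ.erase i, x j ^ (α - Pi.single i 1 : Fin n → ℕ) j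
      = ∏ j ∈ Finset.univ.erase i, x j ^ α j := by
    refine Finset.prod_congr rfl fun j hj => ?_
    simp [Finset.ne_of_mem_erase hj]
  rw [this]
  simp
  ring

/-- A power series indexed by an arbitrary type, summable with all polynomial weights at
radius `R`, is smooth on the ball of radius `R`. Arbitrary index types make the family of such
series closed under termwise differentiation without reindexing. -/
lemma contDiffOn_series {n : ℕ} {ι : Type} {R : ℝ} (hR : 0 < R) (m : ℕ) :
    ∀ (c : ι → ℝ) (e : ι → Fin n → ℕ),
      (∀ k : ℕ, Summable fun j => |c j| * ((tdeg (e j) : ℝ) + 1) ^ k * R ^ tdeg (e j)) →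
      ContDiffOn ℝ m (fun x => ∑' j, c j * mon (e j) x) (Metric.ball 0 R) := by
  have key : ∀ (c : ι → ℝ) (e : ι → Fin n → ℕ),
      (∀ k : ℕ, Summable fun j => |c j| * ((tdeg (e j) : ℝ) + 1) ^ k * R ^ tdeg (e j)) →
      (∀ i : Fin n, ∀ k : ℕ, Summable fun j => |c j * e j i| *
        ((tdeg (e j - Pi.single i 1) : ℝ) + 1) ^ k * R ^ tdeg (e j - Pi.single i 1)) := by
    intro c e h i k
    refine Summable.of_nonneg_of_le (fun j => by positivity) (fun j => ?_)
      ((h (k + 1)).mul_left (R⁻¹))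
    rcases Nat.eq_zero_or_pos (e j i) with h0 | h0
    · rw [h0]; simp; positivity
    · have h1 : tdeg (e j) = tdeg (e j - Pi.single i 1) + 1 := by
        have : e j = (e j - Pi.single i 1) + Pi.single i 1 := by
          ext l
          by_cases hl : l = i
          · subst hl; simp; omega
          · simp [hl]
        conv_lhs => rw [this]
        simp [tdeg, Finset.sum_add_distrib]
      have h2 : (e j i : ℝ) ≤ (tdeg (e j) : ℝ) + 1 := by
        have : e j i ≤ tdeg (e j) :=
          Finset.single_le_sum (f := e j) (fun _ _ => Nat.zero_le _) (Finset.mem_univ i)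
        have : (e j i : ℝ) ≤ tdeg (e j) := by exact_mod_cast this
        linarith
      rw [h1] at h2 ⊢
      set d := tdeg (e j - Pi.single i 1)
      rw [abs_mul, Nat.abs_cast]
      have h3 : ((d : ℝ) + 1) ^ k ≤ (((d + 1 : ℕ) : ℝ) + 1) ^ k := by
        gcongr; linarith
      calc |c j| * (e j i : ℝ) * ((d : ℝ) + 1) ^ k * R ^ d
          ≤ |c j| * (((d + 1 : ℕ) : ℝ) + 1) * (((d + 1 : ℕ) : ℝ) + 1) ^ k * R ^ d := by
            gcongr
        _ = _ := by field_simp; ring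
  induction m with
  | zero =>
    intro c e h
    rw [Nat.cast_zero, contDiffOn_zero]
    refine continuousOn_tsum (u := fun j => |c j| * R ^ tdeg (e j))
      (fun j => ((contDiff_mon _).continuous.const_mul _ |>.continuousOn)) ?_ ?_
    · simpa using h 0
    · intro j x hx
      rw [Real.norm_eq_abs, abs_mul]
      gcongr
      exact abs_mon_le _ _ (by simpa using (Metric.mem_ball.1 hx).le)
  | succ m ih =>
    intro c e h
    have hd : ∀ x ∈ Metric.ball (0 : Fin n → ℝ) R,
        HasFDerivAt (fun x => ∑' j, c j * mon (e j) x)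
          (∑ i, (∑' j, (c j * e j i) * mon (e j - Pi.single i 1) x) •
            (ContinuousLinearMap.proj i : (Fin n → ℝ) →L[ℝ] ℝ)) x := by
      intro x hx
      have hb : ∀ j, ∀ i : Fin n, ∀ y ∈ Metric.ball (0 : Fin n → ℝ) R,
          |(c j * e j i) * mon (e j - Pi.single i 1) y| ≤
            |c j * e j i| * R ^ tdeg (e j - Pi.single i 1) := by
        intro j i y hy
        rw [abs_mul]
        gcongr
        exact abs_mon_le _ _ (by simpa using (Metric.mem_ball.1 hy).le)
      have hs : ∀ i : Fin n, Summable fun j =>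
          |c j * e j i| * R ^ tdeg (e j - Pi.single i 1) := by
        intro i; simpa using key c e h i 0
      have H := hasFDerivAt_tsum_of_isPreconnected (𝕜 := ℝ)
        (u := fun j => ∑ i, |c j * e j i| * R ^ tdeg (e j - Pi.single i 1))
        (f := fun j y => c j * mon (e j) y)
        (f' := fun j y => ∑ i, ((c j * e j i) * mon (e j - Pi.single i 1) y) •
            (ContinuousLinearMap.proj i : (Fin n → ℝ) →L[ℝ] ℝ)) (x₀ := 0) (x := x)
        (summable_sum fun i _ => hs i) Metric.isOpen_ball
        (convex_ball _ _).isPreconnected ?_ ?_ (by simpa using hR) ?_ hx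
      · refine H.congr_fderiv ?_
        have hsum : ∀ i : Fin n, Summable fun j =>
            (c j * e j i) * mon (e j - Pi.single i 1) x := fun i =>
          Summable.of_norm_bounded (hs i) fun j => hb j i x hx
        rw [Summable.tsum_finsetSum]
        · refine Finset.sum_congr rfl fun i _ => ?_
          rw [(hsum i).tsum_smul_const]
        · intro i _
          exact (hsum i).smul_const _
      · intro j y _
        refine ((hasFDerivAt_mon (e j) y).const_mul (c j)).congr_fderiv ?_
        rw [Finset.smul_sum]
        refine Finset.sum_congr rfl fun i _ => ?_
        rw [smul_smul, mul_assoc]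
      · intro j y hy
        refine (norm_sum_le _ _).trans (Finset.sum_le_sum fun i _ => ?_)
        rw [norm_smul]
        refine (mul_le_of_le_one_right (norm_nonneg _) ?_).trans (hb j i y hy)
        refine ContinuousLinearMap.opNorm_le_bound _ zero_le_one fun z => ?_
        simpa using norm_le_pi_norm z i
      · refine Summable.of_norm_bounded (g := fun j => |c j| * R ^ tdeg (e j))
          (by simpa using h 0) fun j => ?_
        rw [Real.norm_eq_abs, abs_mul]
        gcongr
        exact abs_mon_le _ _ (by simpa using hR.le)
    push_cast
    refine (contDiffOn_succ_iff_fderiv_of_isOpen Metric.isOpen_ball).2 ⟨fun x hx =>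
      (hd x hx).differentiableAt.differentiableWithinAt, by simp, ?_⟩
    refine ContDiffOn.congr (f := fun x =>
      (∑ i, (∑' j, (c j * e j i) * mon (e j - Pi.single i 1) x) •
            (ContinuousLinearMap.proj i : (Fin n → ℝ) →L[ℝ] ℝ))) ?_ fun x hx => (hd x hx).fderiv
    refine ContDiffOn.sum fun i _ => ?_
    exact ContDiffOn.smul (ih _ _ (key c e h i)) contDiffOn_const

/-- Multiplying by a bump function turns a function smooth near `0` into a globally smooth,
compactly supported one with the same germ. -/
lemma exists_cutoff {n : ℕ} {R : ℝ} (hR : 0 < R) (g : (Fin n → ℝ) → ℝ)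
    (hg : ContDiffOn ℝ (⊤ : ℕ∞) g (Metric.ball 0 R)) :
    ∃ G : (Fin n → ℝ) → ℝ, ContDiff ℝ (⊤ : ℕ∞) G ∧ HasCompactSupport G ∧
      ∀ x ∈ Metric.ball (0 : Fin n → ℝ) (R / 4), G x = g x := by
  let χ : ContDiffBump (0 : Fin n → ℝ) := ⟨R / 4, R / 2, by positivity, by linarith⟩
  refine ⟨fun x => χ x * g x, ?_, χ.hasCompactSupport.mul_right, fun x hx => ?_⟩
  · rw [contDiff_iff_contDiffAt]
    intro x
    by_cases hx : x ∈ Metric.ball (0 : Fin n → ℝ) R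
    · exact χ.contDiffAt.mul (hg.contDiffAt (Metric.isOpen_ball.mem_nhds hx))
    · have hx' : x ∉ tsupport χ := by
        rw [χ.tsupport_eq]
        simp only [Metric.mem_closedBall, Metric.mem_ball, not_lt, not_le] at hx ⊢
        have : χ.rOut = R / 2 := rfl
        rw [this]; linarith
      have : (fun x => χ x * g x) =ᶠ[𝓝 x] fun _ => 0 := by
        filter_upwards [notMem_tsupport_iff_eventuallyEq.1 hx'] with y hy
        simp [hy]
      exact contDiffAt_const.congr_of_eventuallyEq this
  · have : χ x = 1 := χ.one_of_mem_closedBall (Metric.ball_subset_closedBall hx)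
    simp [this]

/-- Finite monomial presentation of a convergent power series: `f = ∑_{α ∈ A} x ^ α g_α` near
`0`, where `A` is the (finite, by Dickson's lemma) set of minimal elements of the support, the
`g_α` are smooth and `g_α(0)` is the Taylor coefficient of `f` at `α`. -/
lemma exists_data {n : ℕ} (f : (Fin n → ℝ) → ℝ) (a : (Fin n → ℕ) → ℝ)
    (hfa : ∀ᶠ x in 𝓝 (0 : Fin n → ℝ), HasSum (fun α => a α * ∏ i, x i ^ α i) (f x)) :
    ∃ (A : Finset (Fin n → ℕ)) (g : (Fin n → ℕ) → (Fin n → ℝ) → ℝ),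
      (∀ α ∈ A, a α ≠ 0) ∧ (∀ α, a α ≠ 0 → ∃ β ∈ A, β ≤ α) ∧
      (∀ α ∈ A, ∀ β, a β ≠ 0 → β ≤ α → β = α) ∧
      (∀ α, ContDiff ℝ (⊤ : ℕ∞) (g α)) ∧ (∀ α, HasCompactSupport (g α)) ∧
      (∀ α ∈ A, g α 0 = a α) ∧
      ∀ᶠ x in 𝓝 (0 : Fin n → ℝ), f x = ∑ α ∈ A, mon α x * g α x := by
  have hfin : {α : Fin n → ℕ | Minimal (fun α => a α ≠ 0) α}.Finite :=
    WellQuasiOrderedLE.finite_of_isAntichain (setOfPred_minimal_antichain _)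
  set A := hfin.toFinset with hA
  have hAmem : ∀ α, α ∈ A ↔ Minimal (fun α => a α ≠ 0) α := by intro α; simp [hA]
  have hmin : ∀ α, a α ≠ 0 → ∃ β ∈ A, β ≤ α := by
    intro α hα
    obtain ⟨β, hβ, hβ'⟩ := exists_minimal_le_of_wellFoundedLT (fun α => a α ≠ 0) α hα
    exact ⟨β, (hAmem β).2 hβ', hβ⟩
  have hanti : ∀ α ∈ A, ∀ β, a β ≠ 0 → β ≤ α → β = α := fun α hα β hβ hle =>
    le_antisymm hle (((hAmem α).1 hα).2 hβ hle)
  have hAne : ∀ α ∈ A, a α ≠ 0 := fun α hα => ((hAmem α).1 hα).1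
  have : ∀ γ, ∃ β, a γ ≠ 0 → (β ∈ A ∧ β ≤ γ) := by
    intro γ
    by_cases h : a γ ≠ 0
    · obtain ⟨β, h1, h2⟩ := hmin γ h; exact ⟨β, fun _ => ⟨h1, h2⟩⟩
    · exact ⟨0, fun h' => absurd h' h⟩
  choose π hπ using this
  have hπA : ∀ α ∈ A, π α = α := fun α hα =>
    hanti α hα _ (hAne _ (hπ α (hAne α hα)).1) (hπ α (hAne α hα)).2
  obtain ⟨δ, hδ, hball⟩ := Metric.eventually_nhds_iff_ball.1 hfa
  set r := min (δ / 2) 1 with hr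
  have hr0 : 0 < r := by positivity
  have hrδ : r < δ := (min_le_left _ _).trans_lt (by linarith)
  have hsum : Summable fun α => |a α| * r ^ tdeg α := by
    have h1 := (hball (fun _ => r) (by
      rw [mem_ball_zero_iff]
      exact (pi_norm_const_le r).trans_lt (by rwa [Real.norm_of_nonneg hr0.le]))).summable.abs
    refine h1.congr fun α => ?_
    rw [abs_mul, Finset.prod_pow_eq_pow_sum, abs_of_pos (pow_pos hr0 _), tdeg]
  set R := r / 2 with hRdef
  have hR0 : 0 < R := by positivity
  have hR1 : R ≤ 1 := by have := min_le_right (δ / 2) 1; rw [hRdef]; linarith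
  have hpoly : ∀ k : ℕ, ∃ C : ℝ, ∀ d : ℕ, ((d : ℝ) + 1) ^ k * (1 / 2 : ℝ) ^ d ≤ C := by
    intro k
    have h1 : Tendsto (fun d : ℕ => (d : ℝ) ^ k * (1 / 2 : ℝ) ^ d) atTop (𝓝 0) :=
      tendsto_pow_const_mul_const_pow_of_abs_lt_one k (by norm_num [abs_of_pos])
    have h2 := ((tendsto_add_atTop_iff_nat 1).2 h1).bddAbove_range
    obtain ⟨C, hC⟩ := h2
    refine ⟨2 * C, fun d => ?_⟩
    have := hC ⟨d, rfl⟩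
    simp only [Nat.cast_add, Nat.cast_one, pow_succ (1 / 2 : ℝ) d] at this
    linarith
  let c : (Fin n → ℕ) → (Fin n → ℕ) → ℝ := fun α γ => if α ≤ γ ∧ π γ = α then a γ else 0
  have hc : ∀ α, ∀ k : ℕ, Summable fun γ =>
      |c α γ| * ((tdeg (γ - α) : ℝ) + 1) ^ k * R ^ tdeg (γ - α) := by
    intro α k
    obtain ⟨C, hC⟩ := hpoly k
    refine Summable.of_nonneg_of_le (fun γ => by positivity) (fun γ => ?_)
      (hsum.mul_left ((r ^ tdeg α)⁻¹ * C))
    have hC0 : 0 ≤ C := le_trans (by positivity) (hC 0)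
    by_cases h : α ≤ γ ∧ π γ = α
    · have h1 : c α γ = a γ := if_pos h
      have h2 : tdeg γ = tdeg α + tdeg (γ - α) := by
        have : γ = α + (γ - α) := (add_tsub_cancel_of_le h.1).symm
        conv_lhs => rw [this]
        simp [tdeg, Finset.sum_add_distrib]
      rw [h1, h2]
      set d := tdeg (γ - α)
      have h3 := hC d
      have h4 : R ^ d = (1 / 2 : ℝ) ^ d * r ^ d := by rw [hRdef, ← mul_pow]; ring
      calc |a γ| * ((d : ℝ) + 1) ^ k * R ^ d
          = |a γ| * (((d : ℝ) + 1) ^ k * (1 / 2 : ℝ) ^ d) * r ^ d := by rw [h4]; ring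
        _ ≤ |a γ| * C * r ^ d := by gcongr
        _ = _ := by rw [pow_add]; field_simp
    · have h1 : c α γ = 0 := if_neg h
      rw [h1]; simp; positivity
  let g₀ : (Fin n → ℕ) → (Fin n → ℝ) → ℝ := fun α x => ∑' γ, c α γ * mon (γ - α) x
  have hg₀ : ∀ α, ContDiffOn ℝ (⊤ : ℕ∞) (g₀ α) (Metric.ball 0 R) := fun α =>
    contDiffOn_infty.2 fun m => contDiffOn_series hR0 m _ _ (hc α)
  choose g hg1 hg2 hg3 using fun α => exists_cutoff hR0 (g₀ α) (hg₀ α)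
  refine ⟨A, g, hAne, hmin, hanti, hg1, hg2, ?_, ?_⟩
  · intro α hα
    rw [hg3 α 0 (by simpa using by positivity)]
    show ∑' γ, c α γ * mon (γ - α) 0 = a α
    rw [tsum_eq_single α]
    · have : c α α = a α := if_pos ⟨le_rfl, hπA α hα⟩
      rw [this, tsub_self, mon_zero, mul_one]
    · intro γ hγ
      by_cases h : α ≤ γ ∧ π γ = α
      · have : ∃ i, (γ - α) i ≠ 0 := by
          by_contra! h0
          exact hγ (le_antisymm (fun i => by
            show γ i ≤ α i
            have := h0 i
            rw [Pi.sub_apply] at this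
            omega) h.1)
        obtain ⟨i, hi⟩ := this
        have : mon (γ - α) (0 : Fin n → ℝ) = 0 :=
          Finset.prod_eq_zero (Finset.mem_univ i) (by simp only [Pi.zero_apply]; exact zero_pow hi)
        rw [this, mul_zero]
      · have : c α γ = 0 := if_neg h
        rw [this, zero_mul]
  · filter_upwards [hfa, Metric.ball_mem_nhds (0 : Fin n → ℝ) (show 0 < R / 4 by positivity)]
      with x hx hxR
    have hsumm : ∀ α ∈ A, Summable fun γ => mon α x * (c α γ * mon (γ - α) x) := by
      intro α _
      refine Summable.mul_left _ (Summable.of_norm_bounded (by simpa using hc α 0) fun γ => ?_)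
      rw [Real.norm_eq_abs, abs_mul]
      gcongr
      refine abs_mon_le _ _ ?_
      have := mem_ball_zero_iff.1 hxR
      linarith
    rw [Finset.sum_congr rfl fun α _ => by rw [hg3 α x hxR]]
    rw [← hx.tsum_eq]
    have : ∀ α ∈ A, mon α x * g₀ α x = ∑' γ, mon α x * (c α γ * mon (γ - α) x) := by
      intro α _; rw [tsum_mul_left]
    rw [Finset.sum_congr rfl this, ← Summable.tsum_finsetSum hsumm]
    congr 1
    ext γ
    by_cases h : a γ = 0
    · have : ∀ α, c α γ = 0 := fun α => by simp [c, h]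
      simp [h, this]
    · obtain ⟨h1, h2⟩ := hπ γ h
      rw [Finset.sum_eq_single (π γ)]
      · have h3 : c (π γ) γ = a γ := if_pos ⟨h2, rfl⟩
        have h4 := mon_add (π γ) (γ - π γ) x
        rw [add_tsub_cancel_of_le h2] at h4
        rw [h3]
        change a γ * mon γ x = _
        rw [h4]; ring
      · intro β _ hβ
        have : c β γ = 0 := if_neg fun h' => hβ h'.2.symm
        rw [this]; ring
      · intro h'; exact absurd h1 h'

/-! ### Newton polyhedra, faces and polyhedral cones -/

/-- A multi-exponent regarded as a point of `ℝⁿ`. -/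
def cv {n : ℕ} (α : Fin n → ℕ) : Fin n → ℝ := fun i => (α i : ℝ)

lemma dotR_comm {n : ℕ} (x y : Fin n → ℝ) : dotR x y = dotR y x := by
  simp [dotR, mul_comm]

lemma dotR_add_right {n : ℕ} (x y z : Fin n → ℝ) : dotR x (y + z) = dotR x y + dotR x z := by
  simp [dotR, mul_add, Finset.sum_add_distrib]

lemma dotR_add_left {n : ℕ} (x y z : Fin n → ℝ) : dotR (x + y) z = dotR x z + dotR y z := by
  simp [dotR, add_mul, Finset.sum_add_distrib]

lemma dotR_sub_right {n : ℕ} (x y z : Fin n → ℝ) : dotR x (y - z) = dotR x y - dotR x z := by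
  simp [dotR, mul_sub, Finset.sum_sub_distrib]

lemma dotR_sub_left {n : ℕ} (x y z : Fin n → ℝ) : dotR (x - y) z = dotR x z - dotR y z := by
  simp [dotR, sub_mul, Finset.sum_sub_distrib]

lemma dotR_smul_right {n : ℕ} (c : ℝ) (x y : Fin n → ℝ) : dotR x (c • y) = c * dotR x y := by
  simp only [dotR, Pi.smul_apply, smul_eq_mul, Finset.mul_sum]
  exact Finset.sum_congr rfl fun i _ => by ring

lemma dotR_smul_left {n : ℕ} (c : ℝ) (x y : Fin n → ℝ) : dotR (c • x) y = c * dotR x y := by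
  rw [dotR_comm, dotR_smul_right, dotR_comm]

lemma dotR_single {n : ℕ} (x : Fin n → ℝ) (i : Fin n) : dotR x (Pi.single i 1) = x i := by
  simp [dotR, Pi.single_apply]

lemma dotR_single_left {n : ℕ} (x : Fin n → ℝ) (i : Fin n) : dotR (Pi.single i 1) x = x i := by
  rw [dotR_comm, dotR_single]

lemma dotR_sum_right {n : ℕ} {ι : Type*} (s : Finset ι) (x : Fin n → ℝ) (y : ι → Fin n → ℝ) :
    dotR x (∑ j ∈ s, y j) = ∑ j ∈ s, dotR x (y j) := by
  induction s using Finset.induction_on with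
  | empty => simp [dotR]
  | insert j s hj ih => rw [Finset.sum_insert hj, dotR_add_right, ih, Finset.sum_insert hj]

lemma dotR_nonneg {n : ℕ} {x y : Fin n → ℝ} (hx : ∀ i, 0 ≤ x i) (hy : ∀ i, 0 ≤ y i) :
    0 ≤ dotR x y := Finset.sum_nonneg fun i _ => mul_nonneg (hx i) (hy i)

@[fun_prop]
lemma continuous_dotR {n : ℕ} (x : Fin n → ℝ) : Continuous (dotR x) := by
  unfold dotR; fun_prop

/-- The linear functional `⟨v, ·⟩`. -/
def dotL {n : ℕ} (v : Fin n → ℝ) : (Fin n → ℝ) →ₗ[ℝ] ℝ where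
  toFun := dotR v
  map_add' := dotR_add_right v
  map_smul' c y := by simp [dotR_smul_right]

lemma dotL_apply {n : ℕ} (v y : Fin n → ℝ) : dotL v y = dotR v y := rfl

/-- The support function `v ↦ min_{α ∈ A} ⟨α, v⟩` of a finite set of exponents. -/
def Nm {n : ℕ} (A : Finset (Fin n → ℕ)) (hA : A.Nonempty) (v : Fin n → ℝ) : ℝ :=
  A.inf' hA fun α => dotR (cv α) v

lemma Nm_le {n : ℕ} {A : Finset (Fin n → ℕ)} (hA : A.Nonempty) (v : Fin n → ℝ)
    {α : Fin n → ℕ} (hα : α ∈ A) : Nm A hA v ≤ dotR (cv α) v :=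
  Finset.inf'_le (fun α => dotR (cv α) v) hα

lemma exists_Nm {n : ℕ} {A : Finset (Fin n → ℕ)} (hA : A.Nonempty) (v : Fin n → ℝ) :
    ∃ α ∈ A, Nm A hA v = dotR (cv α) v :=
  Finset.exists_mem_eq_inf' hA _

lemma Nm_nonneg {n : ℕ} {A : Finset (Fin n → ℕ)} (hA : A.Nonempty) {v : Fin n → ℝ}
    (hv : ∀ i, 0 ≤ v i) : 0 ≤ Nm A hA v := by
  obtain ⟨α, -, h⟩ := exists_Nm hA v
  rw [h]
  exact dotR_nonneg (fun i => Nat.cast_nonneg _) hv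

section gamma

variable {n : ℕ} {a : (Fin n → ℕ) → ℝ} {A : Finset (Fin n → ℕ)}

lemma newton_ge (hmin : ∀ α, a α ≠ 0 → ∃ β ∈ A, β ≤ α) {v : Fin n → ℝ} (hv : ∀ i, 0 ≤ v i)
    {c : ℝ} (hc : ∀ α ∈ A, c ≤ dotR v (cv α)) {y : Fin n → ℝ}
    (hy : y ∈ newtonPolyhedron {α | a α ≠ 0}) : c ≤ dotR v y := by
  have hconv : Convex ℝ {y : Fin n → ℝ | c ≤ dotR v y} :=
    convex_halfSpace_ge (f := dotR v) ⟨dotR_add_right v, fun t y => dotR_smul_right t v y⟩ c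
  refine convexHull_min ?_ hconv hy
  rintro x ⟨α, hα, hx⟩
  obtain ⟨β, hβ, hle⟩ := hmin α hα
  refine (hc β hβ).trans (Finset.sum_le_sum fun i _ => mul_le_mul_of_nonneg_left ?_ (hv i))
  have : (β i : ℝ) ≤ α i := by exact_mod_cast hle i
  exact this.trans (hx i)

lemma cv_mem_newton {α : Fin n → ℕ} (hα : a α ≠ 0) :
    cv α ∈ newtonPolyhedron {α | a α ≠ 0} :=
  subset_convexHull _ _ ⟨α, hα, fun _ => le_rfl⟩

/-- Every point of the Newton polyhedron dominates a point of the convex hull of the finite set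
`A`. -/
lemma newton_subset (hmin : ∀ α, a α ≠ 0 → ∃ β ∈ A, β ≤ α) {y : Fin n → ℝ}
    (hy : y ∈ newtonPolyhedron {α | a α ≠ 0}) :
    ∃ p ∈ convexHull ℝ (cv '' (A : Set (Fin n → ℕ))), ∀ i, p i ≤ y i := by
  have hconv : Convex ℝ {y : Fin n → ℝ |
      ∃ p ∈ convexHull ℝ (cv '' (A : Set (Fin n → ℕ))), ∀ i, p i ≤ y i} := by
    rintro x ⟨p, hp, hpx⟩ y ⟨q, hq, hqy⟩ s t hs ht hst
    refine ⟨s • p + t • q, convex_convexHull ℝ _ hp hq hs ht hst, fun i => ?_⟩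
    simp only [Pi.add_apply, Pi.smul_apply, smul_eq_mul]
    gcongr
    · exact hpx i
    · exact hqy i
  refine convexHull_min ?_ hconv hy
  rintro x ⟨α, hα, hx⟩
  obtain ⟨β, hβ, hle⟩ := hmin α hα
  refine ⟨cv β, subset_convexHull _ _ ⟨β, hβ, rfl⟩, fun i => ?_⟩
  have : (β i : ℝ) ≤ α i := by exact_mod_cast hle i
  exact this.trans (hx i)

lemma hull_subset_newton (hA : ∀ α ∈ A, a α ≠ 0) :
    convexHull ℝ (cv '' (A : Set (Fin n → ℕ))) ⊆ newtonPolyhedron {α | a α ≠ 0} := by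
  refine convexHull_mono ?_
  rintro _ ⟨α, hα, rfl⟩
  exact ⟨α, hA α hα, fun _ => le_rfl⟩

lemma newton_add {y z : Fin n → ℝ} (hy : y ∈ newtonPolyhedron {α | a α ≠ 0})
    (hz : ∀ i, 0 ≤ z i) : y + z ∈ newtonPolyhedron {α | a α ≠ 0} := by
  have hconv : Convex ℝ {y : Fin n → ℝ | y + z ∈ newtonPolyhedron {α | a α ≠ 0}} := by
    intro x hx y hy s t hs ht hst
    have := convex_convexHull ℝ _ hx hy hs ht hst
    have e : s • x + t • y + z = s • (x + z) + t • (y + z) := by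
      have : z = (s + t) • z := by rw [hst, one_smul]
      conv_lhs => rw [this]
      module
    show s • x + t • y + z ∈ newtonPolyhedron {α | a α ≠ 0}
    rw [e]; exact this
  refine convexHull_min ?_ hconv hy
  rintro x ⟨α, hα, hx⟩
  exact subset_convexHull _ _ ⟨α, hα, fun i => by
    simp only [Pi.add_apply]; linarith [hx i, hz i]⟩

lemma cv_mem_traceFace (hA : ∀ α ∈ A, a α ≠ 0) (hmin : ∀ α, a α ≠ 0 → ∃ β ∈ A, β ≤ α)
    {v : Fin n → ℝ} (hv : ∀ i, 0 ≤ v i) {α : Fin n → ℕ} (hα : α ∈ A) :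
    cv α ∈ traceFace (newtonPolyhedron {α | a α ≠ 0}) v ↔
      ∀ β ∈ A, dotR v (cv α) ≤ dotR v (cv β) :=
  ⟨fun h β hβ => h.2 _ (cv_mem_newton (hA β hβ)),
    fun h => ⟨cv_mem_newton (hA α hα), fun _ hz => newton_ge hmin hv h hz⟩⟩

/-- A face with strictly positive normal is compact: it is the hull of finitely many exponents. -/
lemma isCompact_traceFace (hA : ∀ α ∈ A, a α ≠ 0) (hmin : ∀ α, a α ≠ 0 → ∃ β ∈ A, β ≤ α)
    (hne : A.Nonempty) {v : Fin n → ℝ} (hv : ∀ i, 0 < v i) :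
    IsCompact (traceFace (newtonPolyhedron {α | a α ≠ 0}) v) := by
  have hc : IsCompact (convexHull ℝ (cv '' (A : Set (Fin n → ℕ)))) :=
    Set.Finite.isCompact_convexHull ℝ (A.finite_toSet.image _)
  have e : traceFace (newtonPolyhedron {α | a α ≠ 0}) v =
      convexHull ℝ (cv '' (A : Set (Fin n → ℕ))) ∩ {y | dotR v y ≤ Nm A hne v} := by
    ext y
    constructor
    · rintro ⟨hy, hy'⟩
      constructor
      · obtain ⟨p, hp, hpy⟩ := newton_subset hmin hy
        have h1 := hy' p (hull_subset_newton hA hp)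
        have h2 : dotR v (y - p) ≤ 0 := by rw [dotR_sub_right]; linarith
        have h3 : ∀ i ∈ Finset.univ, v i * (y - p) i = 0 := by
          have hnn : ∀ i ∈ Finset.univ, 0 ≤ v i * (y - p) i := fun i _ =>
            mul_nonneg (hv i).le (by simp [hpy i])
          exact (Finset.sum_eq_zero_iff_of_nonneg hnn).1
            (le_antisymm h2 (Finset.sum_nonneg hnn))
        have h4 : y = p := by
          ext i
          have := h3 i (Finset.mem_univ i)
          have := (mul_eq_zero.1 this).resolve_left (hv i).ne'
          simpa [sub_eq_zero] using this
        rwa [h4]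
      · obtain ⟨α, hα, h⟩ := exists_Nm hne v
        show dotR v y ≤ _
        rw [h, dotR_comm (cv α)]
        exact hy' _ (cv_mem_newton (hA α hα))
    · rintro ⟨hy, hy'⟩
      refine ⟨hull_subset_newton hA hy, fun z hz => hy'.trans (newton_ge hmin (fun i => (hv i).le)
        (fun α hα => ?_) hz)⟩
      rw [dotR_comm]; exact Nm_le hne v hα
  rw [e]
  exact hc.inter_right (isClosed_le (continuous_dotR v) continuous_const)

/-- The exponents of `A` on the face with inner normal `v`. -/
def Amin (A : Finset (Fin n → ℕ)) (v : Fin n → ℝ) : Finset (Fin n → ℕ) :=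
  A.filter fun α => ∀ β ∈ A, dotR (cv α) v ≤ dotR (cv β) v

/-- On a face with strictly positive normal every support exponent is minimal for the
componentwise order, so the face polynomial is a sum over `A`. -/
lemma facePoly_eq (hA : ∀ α ∈ A, a α ≠ 0) (hmin : ∀ α, a α ≠ 0 → ∃ β ∈ A, β ≤ α)
    {v : Fin n → ℝ} (hv : ∀ i, 0 < v i) (x : Fin n → ℝ) :
    facePoly a (traceFace (newtonPolyhedron {α | a α ≠ 0}) v) x =
      ∑ α ∈ Amin A v, a α * mon α x := by
  rw [facePoly, tsum_eq_sum (s := Amin A v)]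
  · refine Finset.sum_congr rfl fun α hα => ?_
    rw [Amin, Finset.mem_filter] at hα
    have := (cv_mem_traceFace hA hmin (fun i => (hv i).le) hα.1).2 (by
      simpa only [dotR_comm] using hα.2)
    change (fun i => (α i : ℝ)) ∈ _ at this
    rw [if_pos this]; rfl
  · intro α hα
    split_ifs with h
    · by_cases h0 : a α = 0
      · simp [h0]
      exfalso
      obtain ⟨β, hβ, hle⟩ := hmin α h0
      have h1 : dotR v (cv α) ≤ dotR v (cv β) := h.2 _ (cv_mem_newton (hA β hβ))
      have h2 : β = α := by
        by_contra hne
        obtain ⟨i, hi⟩ : ∃ i, β i ≠ α i := by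
          by_contra! hh; exact hne (funext hh)
        have : dotR v (cv β) < dotR v (cv α) := by
          refine Finset.sum_lt_sum (fun j _ => ?_) ⟨i, Finset.mem_univ i, ?_⟩
          · exact mul_le_mul_of_nonneg_left (Nat.cast_le.2 (hle j)) (hv j).le
          · exact mul_lt_mul_of_pos_left (Nat.cast_lt.2 (lt_of_le_of_ne (hle i) hi)) (hv i)
        linarith
      subst h2
      refine hα (Finset.mem_filter.2 ⟨hβ, fun γ hγ => ?_⟩)
      rw [dotR_comm, dotR_comm (cv γ)]
      exact h.2 _ (cv_mem_newton (hA γ hγ))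
    · rfl

lemma mon_exp (α : Fin n → ℕ) (y : Fin n → ℝ) :
    mon α (fun i => Real.exp (y i)) = Real.exp (dotR (cv α) y) := by
  rw [mon, dotR, Real.exp_sum]
  exact Finset.prod_congr rfl fun i _ => by rw [← Real.exp_nat_mul]; rfl

lemma mul_mon_sub (α : Fin n → ℕ) (i : Fin n) (x : Fin n → ℝ) :
    (α i : ℝ) * mon (α - Pi.single i 1) x * x i = α i * mon α x := by
  rcases Nat.eq_zero_or_pos (α i) with h0 | h0
  · simp [h0]
  · have : α = (α - Pi.single i 1) + Pi.single i 1 := by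
      ext l
      by_cases hl : l = i
      · subst hl; simp; omega
      · simp [hl]
    conv_rhs => rw [this, mon_add, mon_single]
    have h2 : ((α - Pi.single i 1) + Pi.single i 1 : Fin n → ℕ) i = α i := by rw [← this]
    rw [h2]; ring

/-- Non-degeneracy in logarithmic coordinates. -/
lemma nondeg_log (hA : ∀ α ∈ A, a α ≠ 0) (hmin : ∀ α, a α ≠ 0 → ∃ β ∈ A, β ≤ α)
    (hne : A.Nonempty) (hnd : NonDegenerateR a (newtonPolyhedron {α | a α ≠ 0}))
    {v : Fin n → ℝ} (hv : ∀ i, 0 < v i) (y : Fin n → ℝ) :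
    ∃ i, ∑ α ∈ Amin A v, (α i : ℝ) * a α * Real.exp (dotR (cv α) y) ≠ 0 := by
  by_contra! hcon
  refine hnd _ ⟨v, fun i => (hv i).le, rfl⟩ (isCompact_traceFace hA hmin hne hv)
    (fun i => Real.exp (y i)) (fun i => (Real.exp_pos _).ne') ?_
  have e : facePoly a (traceFace (newtonPolyhedron {α | a α ≠ 0}) v) =
      fun x => ∑ α ∈ Amin A v, a α * mon α x := funext (facePoly_eq hA hmin hv)
  rw [e, (HasFDerivAt.fun_sum fun α _ => (hasFDerivAt_mon α _).const_mul (a α)).fderiv]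
  have hz : ∀ i, ∑ α ∈ Amin A v, a α * ((α i : ℝ) *
      mon (α - Pi.single i 1) fun i => Real.exp (y i)) = 0 := by
    intro i
    have h1 := hcon i
    refine (mul_eq_zero.1 (?_ : _ * Real.exp (y i) = 0)).resolve_right (Real.exp_pos _).ne'
    rw [← h1, Finset.sum_mul]
    refine Finset.sum_congr rfl fun α _ => ?_
    have := mul_mon_sub α i fun i => Real.exp (y i)
    rw [mon_exp α] at this
    linear_combination a α * this
  ext z
  simp only [sum_apply, smul_apply, smul_eq_mul, zero_apply, Finset.mul_sum]
  rw [Finset.sum_comm]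
  refine Finset.sum_eq_zero fun i _ => ?_
  have := congrArg (· * z i) (hz i)
  simp only [Finset.sum_mul, zero_mul] at this
  rw [← this]
  exact Finset.sum_congr rfl fun α _ => by simp; ring

end gamma

/-- A pointed polyhedral cone `{g_i ≥ 0}` is generated by finitely many extreme vectors. -/
lemma extreme_gen {n : ℕ} {ι : Type} [Fintype ι] (g : ι → (Fin n → ℝ) →ₗ[ℝ] ℝ)
    (hp : ∀ x, (∀ i, g i x = 0) → x = 0) :
    ∃ V : Finset (Fin n → ℝ),
      (∀ w ∈ V, w ≠ 0 ∧ (∀ i, 0 ≤ g i w) ∧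
        ∀ d, (∀ i, g i w = 0 → g i d = 0) → ∃ c : ℝ, d = c • w) ∧
      ∀ v, (∀ i, 0 ≤ g i v) → ∃ c : (Fin n → ℝ) → ℝ, (∀ w, 0 ≤ c w) ∧ v = ∑ w ∈ V, c w • w := by
  let Ext : (Fin n → ℝ) → Prop := fun w => w ≠ 0 ∧ (∀ i, 0 ≤ g i w) ∧
        ∀ d, (∀ i, g i w = 0 → g i d = 0) → ∃ c : ℝ, d = c • w
  let tight : (Fin n → ℝ) → Finset ι := fun w => Finset.univ.filter fun i => g i w = 0
  have hmt : ∀ w i, i ∈ tight w ↔ g i w = 0 := by intro w i; simp [tight]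
  let V : Finset (Fin n → ℝ) := (Finset.univ : Finset (Finset ι)).biUnion fun S =>
    if h : ∃ w, Ext w ∧ tight w = S then {h.choose} else ∅
  have hV : ∀ w ∈ V, Ext w := by
    intro w hw
    simp only [V, Finset.mem_biUnion, Finset.mem_univ, true_and] at hw
    obtain ⟨S, hS⟩ := hw
    split_ifs at hS with h
    · rw [Finset.mem_singleton] at hS; rw [hS]; exact h.choose_spec.1
    · simp at hS
  refine ⟨V, hV, ?_⟩
  have hsingle : ∀ w ∈ V, ∀ c : ℝ, 0 ≤ c → ∃ c' : (Fin n → ℝ) → ℝ,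
      (∀ w, 0 ≤ c' w) ∧ c • w = ∑ w ∈ V, c' w • w := by
    intro w hw c hc
    refine ⟨fun w' => if w' = w then c else 0, fun w' => by dsimp only; split_ifs <;> simp [hc], ?_⟩
    rw [Finset.sum_eq_single w]
    · simp
    · intro b _ hb; simp [hb]
    · intro h; exact absurd hw h
  suffices H : ∀ k : ℕ, ∀ v, (∀ i, 0 ≤ g i v) → (tight v)ᶜ.card = k →
      ∃ c : (Fin n → ℝ) → ℝ, (∀ w, 0 ≤ c w) ∧ v = ∑ w ∈ V, c w • w from
    fun v hv => H _ v hv rfl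
  intro k
  induction k using Nat.strong_induction_on with
  | _ k ih =>
  intro v hv hk
  by_cases hv0 : v = 0
  · exact ⟨0, fun _ => le_rfl, by simp [hv0]⟩
  by_cases hext : Ext v
  · have hex : ∃ w, Ext w ∧ tight w = tight v := ⟨v, hext, rfl⟩
    have hwV : hex.choose ∈ V := by
      simp only [V, Finset.mem_biUnion, Finset.mem_univ, true_and]
      exact ⟨tight v, by rw [dif_pos hex]; simp⟩
    obtain ⟨hw1, hw2⟩ := hex.choose_spec
    set w := hex.choose
    obtain ⟨c, hc⟩ := hw1.2.2 v fun i hi => by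
      rw [← hmt, ← hw2, hmt]; exact hi
    have hc0 : 0 ≤ c := by
      obtain ⟨i, hi⟩ : ∃ i, g i w ≠ 0 := by
        by_contra! hh; exact hw1.1 (hp w hh)
      have h1 : 0 < g i w := lt_of_le_of_ne (hw1.2.1 i) (Ne.symm hi)
      have h2 := hv i
      rw [hc, map_smul, smul_eq_mul] at h2
      exact nonneg_of_mul_nonneg_left h2 h1
    rw [hc]
    exact hsingle w hwV c hc0
  · -- a direction in the minimal face through `v`, not proportional to `v`
    obtain ⟨d, hd, hdv⟩ : ∃ d, (∀ i, g i v = 0 → g i d = 0) ∧ ∀ c : ℝ, d ≠ c • v := by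
      by_contra! hh
      exact hext ⟨hv0, hv, fun d hd => hh d hd⟩
    obtain ⟨d, hd, hdv, i₀, hi₀⟩ : ∃ d, (∀ i, g i v = 0 → g i d = 0) ∧ (∀ c : ℝ, d ≠ c • v) ∧
        ∃ i, g i d < 0 := by
      obtain ⟨i, hi⟩ : ∃ i, g i d ≠ 0 := by
        by_contra! hh
        exact hdv 0 (by rw [hp d hh, zero_smul])
      rcases lt_or_gt_of_ne hi with h | h
      · exact ⟨d, hd, hdv, i, h⟩
      · refine ⟨-d, fun j hj => by simp [hd j hj], fun c hc => hdv (-c) ?_, i, by simpa using h⟩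
        rw [neg_smul, ← hc, neg_neg]
    have hpos : ∀ i, g i d ≠ 0 → 0 < g i v := fun i hi =>
      lt_of_le_of_ne (hv i) fun h => hi (hd i h.symm)
    obtain ⟨i₁, hi₁, hmin₁⟩ := (Finset.univ.filter fun i => g i d < 0).exists_min_image
      (fun i => g i v / (-g i d)) ⟨i₀, by simpa using hi₀⟩
    simp only [Finset.mem_filter, Finset.mem_univ, true_and] at hi₁ hmin₁
    set t := g i₁ v / (-g i₁ d) with ht
    have ht0 : 0 < t := div_pos (hpos i₁ hi₁.ne) (by linarith)
    set v₁ := v + t • d with hv₁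
    have gv₁ : ∀ i, g i v₁ = g i v + t * g i d := fun i => by simp [hv₁]
    have hv₁P : ∀ i, 0 ≤ g i v₁ := by
      intro i
      rw [gv₁]
      rcases lt_or_ge (g i d) 0 with h | h
      · have := hmin₁ i h
        rw [le_div_iff₀ (by linarith)] at this
        linarith
      · have := hv i; positivity
    have hv₁t : ∀ i, g i v = 0 → g i v₁ = 0 := fun i hi => by rw [gv₁, hi, hd i hi]; simp
    have hv₁i : g i₁ v₁ = 0 := by
      rw [gv₁, ht]; field_simp [hi₁.ne]; ring
    have hv₁0 : v₁ ≠ 0 := by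
      intro h
      refine hdv (-t⁻¹) ?_
      have : v = -(t • d) := eq_neg_of_add_eq_zero_left h
      rw [this, smul_neg, neg_smul, neg_neg, smul_smul, inv_mul_cancel₀ ht0.ne', one_smul]
    obtain ⟨j₀, hj₀⟩ : ∃ j, 0 < g j v₁ := by
      by_contra! hh
      exact hv₁0 (hp _ fun i => le_antisymm (hh i) (hv₁P i))
    obtain ⟨i₂, hi₂, hmin₂⟩ := (Finset.univ.filter fun i => 0 < g i v₁).exists_min_image
      (fun i => g i v / g i v₁) ⟨j₀, by simpa using hj₀⟩
    simp only [Finset.mem_filter, Finset.mem_univ, true_and] at hi₂ hmin₂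
    set l := g i₂ v / g i₂ v₁ with hl
    have hl0 : 0 ≤ l := div_nonneg (hv i₂) hi₂.le
    set v₂ := v - l • v₁ with hv₂
    have gv₂ : ∀ i, g i v₂ = g i v - l * g i v₁ := fun i => by simp [hv₂]
    have hv₂P : ∀ i, 0 ≤ g i v₂ := by
      intro i
      rw [gv₂]
      rcases (hv₁P i).lt_or_eq with h | h
      · have := hmin₂ i h
        rw [le_div_iff₀ h] at this
        linarith
      · rw [← h]; simpa using hv i
    have card_lt : ∀ v' i, (∀ i, g i v = 0 → g i v' = 0) → g i v' = 0 → g i v ≠ 0 →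
        (tight v')ᶜ.card < k := by
      intro v' i h1 h2 h3
      rw [← hk]
      refine Finset.card_lt_card (Finset.ssubset_iff_of_subset ?_ |>.2 ⟨i, ?_, ?_⟩)
      · intro j hj
        rw [Finset.mem_compl, hmt] at hj ⊢
        exact fun h => hj (h1 j h)
      · rwa [Finset.mem_compl, hmt]
      · rw [Finset.mem_compl, hmt, not_not]; exact h2
    obtain ⟨c₁, hc₁, e₁⟩ := ih _ (card_lt v₁ i₁ hv₁t hv₁i (hpos i₁ hi₁.ne).ne') v₁ hv₁P rfl
    obtain ⟨c₂, hc₂, e₂⟩ := ih _ (card_lt v₂ i₂ (fun i hi => by rw [gv₂, hi, hv₁t i hi]; simp)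
      (by rw [gv₂, hl]; field_simp; ring) (fun h => hi₂.ne' (hv₁t i₂ h))) v₂ hv₂P rfl
    refine ⟨fun w => c₂ w + l * c₁ w, fun w => add_nonneg (hc₂ w) (mul_nonneg hl0 (hc₁ w)), ?_⟩
    have : v = v₂ + l • v₁ := by rw [hv₂]; abel
    conv_lhs => rw [this, e₁, e₂]
    rw [Finset.smul_sum, ← Finset.sum_add_distrib]
    exact Finset.sum_congr rfl fun w _ => by rw [add_smul, smul_smul]

/-- Finitely many test vectors decide the inequalities `t · N ≤ ⟨·, b⟩` on the orthant:
the extreme vectors of the cones on which `N = min_{α ∈ A} ⟨α, ·⟩` is linear. -/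
lemma exists_test {n : ℕ} {A : Finset (Fin n → ℕ)} (hA : A.Nonempty) :
    ∃ V : Finset (Fin n → ℝ), (∀ w ∈ V, ∀ i, 0 ≤ w i) ∧ (∀ w ∈ V, w ≠ 0) ∧
      ∀ (b : Fin n → ℝ) (t : ℝ), (∀ w ∈ V, t * Nm A hA w ≤ dotR b w) →
        ∀ v, (∀ i, 0 ≤ v i) → t * Nm A hA v ≤ dotR b v := by
  have H : ∀ α₀ : Fin n → ℕ, _ := fun α₀ =>
    extreme_gen (n := n) (ι := Fin n ⊕ A)
      (fun j => Sum.elim (fun i => dotL (Pi.single i 1)) (fun α : A => dotL (cv α.1 - cv α₀)) j) (by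
        intro x hx
        ext i
        simpa [dotL_apply, dotR_single_left] using hx (Sum.inl i))
  choose V hV1 hV2 using H
  simp only [Sum.forall, Sum.elim_inl, Sum.elim_inr, dotL_apply, dotR_single_left,
    Subtype.forall, dotR_sub_left, sub_nonneg] at hV1 hV2
  refine ⟨A.biUnion V, ?_, ?_, ?_⟩
  · intro w hw
    obtain ⟨α, -, hw⟩ := Finset.mem_biUnion.1 hw
    exact (hV1 α w hw).2.1.1
  · intro w hw
    obtain ⟨α, -, hw⟩ := Finset.mem_biUnion.1 hw
    exact (hV1 α w hw).1
  · intro b t hbt v hv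
    obtain ⟨α, hα, hN⟩ := exists_Nm hA v
    obtain ⟨c, hc, e⟩ := hV2 α v ⟨hv, fun β hβ => by rw [← hN]; exact Nm_le hA v hβ⟩
    have hw : ∀ w ∈ V α, Nm A hA w = dotR (cv α) w := fun w hw =>
      le_antisymm (Nm_le hA w hα) (Finset.le_inf' hA _ fun β hβ => (hV1 α w hw).2.1.2 β hβ)
    rw [hN, e, dotR_sum_right, dotR_sum_right, Finset.mul_sum]
    refine Finset.sum_le_sum fun w hwV => ?_
    rw [dotR_smul_right, dotR_smul_right]
    have := hbt w (Finset.mem_biUnion.2 ⟨α, hα, hwV⟩)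
    rw [hw w hwV] at this
    calc t * (c w * dotR (cv α) w) = c w * (t * dotR (cv α) w) := by ring
      _ ≤ _ := mul_le_mul_of_nonneg_left this (hc w)

/-! ### Logarithmic coordinates and non-degeneracy -/

/-- The logarithmic chart of the open positive orthant. -/
def ex {n : ℕ} (u : Fin n → ℝ) : Fin n → ℝ := fun i => Real.exp (u i)

/-- The `i`-th partial derivative. -/
def pd {n : ℕ} (i : Fin n) (ψ : (Fin n → ℝ) → ℝ) (u : Fin n → ℝ) : ℝ :=
  fderiv ℝ ψ u (Pi.single i 1)

/-- The function `∑_{α ∈ A} x ^ α g_α(x)` in logarithmic coordinates. -/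
def Fl {n : ℕ} (A : Finset (Fin n → ℕ)) (g : (Fin n → ℕ) → (Fin n → ℝ) → ℝ)
    (u : Fin n → ℝ) : ℝ := ∑ α ∈ A, Real.exp (dotR (cv α) u) * g α (ex u)

/-- The comparison function `∑_{α ∈ A} x ^ α` in logarithmic coordinates. -/
def Mf {n : ℕ} (A : Finset (Fin n → ℕ)) (u : Fin n → ℝ) : ℝ :=
  ∑ α ∈ A, Real.exp (dotR (cv α) u)

section logcoord

variable {n : ℕ}

lemma Mf_pos {A : Finset (Fin n → ℕ)} (hA : A.Nonempty) (u : Fin n → ℝ) : 0 < Mf A u :=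
  Finset.sum_pos (fun _ _ => Real.exp_pos _) hA

lemma exp_le_Mf {A : Finset (Fin n → ℕ)} (u : Fin n → ℝ) {α : Fin n → ℕ} (hα : α ∈ A) :
    Real.exp (dotR (cv α) u) ≤ Mf A u :=
  Finset.single_le_sum (f := fun α => Real.exp (dotR (cv α) u))
    (fun _ _ => (Real.exp_pos _).le) hα

lemma contDiff_ex : ContDiff ℝ (⊤ : ℕ∞) (ex : (Fin n → ℝ) → _) := by
  unfold ex
  exact contDiff_pi.2 fun i => by fun_prop

lemma continuous_ex : Continuous (ex : (Fin n → ℝ) → _) := contDiff_ex.continuous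

lemma contDiff_dotR (v : Fin n → ℝ) : ContDiff ℝ (⊤ : ℕ∞) (dotR v) := by
  unfold dotR; fun_prop

lemma fderiv_ex (u : Fin n → ℝ) (i : Fin n) :
    fderiv ℝ ex u (Pi.single i 1) = Real.exp (u i) • (Pi.single i 1 : Fin n → ℝ) := by
  have h : HasFDerivAt (ex : (Fin n → ℝ) → _)
      (ContinuousLinearMap.pi fun j => Real.exp (u j) •
        (ContinuousLinearMap.proj j : (Fin n → ℝ) →L[ℝ] ℝ)) u :=
    hasFDerivAt_pi.2 fun j => (hasFDerivAt_apply (𝕜 := ℝ) j u).exp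
  rw [h.fderiv]
  ext j
  by_cases hj : j = i
  · subst hj; simp
  · simp [hj]

lemma pd_comp_ex {h : (Fin n → ℝ) → ℝ} (hh : ContDiff ℝ (⊤ : ℕ∞) h) (i : Fin n) (u : Fin n → ℝ) :
    pd i (fun u => h (ex u)) u = Real.exp (u i) * pd i h (ex u) := by
  unfold pd
  have := fderiv_fun_comp (𝕜 := ℝ) u (g := h) (f := ex)
    (hh.differentiable (by simp) _) (contDiff_ex.differentiable (by simp) _)
  rw [this, ContinuousLinearMap.comp_apply, fderiv_ex, map_smul, smul_eq_mul]

lemma pd_mul {h k : (Fin n → ℝ) → ℝ} (hh : ContDiff ℝ (⊤ : ℕ∞) h) (hk : ContDiff ℝ (⊤ : ℕ∞) k)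
    (i : Fin n) (u : Fin n → ℝ) :
    pd i (fun u => h u * k u) u = pd i h u * k u + h u * pd i k u := by
  unfold pd
  rw [fderiv_fun_mul (hh.differentiable (by simp) u) (hk.differentiable (by simp) u)]
  simp; ring

lemma pd_add {h k : (Fin n → ℝ) → ℝ} (hh : ContDiff ℝ (⊤ : ℕ∞) h) (hk : ContDiff ℝ (⊤ : ℕ∞) k)
    (i : Fin n) (u : Fin n → ℝ) :
    pd i (fun u => h u + k u) u = pd i h u + pd i k u := by
  unfold pd
  rw [fderiv_fun_add (hh.differentiable (by simp) u) (hk.differentiable (by simp) u)]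
  simp

lemma pd_sum {ι : Type*} (s : Finset ι) {h : ι → (Fin n → ℝ) → ℝ}
    (hh : ∀ j ∈ s, ContDiff ℝ (⊤ : ℕ∞) (h j)) (i : Fin n) (u : Fin n → ℝ) :
    pd i (fun u => ∑ j ∈ s, h j u) u = ∑ j ∈ s, pd i (h j) u := by
  unfold pd
  rw [fderiv_fun_sum fun j hj => (hh j hj).differentiable (by simp) u]
  simp

lemma contDiff_pd {h : (Fin n → ℝ) → ℝ} (hh : ContDiff ℝ (⊤ : ℕ∞) h) (i : Fin n) :
    ContDiff ℝ (⊤ : ℕ∞) (pd i h) := by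
  unfold pd
  exact (hh.fderiv_right (m := (⊤ : ℕ∞)) (by simp)).clm_apply contDiff_const

lemma pd_exp_dot (v : Fin n → ℝ) (i : Fin n) (u : Fin n → ℝ) :
    pd i (fun u => Real.exp (dotR v u)) u = v i * Real.exp (dotR v u) := by
  unfold pd
  have h : HasFDerivAt (dotR v) (LinearMap.toContinuousLinearMap (dotL v)) u :=
    (LinearMap.toContinuousLinearMap (dotL v)).hasFDerivAt
  rw [h.exp.fderiv]
  simp only [smul_apply, LinearMap.coe_toContinuousLinearMap', dotL_apply, dotR_single, smul_eq_mul]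
  ring

lemma contDiff_exp_dot (v : Fin n → ℝ) : ContDiff ℝ (⊤ : ℕ∞) (fun u => Real.exp (dotR v u)) :=
  (contDiff_dotR v).exp

lemma contDiff_comp_ex {h : (Fin n → ℝ) → ℝ} (hh : ContDiff ℝ (⊤ : ℕ∞) h) :
    ContDiff ℝ (⊤ : ℕ∞) (fun u => h (ex u)) := hh.comp contDiff_ex

lemma contDiff_Fl (A : Finset (Fin n → ℕ)) {g : (Fin n → ℕ) → (Fin n → ℝ) → ℝ}
    (hg : ∀ α, ContDiff ℝ (⊤ : ℕ∞) (g α)) : ContDiff ℝ (⊤ : ℕ∞) (Fl A g) :=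
  ContDiff.sum fun α _ => (contDiff_exp_dot (cv α)).mul (contDiff_comp_ex (hg α))

lemma pd_Fl (A : Finset (Fin n → ℕ)) {g : (Fin n → ℕ) → (Fin n → ℝ) → ℝ}
    (hg : ∀ α, ContDiff ℝ (⊤ : ℕ∞) (g α)) (i : Fin n) (u : Fin n → ℝ) :
    pd i (Fl A g) u = ∑ α ∈ A, Real.exp (dotR (cv α) u) *
      ((α i : ℝ) * g α (ex u) + Real.exp (u i) * pd i (g α) (ex u)) := by
  unfold Fl
  rw [pd_sum _ fun α _ => (contDiff_exp_dot (cv α)).mul (contDiff_comp_ex (hg α))]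
  refine Finset.sum_congr rfl fun α _ => ?_
  rw [pd_mul (contDiff_exp_dot (cv α)) (contDiff_comp_ex (hg α)), pd_comp_ex (hg α), pd_exp_dot,
    cv]
  ring

/-- A linear map between finite-dimensional spaces admits a continuous section on its range:
if `T u_m` converges, then the `u_m` may be corrected by elements of the kernel to converge. -/
lemma exists_lift {ι : Type} [Fintype ι] (T : (Fin n → ℝ) →ₗ[ℝ] (ι → ℝ)) (u : ℕ → Fin n → ℝ)
    {L : ι → ℝ} (hL : Tendsto (fun m => T (u m)) atTop (𝓝 L)) :
    ∃ (z : ℕ → Fin n → ℝ) (y : Fin n → ℝ), Tendsto z atTop (𝓝 y) ∧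
      ∀ m, T (z m) = T (u m) := by
  obtain ⟨S, hS⟩ := T.rangeRestrict.exists_rightInverse_of_surjective T.range_rangeRestrict
  have hcl : IsClosed (LinearMap.range T : Set (ι → ℝ)) := Submodule.closed_of_finiteDimensional _
  have hLm : L ∈ LinearMap.range T :=
    hcl.mem_of_tendsto hL (Eventually.of_forall fun m => ⟨u m, rfl⟩)
  refine ⟨fun m => S (T.rangeRestrict (u m)), S ⟨L, hLm⟩, ?_, fun m => ?_⟩
  · refine (LinearMap.continuous_of_finiteDimensional S).tendsto _ |>.comp ?_
    exact tendsto_subtype_rng.2 hL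
  · have := LinearMap.congr_fun hS (T.rangeRestrict (u m))
    exact congrArg Subtype.val this

/-- Near the origin, the logarithmic gradient of `F` is comparable to `M`: a sequence violating
this would, after rescaling by torus elements, converge to a critical point of a compact face. -/
lemma key_ineq {A : Finset (Fin n → ℕ)} (hA : A.Nonempty)
    {g : (Fin n → ℕ) → (Fin n → ℝ) → ℝ} (hg : ∀ α, ContDiff ℝ (⊤ : ℕ∞) (g α))
    (hnd : ∀ v : Fin n → ℝ, (∀ i, 0 < v i) → ∀ y : Fin n → ℝ,
      ∃ i, ∑ α ∈ Amin A v, (α i : ℝ) * g α 0 * Real.exp (dotR (cv α) y) ≠ 0) :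
    ∃ R > 0, ∃ c > 0, ∀ u : Fin n → ℝ, (∀ i, Real.exp (u i) < R) →
      c * Mf A u ^ 2 ≤ ∑ i, pd i (Fl A g) u ^ 2 := by
  by_contra! hcon
  have hcon' : ∀ m : ℕ, ∃ u : Fin n → ℝ, (∀ i, Real.exp (u i) < 1 / ((m : ℝ) + 1)) ∧
      ∑ i, pd i (Fl A g) u ^ 2 < 1 / ((m : ℝ) + 1) * Mf A u ^ 2 := fun m =>
    hcon _ Nat.one_div_pos_of_nat _ Nat.one_div_pos_of_nat
  choose u0 hu0 hF0 using hcon'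
  let p0 : ℕ → A → ℝ := fun m α => Real.exp (dotR (cv α.1) (u0 m)) / Mf A (u0 m)
  have hp0 : ∀ m, p0 m ∈ Set.Icc (0 : A → ℝ) 1 := fun m =>
    ⟨fun α => div_nonneg (Real.exp_pos _).le (Mf_pos hA _).le, fun α =>
      div_le_one_of_le₀ (exp_le_Mf _ α.2) (Mf_pos hA _).le⟩
  obtain ⟨p, -, k, hk, hpl⟩ := isCompact_Icc.tendsto_subseq hp0
  set u : ℕ → Fin n → ℝ := fun m => u0 (k m) with hu
  have hM := fun m => Mf_pos hA (u m)
  have hp : ∀ α (hα : α ∈ A), Tendsto (fun m => Real.exp (dotR (cv α) (u m)) / Mf A (u m)) atTop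
      (𝓝 (p ⟨α, hα⟩)) := fun α hα => (tendsto_pi_nhds.1 hpl) ⟨α, hα⟩
  have hdec : Tendsto (fun m : ℕ => 1 / ((k m : ℝ) + 1)) atTop (𝓝 0) :=
    tendsto_one_div_add_atTop_nhds_zero_nat.comp hk.tendsto_atTop
  have hexu : ∀ i, Tendsto (fun m => Real.exp (u m i)) atTop (𝓝 0) := fun i =>
    squeeze_zero (fun m => (Real.exp_pos _).le) (fun m => (hu0 (k m) i).le) hdec
  have hui : ∀ i, Tendsto (fun m => u m i) atTop atBot := fun i =>
    Real.tendsto_exp_comp_nhds_zero.1 (hexu i)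
  have hex0 : Tendsto (fun m => ex (u m)) atTop (𝓝 0) := tendsto_pi_nhds.2 hexu
  have hpnn : ∀ α, 0 ≤ p α := fun α => ge_of_tendsto' (hp α.1 α.2) fun m =>
    div_nonneg (Real.exp_pos _).le (hM m).le
  have hpsum : ∑ α : A, p α = 1 := by
    have h1 : Tendsto (fun m => ∑ α : A, Real.exp (dotR (cv α.1) (u m)) / Mf A (u m)) atTop
        (𝓝 (∑ α : A, p α)) := tendsto_finsetSum _ fun α _ => hp α.1 α.2
    refine tendsto_nhds_unique h1 (tendsto_const_nhds.congr fun m => ?_)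
    rw [Finset.sum_coe_sort A (fun α => Real.exp (dotR (cv α) (u m)) / Mf A (u m)),
      ← Finset.sum_div]
    exact (div_self (hM m).ne').symm
  obtain ⟨α₀, hα₀⟩ : ∃ α, 0 < p α := by
    by_contra! hh
    have : ∑ α : A, p α ≤ 0 := Finset.sum_nonpos fun α _ => hh α
    linarith
  have hratio : ∀ α : A, Tendsto (fun m => Real.exp (dotR (cv α.1 - cv α₀.1) (u m))) atTop
      (𝓝 (p α / p α₀)) := by
    intro α
    refine ((hp α.1 α.2).div (hp α₀.1 α₀.2) hα₀.ne').congr fun m => ?_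
    show (Real.exp _ / Mf A (u m)) / (Real.exp _ / Mf A (u m)) = _
    rw [div_div_div_cancel_right₀ (hM m).ne', ← Real.exp_sub, dotR_sub_left]
  -- exponents whose monomials survive in the limit
  let I := {α : A // 0 < p α}
  let T : (Fin n → ℝ) →ₗ[ℝ] (I → ℝ) := LinearMap.pi fun α => dotL (cv α.1.1 - cv α₀.1)
  have hT : ∀ x α, T x α = dotR (cv α.1.1 - cv α₀.1) x := fun x α => rfl
  have hTL : Tendsto (fun m => T (u m)) atTop (𝓝 fun α : I => Real.log (p α.1 / p α₀)) := by
    refine tendsto_pi_nhds.2 fun α => ?_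
    have h1 := ((Real.continuousAt_log (div_pos α.2 hα₀).ne').tendsto.comp (hratio α.1))
    exact h1.congr fun m => Real.log_exp _
  obtain ⟨z, y, hz, hTz⟩ := exists_lift T u hTL
  have hzu : ∀ m (α : I), dotR (cv α.1.1 - cv α₀.1) (z m - u m) = 0 := by
    intro m α
    have := congrFun (hTz m) α
    rw [hT, hT] at this
    rw [dotR_sub_right, this, sub_self]
  have hy : ∀ α : A, 0 < p α → Real.exp (dotR (cv α.1) y) =
      Real.exp (dotR (cv α₀.1) y) / p α₀ * p α := by
    intro α hα
    have h1 : Tendsto (fun m => Real.exp (dotR (cv α.1 - cv α₀.1) (z m))) atTop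
        (𝓝 (Real.exp (dotR (cv α.1 - cv α₀.1) y))) :=
      ((Real.continuous_exp.comp (continuous_dotR _)).tendsto y).comp hz
    have h2 := tendsto_nhds_unique h1 ((hratio α).congr fun m => by
      have := congrFun (hTz m) ⟨α, hα⟩
      rw [hT, hT] at this
      rw [← this])
    rw [dotR_sub_left, Real.exp_sub, div_eq_iff (Real.exp_pos _).ne'] at h2
    rw [h2]; ring
  have hev : ∀ᶠ m in atTop, (∀ i, 0 < (z m - u m) i) ∧
      ∀ α : A, ¬ 0 < p α → 0 < dotR (cv α.1 - cv α₀.1) (z m - u m) := by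
    refine (eventually_all.2 fun i => ?_).and (eventually_all.2 fun α => ?_)
    · have h1 : Tendsto (fun m => z m i + -u m i) atTop atTop :=
        ((tendsto_pi_nhds.1 hz) i).add_atTop (tendsto_neg_atBot_atTop.comp (hui i))
      filter_upwards [h1.eventually_gt_atTop 0] with m hm
      simpa [sub_eq_add_neg] using hm
    · by_cases hα : 0 < p α
      · exact Eventually.of_forall fun m h => absurd hα h
      have hα0 : p α = 0 := le_antisymm (not_lt.1 hα) (hpnn α)
      have h0 := hratio α
      rw [hα0, zero_div, Real.tendsto_exp_comp_nhds_zero] at h0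
      have h1 : Tendsto (fun m => dotR (cv α.1 - cv α₀.1) (z m) +
          -dotR (cv α.1 - cv α₀.1) (u m)) atTop atTop :=
        (((continuous_dotR _).tendsto y).comp hz).add_atTop (tendsto_neg_atBot_atTop.comp h0)
      filter_upwards [h1.eventually_gt_atTop 0] with m hm _
      rw [dotR_sub_right]; linarith
  obtain ⟨m, hm1, hm2⟩ := hev.exists
  set v := z m - u m with hv
  have hAmin : ∀ α (hα : α ∈ A), α ∈ Amin A v ↔ 0 < p ⟨α, hα⟩ := by
    have hd : ∀ α (hα : α ∈ A), dotR (cv α₀.1) v ≤ dotR (cv α) v := by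
      intro α hα
      by_cases h : 0 < p ⟨α, hα⟩
      · have := hzu m ⟨⟨α, hα⟩, h⟩
        rw [dotR_sub_left] at this
        exact (sub_eq_zero.1 this).ge
      · have := hm2 ⟨α, hα⟩ h
        rw [dotR_sub_left] at this
        linarith
    intro α hα
    rw [Amin, Finset.mem_filter]
    constructor
    · rintro ⟨-, h⟩
      by_contra hcon
      have := hm2 ⟨α, hα⟩ hcon
      rw [dotR_sub_left] at this
      have := h α₀.1 α₀.2
      linarith
    · intro h
      refine ⟨hα, fun β hβ => ?_⟩
      have := hzu m ⟨⟨α, hα⟩, h⟩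
      rw [dotR_sub_left] at this
      have := hd β hβ
      linarith
  obtain ⟨i, hi⟩ := hnd v hm1 y
  have hlim : Tendsto (fun m => pd i (Fl A g) (u m) / Mf A (u m)) atTop
      (𝓝 (∑ α : A, p α * ((α.1 i : ℝ) * g α.1 0 + 0 * pd i (g α.1) 0))) := by
    have h1 : Tendsto (fun m => ∑ α : A, Real.exp (dotR (cv α.1) (u m)) / Mf A (u m) *
        ((α.1 i : ℝ) * g α.1 (ex (u m)) + Real.exp (u m i) * pd i (g α.1) (ex (u m)))) atTop
        (𝓝 (∑ α : A, p α * ((α.1 i : ℝ) * g α.1 0 + 0 * pd i (g α.1) 0))) := by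
      refine tendsto_finsetSum _ fun α _ => (hp α.1 α.2).mul (Tendsto.add ?_ ?_)
      · exact (((hg α.1).continuous.tendsto 0).comp hex0).const_mul _
      · exact (hexu i).mul (((contDiff_pd (hg α.1) i).continuous.tendsto 0).comp hex0)
    refine h1.congr fun m => ?_
    rw [pd_Fl A hg, Finset.sum_div, ← Finset.sum_coe_sort A]
    exact Finset.sum_congr rfl fun α _ => by ring
  have hlim2 : Tendsto (fun m => (pd i (Fl A g) (u m) / Mf A (u m)) ^ 2) atTop (𝓝 0) := by
    refine squeeze_zero (fun m => sq_nonneg _) (fun m => ?_) hdec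
    rw [div_pow, div_le_iff₀ (pow_pos (hM m) 2)]
    refine le_trans ?_ (hF0 (k m)).le
    exact Finset.single_le_sum (f := fun i => pd i (Fl A g) (u m) ^ 2)
      (fun i _ => sq_nonneg _) (Finset.mem_univ i)
  have hzero := tendsto_nhds_unique (hlim.pow 2) hlim2
  rw [sq_eq_zero_iff] at hzero
  refine hi ?_
  have e1 : ∑ α ∈ Amin A v, (α i : ℝ) * g α 0 * Real.exp (dotR (cv α) y) =
      ∑ α : A, (α.1 i : ℝ) * g α.1 0 * (Real.exp (dotR (cv α₀.1) y) / p α₀ * p α) := by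
    have hsub : Amin A v ⊆ A := Finset.filter_subset _ _
    have h1 : ∑ α ∈ Amin A v, (α i : ℝ) * g α 0 * Real.exp (dotR (cv α) y) =
        ∑ α ∈ A, if α ∈ Amin A v then (α i : ℝ) * g α 0 * Real.exp (dotR (cv α) y) else 0 := by
      rw [← Finset.sum_filter, Finset.filter_mem_eq_inter, Finset.inter_eq_right.2 hsub]
    rw [h1, ← Finset.sum_coe_sort A]
    refine Finset.sum_congr rfl fun α _ => ?_
    by_cases h : 0 < p α
    · rw [if_pos ((hAmin α.1 α.2).2 h), hy α h]
    · rw [if_neg (fun h' => h ((hAmin α.1 α.2).1 h')), le_antisymm (not_lt.1 h) (hpnn α)]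
      simp
  rw [e1]
  have e2 : ∑ α : A, (α.1 i : ℝ) * g α.1 0 * (Real.exp (dotR (cv α₀.1) y) / p α₀ * p α) =
      Real.exp (dotR (cv α₀.1) y) / p α₀ *
        ∑ α : A, p α * ((α.1 i : ℝ) * g α.1 0 + 0 * pd i (g α.1) 0) := by
    rw [Finset.mul_sum]
    exact Finset.sum_congr rfl fun α _ => by ring
  rw [e2, hzero, mul_zero]

end logcoord

/-! ### Symbol classes -/

section symbols

variable {n : ℕ}

/-- `ψ` and its partial derivatives of order at most `k` are `O(w)` on the negative orthant. -/
def Sy (w : (Fin n → ℝ) → ℝ) : ℕ → ((Fin n → ℝ) → ℝ) → Prop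
  | 0, ψ => ∃ C, ∀ u, (∀ i, u i < 0) → |ψ u| ≤ C * w u
  | k + 1, ψ => (∃ C, ∀ u, (∀ i, u i < 0) → |ψ u| ≤ C * w u) ∧ ∀ i, Sy w k (pd i ψ)

/-- The symbol class of weight `w`: smooth functions all of whose derivatives (in logarithmic
coordinates) are `O(w)` on the negative orthant. -/
def SS (w : (Fin n → ℝ) → ℝ) (ψ : (Fin n → ℝ) → ℝ) : Prop :=
  ContDiff ℝ (⊤ : ℕ∞) ψ ∧ ∀ k, Sy w k ψ

lemma Sy.zero {w : (Fin n → ℝ) → ℝ} {k : ℕ} {ψ : (Fin n → ℝ) → ℝ} (h : Sy w k ψ) :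
    ∃ C, ∀ u, (∀ i, u i < 0) → |ψ u| ≤ C * w u := by
  cases k with
  | zero => exact h
  | succ k => exact h.1

lemma Sy.pred {w : (Fin n → ℝ) → ℝ} {k : ℕ} : ∀ {ψ : (Fin n → ℝ) → ℝ}, Sy w (k + 1) ψ → Sy w k ψ := by
  induction k with
  | zero => intro ψ h; exact h.1
  | succ k ih => intro ψ h; exact ⟨h.1, fun i => ih (h.2 i)⟩

lemma Sy.add {w : (Fin n → ℝ) → ℝ} {k : ℕ} : ∀ {ψ η : (Fin n → ℝ) → ℝ},
    ContDiff ℝ (⊤ : ℕ∞) ψ → ContDiff ℝ (⊤ : ℕ∞) η → Sy w k ψ → Sy w k η →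
      Sy w k (fun u => ψ u + η u) := by
  have base : ∀ {ψ η : (Fin n → ℝ) → ℝ}, (∃ C, ∀ u, (∀ i, u i < 0) → |ψ u| ≤ C * w u) →
      (∃ C, ∀ u, (∀ i, u i < 0) → |η u| ≤ C * w u) →
      ∃ C, ∀ u, (∀ i, u i < 0) → |ψ u + η u| ≤ C * w u := by
    rintro ψ η ⟨C, hC⟩ ⟨D, hD⟩
    refine ⟨C + D, fun u hu => (abs_add_le _ _).trans ?_⟩
    rw [add_mul]; exact add_le_add (hC u hu) (hD u hu)
  induction k with
  | zero => intro ψ η _ _ h1 h2; exact base h1 h2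
  | succ k ih =>
    intro ψ η s1 s2 h1 h2
    refine ⟨base h1.1 h2.1, fun i => ?_⟩
    rw [funext (pd_add s1 s2 i)]
    exact ih (contDiff_pd s1 i) (contDiff_pd s2 i) (h1.2 i) (h2.2 i)

lemma Sy.mul {w w' : (Fin n → ℝ) → ℝ} (hw : ∀ u, 0 ≤ w u) {k : ℕ} : ∀ {ψ η : (Fin n → ℝ) → ℝ},
    ContDiff ℝ (⊤ : ℕ∞) ψ → ContDiff ℝ (⊤ : ℕ∞) η → Sy w k ψ → Sy w' k η →
      Sy (fun u => w u * w' u) k (fun u => ψ u * η u) := by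
  have base : ∀ {ψ η : (Fin n → ℝ) → ℝ}, (∃ C, ∀ u, (∀ i, u i < 0) → |ψ u| ≤ C * w u) →
      (∃ C, ∀ u, (∀ i, u i < 0) → |η u| ≤ C * w' u) →
      ∃ C, ∀ u, (∀ i, u i < 0) → |ψ u * η u| ≤ C * (w u * w' u) := by
    rintro ψ η ⟨C, hC⟩ ⟨D, hD⟩
    refine ⟨|C| * D, fun u hu => ?_⟩
    rw [abs_mul]
    have h1 : |ψ u| ≤ |C| * w u :=
      (hC u hu).trans (mul_le_mul_of_nonneg_right (le_abs_self C) (hw u))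
    calc |ψ u| * |η u| ≤ (|C| * w u) * (D * w' u) :=
          mul_le_mul h1 (hD u hu) (abs_nonneg _) (mul_nonneg (abs_nonneg _) (hw u))
      _ = _ := by ring
  induction k with
  | zero => intro ψ η _ _ h1 h2; exact base h1 h2
  | succ k ih =>
    intro ψ η s1 s2 h1 h2
    refine ⟨base h1.1 h2.1, fun i => ?_⟩
    rw [funext (pd_mul s1 s2 i)]
    exact Sy.add ((contDiff_pd s1 i).mul s2) (s1.mul (contDiff_pd s2 i))
      (ih (contDiff_pd s1 i) s2 (h1.2 i) h2.pred) (ih s1 (contDiff_pd s2 i) h1.pred (h2.2 i))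

lemma SS.add {w ψ η : (Fin n → ℝ) → ℝ} (h1 : SS w ψ) (h2 : SS w η) :
    SS w (fun u => ψ u + η u) := ⟨h1.1.add h2.1, fun k => (h1.2 k).add h1.1 h2.1 (h2.2 k)⟩

lemma SS.mul {w w' ψ η : (Fin n → ℝ) → ℝ} (hw : ∀ u, 0 ≤ w u) (h1 : SS w ψ) (h2 : SS w' η) :
    SS (fun u => w u * w' u) (fun u => ψ u * η u) :=
  ⟨h1.1.mul h2.1, fun k => Sy.mul hw h1.1 h2.1 (h1.2 k) (h2.2 k)⟩

lemma SS.pd {w ψ : (Fin n → ℝ) → ℝ} (h : SS w ψ) (i : Fin n) : SS w (pd i ψ) :=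
  ⟨contDiff_pd h.1 i, fun k => (h.2 (k + 1)).2 i⟩

lemma Sy.mono {w w' : (Fin n → ℝ) → ℝ} {C : ℝ}
    (hle : ∀ u, (∀ i, u i < 0) → w u ≤ C * w' u) (hw : ∀ u, 0 ≤ w u) {k : ℕ} :
    ∀ {ψ : (Fin n → ℝ) → ℝ}, Sy w k ψ → Sy w' k ψ := by
  have base : ∀ {ψ : (Fin n → ℝ) → ℝ}, (∃ C, ∀ u, (∀ i, u i < 0) → |ψ u| ≤ C * w u) →
      ∃ C, ∀ u, (∀ i, u i < 0) → |ψ u| ≤ C * w' u := by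
    rintro ψ ⟨D, hD⟩
    refine ⟨|D| * C, fun u hu => (hD u hu).trans ?_⟩
    calc D * w u ≤ |D| * w u := mul_le_mul_of_nonneg_right (le_abs_self D) (hw u)
      _ ≤ |D| * (C * w' u) := mul_le_mul_of_nonneg_left (hle u hu) (abs_nonneg _)
      _ = _ := by ring
  induction k with
  | zero => intro ψ h; exact base h
  | succ k ih => intro ψ h; exact ⟨base h.1, fun i => ih (h.2 i)⟩

lemma SS.mono {w w' ψ : (Fin n → ℝ) → ℝ} (h : SS w ψ) (C : ℝ)
    (hle : ∀ u, (∀ i, u i < 0) → w u ≤ C * w' u) (hw : ∀ u, 0 ≤ w u) : SS w' ψ :=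
  ⟨h.1, fun k => (h.2 k).mono hle hw⟩

lemma SS.const (c : ℝ) : SS (n := n) (fun _ => 1) (fun _ => c) := by
  refine ⟨contDiff_const, fun k => ?_⟩
  have : ∀ k c, Sy (n := n) (fun _ => 1) k (fun _ => c) := by
    intro k
    induction k with
    | zero => intro c; exact ⟨|c|, fun _ _ => by simp⟩
    | succ k ih =>
      intro c
      refine ⟨⟨|c|, fun _ _ => by simp⟩, fun i => ?_⟩
      have : _root_.pd i (fun _ : Fin n → ℝ => c) = fun _ => 0 := by
        funext u; simp [_root_.pd]
      rw [this]; exact ih 0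
  exact this k c

lemma SS.const_mul {w ψ : (Fin n → ℝ) → ℝ} (h : SS w ψ) (c : ℝ) : SS w (fun u => c * ψ u) := by
  have := (SS.const (n := n) c).mul (fun _ => zero_le_one) h
  simpa using this

lemma SS.zero (w : (Fin n → ℝ) → ℝ) : SS w (fun _ => 0) := by
  have : ∀ k, Sy (n := n) w k (fun _ => 0) := by
    intro k
    induction k with
    | zero => exact ⟨0, fun _ _ => by simp⟩
    | succ k ih =>
      refine ⟨⟨0, fun _ _ => by simp⟩, fun i => ?_⟩
      have : _root_.pd i (fun _ : Fin n → ℝ => (0 : ℝ)) = fun _ => 0 := by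
        funext u; simp [_root_.pd]
      rw [this]; exact ih
  exact ⟨contDiff_const, this⟩

lemma SS.sum {ι : Type*} (s : Finset ι) {w : (Fin n → ℝ) → ℝ}
    {ψ : ι → (Fin n → ℝ) → ℝ} (h : ∀ j ∈ s, SS w (ψ j)) : SS w (fun u => ∑ j ∈ s, ψ j u) := by
  induction s using Finset.induction_on with
  | empty => simpa using SS.zero w
  | insert j s hj ih =>
    simp only [Finset.sum_insert hj]
    exact (h j (Finset.mem_insert_self _ _)).add
      (ih fun l hl => h l (Finset.mem_insert_of_mem hl))

lemma SS.exp_dot (v : Fin n → ℝ) :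
    SS (fun u => Real.exp (dotR v u)) (fun u => Real.exp (dotR v u)) := by
  have : ∀ k (c : ℝ), Sy (fun u => Real.exp (dotR v u)) k (fun u => c * Real.exp (dotR v u)) := by
    have base : ∀ c : ℝ, ∃ C, ∀ u : Fin n → ℝ, (∀ i, u i < 0) →
        |c * Real.exp (dotR v u)| ≤ C * Real.exp (dotR v u) := fun c =>
      ⟨|c|, fun u _ => by rw [abs_mul, abs_of_pos (Real.exp_pos _)]⟩
    intro k
    induction k with
    | zero => exact base
    | succ k ih =>
      intro c
      refine ⟨base c, fun i => ?_⟩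
      have : _root_.pd i (fun u => c * Real.exp (dotR v u)) =
          fun u => (c * v i) * Real.exp (dotR v u) := by
        funext u
        rw [pd_mul contDiff_const (contDiff_exp_dot v), pd_exp_dot]
        simp [_root_.pd]; ring
      rw [this]; exact ih _
  exact ⟨contDiff_exp_dot v, fun k => by simpa using this k 1⟩

/-- A smooth compactly supported function of `x = e ^ u` is a symbol of weight `1`, since
`∂/∂u_i = x_i ∂/∂x_i`. -/
lemma SS.comp_ex {h : (Fin n → ℝ) → ℝ} (h1 : ContDiff ℝ (⊤ : ℕ∞) h) (h2 : HasCompactSupport h) :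
    SS (fun _ => 1) (fun u => h (ex u)) := by
  have base : ∀ h : (Fin n → ℝ) → ℝ, ContDiff ℝ (⊤ : ℕ∞) h → HasCompactSupport h →
      ∃ C, ∀ u : Fin n → ℝ, (∀ i, u i < 0) → |h (ex u)| ≤ C * 1 := by
    intro h h1 h2
    obtain ⟨C, hC⟩ := h1.continuous.bounded_above_of_compact_support h2
    exact ⟨C, fun u _ => by simpa using hC (ex u)⟩
  have : ∀ k, ∀ h : (Fin n → ℝ) → ℝ, ContDiff ℝ (⊤ : ℕ∞) h → HasCompactSupport h →
      Sy (fun _ => 1) k (fun u => h (ex u)) := by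
    intro k
    induction k with
    | zero => exact base
    | succ k ih =>
      intro h h1 h2
      refine ⟨base h h1 h2, fun i => ?_⟩
      rw [funext (pd_comp_ex h1 i)]
      have h3 : HasCompactSupport (_root_.pd i h) := h2.fderiv_apply (𝕜 := ℝ) _
      have h4 : ContDiff ℝ (⊤ : ℕ∞) fun x : Fin n → ℝ => x i := contDiff_apply ℝ ℝ i
      exact ih (fun x => x i * _root_.pd i h x) (h4.mul (contDiff_pd h1 i)) h3.mul_left
  exact ⟨contDiff_comp_ex h1, fun k => this k h h1 h2⟩

lemma rpow_sandwich {c C : ℝ} (hc : 0 < c) (t : ℝ) : ∃ K, ∀ x w : ℝ, 0 < w → c * w ≤ x →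
    x ≤ C * w → x ^ t ≤ K * w ^ t := by
  refine ⟨c ^ t + |C| ^ t, fun x w hw h1 h2 => ?_⟩
  have hx : 0 < x := lt_of_lt_of_le (by positivity) h1
  have h3 : x ≤ |C| * w := h2.trans (by gcongr; exact le_abs_self C)
  have hC : 0 < |C| := by
    by_contra h
    have : |C| = 0 := le_antisymm (not_lt.1 h) (abs_nonneg C)
    rw [this] at h3; linarith
  rw [add_mul, ← Real.mul_rpow hc.le hw.le, ← Real.mul_rpow hC.le hw.le]
  rcases le_total 0 t with ht | ht
  · have := Real.rpow_le_rpow hx.le h3 ht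
    have : 0 ≤ (c * w) ^ t := by positivity
    linarith
  · have := Real.rpow_le_rpow_of_nonpos (by positivity) h1 ht
    have : 0 ≤ (|C| * w) ^ t := by positivity
    linarith

/-- Elliptic symbols may be raised to arbitrary real powers. -/
lemma SS.rpow {w D : (Fin n → ℝ) → ℝ} (hw : ∀ u, 0 < w u) (hD : SS w D) {c : ℝ} (hc : 0 < c)
    (hlow : ∀ u, c * w u ≤ D u) (t : ℝ) : SS (fun u => w u ^ t) (fun u => D u ^ t) := by
  have hpos : ∀ u, 0 < D u := fun u => lt_of_lt_of_le (mul_pos hc (hw u)) (hlow u)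
  have hsm : ∀ t : ℝ, ContDiff ℝ (⊤ : ℕ∞) fun u => D u ^ t := fun t =>
    hD.1.rpow_const_of_ne fun u => (hpos u).ne'
  have base : ∀ t : ℝ, ∃ C, ∀ u : Fin n → ℝ, (∀ i, u i < 0) → |D u ^ t| ≤ C * w u ^ t := by
    intro t
    obtain ⟨C, hC⟩ := (hD.2 0).zero
    obtain ⟨K, hK⟩ := rpow_sandwich (C := C) hc t
    refine ⟨K, fun u hu => ?_⟩
    rw [abs_of_pos (Real.rpow_pos_of_pos (hpos u) t)]
    exact hK _ _ (hw u) (hlow u) ((le_abs_self _).trans (hC u hu))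
  have : ∀ k (t : ℝ), Sy (fun u => w u ^ t) k (fun u => D u ^ t) := by
    intro k
    induction k with
    | zero => exact base
    | succ k ih =>
      intro t
      refine ⟨base t, fun i => ?_⟩
      have h1 : _root_.pd i (fun u => D u ^ t) = fun u => D u ^ (t - 1) * (t * _root_.pd i D u) := by
        funext u
        unfold _root_.pd
        have := ((hD.1.differentiable (by simp) u).hasFDerivAt.rpow_const (p := t)
          (Or.inl (hpos u).ne'))
        rw [this.fderiv]
        simp; ring
      have h2 : (fun u => w u ^ t) = fun u => w u ^ (t - 1) * w u := by
        funext u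
        rw [Real.rpow_sub_one (hw u).ne']; field_simp [(hw u).ne']
      rw [h1, h2]
      exact Sy.mul (fun u => (Real.rpow_pos_of_pos (hw u) _).le) (hsm _)
        (contDiff_const.mul (contDiff_pd hD.1 i)) (ih (t - 1)) (((hD.pd i).const_mul t).2 k)
  exact ⟨hsm t, fun k => this k t⟩

lemma Mf_SS {A : Finset (Fin n → ℕ)} : SS (Mf A) (Mf A) :=
  SS.sum A fun α hα =>
    (SS.exp_dot (cv α)).mono 1 (fun u _ => by rw [one_mul]; exact exp_le_Mf u hα)
      fun u => (Real.exp_pos _).le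

lemma Fl_SS {A : Finset (Fin n → ℕ)} {g : (Fin n → ℕ) → (Fin n → ℝ) → ℝ}
    (hg : ∀ α, ContDiff ℝ (⊤ : ℕ∞) (g α)) (hgc : ∀ α, HasCompactSupport (g α)) :
    SS (Mf A) (Fl A g) :=
  SS.sum A fun α hα =>
    ((SS.exp_dot (cv α)).mul (fun _ => (Real.exp_pos _).le) (SS.comp_ex (hg α) (hgc α))).mono 1
      (fun u _ => by rw [one_mul, mul_one]; exact exp_le_Mf u hα) fun u => by positivity

end symbols

/-! ### Local data near the origin -/

section ibp

variable {n : ℕ}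

/-- A function in logarithmic coordinates supported where all `x_i = e ^ {u_i} ≤ r`. -/
def VB (r : ℝ) (ψ : (Fin n → ℝ) → ℝ) : Prop :=
  ∀ u, ¬ (∀ i, Real.exp (u i) ≤ r) → ψ u = 0

/-- The Jacobian `e ^ {u_1 + ⋯ + u_n}` of the logarithmic chart. -/
def Es (u : Fin n → ℝ) : ℝ := Real.exp (∑ i, u i)

/-- The local data near the origin: a presentation `F = ∑_{α ∈ A} x ^ α g_α`, a radius `r < 1`,
and a vector field `∑ c_i ∂_i` with coefficients of symbol type of weight `M⁻¹` such that
`∑ c_i ∂_i F = 1` on the `r`-box. -/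
structure Setup (n : ℕ) where
  A : Finset (Fin n → ℕ)
  hA : A.Nonempty
  g : (Fin n → ℕ) → (Fin n → ℝ) → ℝ
  hg : ∀ α, ContDiff ℝ (⊤ : ℕ∞) (g α)
  hgc : ∀ α, HasCompactSupport (g α)
  r : ℝ
  r_pos : 0 < r
  r_lt : r < 1
  c : Fin n → (Fin n → ℝ) → ℝ
  c_SS : ∀ i, SS (fun u => (Mf A u)⁻¹) (c i)
  c_one : ∀ u, (∀ i, Real.exp (u i) ≤ r) → ∑ i, c i u * pd i (Fl A g) u = 1

/-- Non-degeneracy yields the local data: let `D` be a symbol of weight `M ^ 2`, bounded below by a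
multiple of `M ^ 2`, which equals `∑ (∂_i F) ^ 2` near the origin; the field `c_i = ∂_i F / D` is then
a symbol of weight `M⁻¹`. -/
lemma exists_setup {A : Finset (Fin n → ℕ)} (hA : A.Nonempty)
    {g : (Fin n → ℕ) → (Fin n → ℝ) → ℝ} (hg : ∀ α, ContDiff ℝ (⊤ : ℕ∞) (g α))
    (hgc : ∀ α, HasCompactSupport (g α))
    (hnd : ∀ v : Fin n → ℝ, (∀ i, 0 < v i) → ∀ y : Fin n → ℝ,
      ∃ i, ∑ α ∈ Amin A v, (α i : ℝ) * g α 0 * Real.exp (dotR (cv α) y) ≠ 0) :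
    ∃ S : Setup n, S.A = A ∧ S.g = g := by
  obtain ⟨R, hR, c, hc, hkey⟩ := key_ineq hA hg hnd
  set R' := min R 1 with hR'
  have hR'0 : 0 < R' := by positivity
  let χ : ContDiffBump (0 : Fin n → ℝ) := ⟨R' / 2, R', by positivity, by linarith⟩
  have hM := fun u => Mf_pos hA u
  let D : (Fin n → ℝ) → ℝ := fun u => (∑ i, pd i (Fl A g) u * pd i (Fl A g) u) +
    (1 + -1 * χ (ex u)) * (Mf A u * Mf A u)
  have hDS : SS (fun u => Mf A u * Mf A u) D := by
    refine SS.add (SS.sum _ fun i _ => ((Fl_SS hg hgc).pd i).mul (fun u => (hM u).le)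
      ((Fl_SS hg hgc).pd i)) ?_
    have h1 : SS (fun _ => 1) fun u : Fin n → ℝ => 1 + -1 * χ (ex u) :=
      (SS.const 1).add ((SS.comp_ex χ.contDiff χ.hasCompactSupport).const_mul _)
    have := h1.mul (fun _ => zero_le_one) ((Mf_SS (A := A)).mul (fun u => (hM u).le) (Mf_SS (A := A)))
    simpa using this
  have hDlow : ∀ u, min c 1 * (Mf A u * Mf A u) ≤ D u := by
    intro u
    have hχ1 : χ (ex u) ≤ 1 := χ.le_one
    have hMM : 0 < Mf A u * Mf A u := mul_pos (hM u) (hM u)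
    by_cases h : ∀ i, Real.exp (u i) < R
    · have h1 := hkey u h
      have h2 : ∑ i, pd i (Fl A g) u * pd i (Fl A g) u = ∑ i, pd i (Fl A g) u ^ 2 :=
        Finset.sum_congr rfl fun i _ => by ring
      have h3 : min c 1 * (Mf A u * Mf A u) ≤ c * (Mf A u * Mf A u) := by
        gcongr; exact min_le_left _ _
      have h4 : 0 ≤ (1 + -1 * χ (ex u)) * (Mf A u * Mf A u) :=
        mul_nonneg (by linarith) hMM.le
      show _ ≤ _ + _
      rw [h2]
      nlinarith
    · have h1 : χ (ex u) = 0 := by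
        refine χ.zero_of_le_dist ?_
        rw [dist_zero_right]
        push Not at h
        obtain ⟨i, hi⟩ := h
        refine (min_le_left _ _).trans (hi.trans ?_)
        have := norm_le_pi_norm (ex u) i
        rwa [ex, Real.norm_of_nonneg (Real.exp_pos _).le] at this
      have h3 : min c 1 * (Mf A u * Mf A u) ≤ 1 * (Mf A u * Mf A u) := by
        gcongr; exact min_le_right _ _
      have h4 : 0 ≤ ∑ i, pd i (Fl A g) u * pd i (Fl A g) u :=
        Finset.sum_nonneg fun i _ => mul_self_nonneg _
      show _ ≤ _ + _
      rw [h1]; linarith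
  have hDpos : ∀ u, 0 < D u := fun u =>
    lt_of_lt_of_le (mul_pos (lt_min hc one_pos) (mul_pos (hM u) (hM u))) (hDlow u)
  refine ⟨⟨A, hA, g, hg, hgc, R' / 2, by positivity, ?_, fun i u => pd i (Fl A g) u * D u ^ (-1 : ℝ),
    fun i => ?_, fun u hu => ?_⟩, rfl, rfl⟩
  · have := min_le_right R 1
    linarith
  · have := ((Fl_SS hg hgc).pd i).mul (fun u => (hM u).le)
      (hDS.rpow (fun u => mul_pos (hM u) (hM u)) (lt_min hc one_pos) hDlow (-1))
    refine this.mono 1 (fun u _ => le_of_eq ?_) fun u => ?_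
    · rw [Real.rpow_neg_one]; field_simp [(hM u).ne']
    · have := hM u; positivity
  · have h1 : χ (ex u) = 1 := by
      refine χ.one_of_mem_closedBall ?_
      rw [mem_closedBall_zero_iff, pi_norm_le_iff_of_nonneg (show (0:ℝ) ≤ R' / 2 by positivity)]
      intro i
      rw [ex, Real.norm_of_nonneg (Real.exp_pos _).le]
      exact hu i
    have h2 : D u = ∑ i, pd i (Fl A g) u * pd i (Fl A g) u := by
      show _ + _ = _
      rw [h1]; ring
    have : ∑ i, pd i (Fl A g) u * D u ^ (-1 : ℝ) * pd i (Fl A g) u = D u ^ (-1 : ℝ) * D u := by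
      rw [h2, Finset.mul_sum]
      exact Finset.sum_congr rfl fun i _ => by ring
    rw [this, Real.rpow_neg_one, inv_mul_cancel₀ (hDpos u).ne']

lemma VB.neg_orthant {r : ℝ} (hr : r < 1) {u : Fin n → ℝ} (h : ∀ i, Real.exp (u i) ≤ r) (i : Fin n) :
    u i < 0 := by
  rw [← Real.exp_lt_one_iff]; exact (h i).trans_lt hr

lemma VB.pd {r : ℝ} {ψ : (Fin n → ℝ) → ℝ} (h : VB r ψ) (i : Fin n) : VB r (pd i ψ) := by
  intro u hu
  have hop : IsOpen {u : Fin n → ℝ | ¬ ∀ i, Real.exp (u i) ≤ r} := by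
    have : IsClosed {u : Fin n → ℝ | ∀ i, Real.exp (u i) ≤ r} := by
      simp only [Set.ofPred_forall]
      exact isClosed_iInter fun i => isClosed_le (by fun_prop) continuous_const
    exact this.isOpen_compl
  have : ψ =ᶠ[𝓝 u] fun _ => 0 := by
    filter_upwards [hop.mem_nhds hu] with v hv using h v hv
  unfold _root_.pd
  rw [this.fderiv_eq]; simp

lemma VB.mul_left {r : ℝ} {ψ : (Fin n → ℝ) → ℝ} (h : VB r ψ) (k : (Fin n → ℝ) → ℝ) :
    VB r (fun u => k u * ψ u) := fun u hu => by simp [h u hu]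

lemma continuous_Es : Continuous (Es : (Fin n → ℝ) → ℝ) := by unfold Es; fun_prop

lemma Es_pos (u : Fin n → ℝ) : 0 < Es u := Real.exp_pos _

lemma integrable_exp_orthant (n : ℕ) (t : ℝ) (ht : 0 < t) :
    Integrable (fun u : Fin n → ℝ => if ∀ i, u i ≤ 0 then Real.exp (t * ∑ i, u i) else 0) := by
  have h1 : Integrable (fun x : ℝ => (Set.Iic (0 : ℝ)).indicator (fun x => Real.exp (t * x)) x) := by
    rw [integrable_indicator_iff measurableSet_Iic]
    exact integrableOn_exp_mul_Iic ht 0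
  have h2 := Integrable.fintype_prod (ι := Fin n) (f := fun _ => fun x : ℝ =>
    (Set.Iic (0 : ℝ)).indicator (fun x => Real.exp (t * x)) x) (μ := fun _ => volume) fun _ => h1
  refine h2.congr (Eventually.of_forall fun u => ?_)
  show ∏ i, (Set.Iic (0 : ℝ)).indicator (fun x => Real.exp (t * x)) (u i) =
    if ∀ i, u i ≤ 0 then Real.exp (t * ∑ i, u i) else 0
  split_ifs with h
  · rw [Finset.mul_sum, Real.exp_sum]
    exact Finset.prod_congr rfl fun i _ => Set.indicator_of_mem (show u i ∈ Set.Iic (0 : ℝ) from h i) _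
  · push Not at h
    obtain ⟨i, hi⟩ := h
    exact Finset.prod_eq_zero (Finset.mem_univ i) (Set.indicator_of_notMem (by simpa using hi) _)

/-- Bounded functions supported on the `r`-box are integrable against the Jacobian. -/
lemma integrable_box {E : Type*} [NormedAddCommGroup E] [NormedSpace ℝ E] {r : ℝ} (hr : r < 1)
    {k : (Fin n → ℝ) → E} (hk : AEStronglyMeasurable k) {C : ℝ}
    (hb : ∀ u, (∀ i, Real.exp (u i) ≤ r) → ‖k u‖ ≤ C)
    (h0 : ∀ u, ¬ (∀ i, Real.exp (u i) ≤ r) → k u = 0) :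
    Integrable (fun u => Es u • k u) := by
  have h1 := (integrable_exp_orthant n 1 one_pos).const_mul |C|
  refine h1.mono' (continuous_Es.aestronglyMeasurable.smul hk) (Eventually.of_forall fun u => ?_)
  by_cases h : ∀ i, Real.exp (u i) ≤ r
  · have h2 : ∀ i, u i ≤ 0 := fun i => (VB.neg_orthant hr h i).le
    rw [if_pos h2, norm_smul, Real.norm_of_nonneg (Es_pos u).le, one_mul, mul_comm, Es]
    gcongr
    exact (hb u h).trans (le_abs_self C)
  · rw [h0 u h, smul_zero, norm_zero]
    split_ifs <;> positivity

end ibp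

/-! ### Complex powers and integration by parts -/

/-- The complex power `t_+ ^ z`, equal to `0` for `t ≤ 0` whatever the exponent. -/
def cp (z : ℂ) (t : ℝ) : ℂ := if 0 < t then (t : ℂ) ^ z else 0

section cpow

lemma norm_cp (z : ℂ) (t : ℝ) : ‖cp z t‖ = if 0 < t then t ^ z.re else 0 := by
  unfold cp
  split_ifs with h
  · exact Complex.norm_cpow_eq_rpow_re_of_pos h z
  · simp

lemma cp_add_one (z : ℂ) (t : ℝ) : cp (z + 1) t = cp z t * (max t 0 : ℝ) := by
  unfold cp
  split_ifs with h
  · rw [Complex.cpow_add _ _ (by exact_mod_cast h.ne'), Complex.cpow_one, max_eq_left h.le]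
  · simp

lemma cp_succ_mul (z : ℂ) (t : ℝ) : cp (z + 1) t = cp z t * t := by
  unfold cp
  split_ifs with h
  · rw [Complex.cpow_add _ _ (by exact_mod_cast h.ne'), Complex.cpow_one]
  · simp

lemma hasDerivAt_cp {z : ℂ} (hz : 0 < z.re) (t : ℝ) :
    HasDerivAt (cp (z + 1)) ((z + 1) * cp z t) t := by
  rcases lt_trichotomy t 0 with h | h | h
  · have h1 : cp (z + 1) =ᶠ[𝓝 t] fun _ => 0 := by
      filter_upwards [Iio_mem_nhds h] with s hs
      rw [cp, if_neg (not_lt.2 (le_of_lt hs))]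
    rw [cp, if_neg (not_lt.2 h.le), mul_zero]
    exact (hasDerivAt_const t (0 : ℂ)).congr_of_eventuallyEq h1
  · subst h
    rw [cp, if_neg (lt_irrefl _), mul_zero, hasDerivAt_iff_isLittleO_nhds_zero]
    have h0 : cp (z + 1) 0 = 0 := by simp [cp]
    simp only [zero_add, h0, sub_zero, smul_zero]
    refine Asymptotics.isLittleO_iff.2 fun c hc => ?_
    have h1 : Tendsto (fun s : ℝ => |s| ^ z.re) (𝓝 0) (𝓝 0) := by
      have : Continuous fun s : ℝ => |s| ^ z.re :=
        continuous_abs.rpow_const fun _ => Or.inr hz.le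
      simpa [Real.zero_rpow hz.ne'] using this.tendsto 0
    filter_upwards [h1.eventually_le_const hc] with s hs
    rw [norm_cp]
    split_ifs with h
    · rw [Complex.add_re, Complex.one_re, Real.rpow_add_one h.ne', Real.norm_of_nonneg h.le]
      rw [abs_of_pos h] at hs
      gcongr
    · positivity
  · have h1 : cp (z + 1) =ᶠ[𝓝 t] fun s : ℝ => (s : ℂ) ^ (z + 1) := by
      filter_upwards [Ioi_mem_nhds h] with s hs
      rw [cp, if_pos (show 0 < s from hs)]
    rw [cp, if_pos h]
    have h2 : z + 1 ≠ 0 := by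
      intro h3
      have := congrArg Complex.re h3
      simp at this; linarith
    have h4 := (Complex.hasStrictDerivAt_cpow_const (x := (t : ℂ)) (c := z + 1)
      (Or.inl (by simpa using h))).hasDerivAt.comp_ofReal
    simp only [add_sub_cancel_right] at h4
    exact h4.congr_of_eventuallyEq h1

lemma continuous_cp {z : ℂ} (hz : 0 < z.re) : Continuous (cp z) := by
  rw [continuous_iff_continuousAt]
  intro t
  rcases lt_trichotomy t 0 with h | h | h
  · have h1 : cp z =ᶠ[𝓝 t] fun _ => 0 := by
      filter_upwards [Iio_mem_nhds h] with s hs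
      rw [cp, if_neg (not_lt.2 (le_of_lt hs))]
    exact continuousAt_const.congr h1.symm
  · subst h
    have h0 : cp z 0 = 0 := by simp [cp]
    rw [ContinuousAt, h0, tendsto_zero_iff_norm_tendsto_zero]
    have h1 : Tendsto (fun s : ℝ => |s| ^ z.re) (𝓝 0) (𝓝 0) := by
      have : Continuous fun s : ℝ => |s| ^ z.re :=
        continuous_abs.rpow_const fun _ => Or.inr hz.le
      simpa [Real.zero_rpow hz.ne'] using this.tendsto 0
    refine squeeze_zero (fun _ => norm_nonneg _) (fun s => ?_) h1
    rw [norm_cp]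
    split_ifs with h
    · rw [abs_of_pos h]
    · positivity
  · have h1 : cp z =ᶠ[𝓝 t] fun s : ℝ => (s : ℂ) ^ z := by
      filter_upwards [Ioi_mem_nhds h] with s hs
      rw [cp, if_pos (show 0 < s from hs)]
    have h4 := (Complex.hasStrictDerivAt_cpow_const (x := (t : ℂ)) (c := z)
      (Or.inl (by simpa using h))).hasDerivAt.comp_ofReal
    exact h4.continuousAt.congr h1.symm

@[fun_prop]
lemma measurable_cp (z : ℂ) : Measurable (cp z) :=
  Measurable.ite measurableSet_Ioi (by fun_prop) measurable_const

/-- Integrals of complex powers are holomorphic in the exponent on the half-plane of absolute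
convergence. -/
lemma differentiableOn_cp_integral {X : Type*} [MeasurableSpace X] {μ : Measure X} {f : X → ℝ}
    (hf : Measurable f) {k : X → ℂ} (hk : AEStronglyMeasurable k μ) {C a : ℝ}
    (hC : ∀ x, k x ≠ 0 → f x ≤ C)
    (hItg : ∀ σ : ℝ, a < σ → Integrable (fun x => cp σ (f x) * k x) μ) :
    DifferentiableOn ℂ (fun z => ∫ x, cp z (f x) * k x ∂μ) {z | a < z.re} := by
  intro z₀ hz₀
  have hz₀ : a < z₀.re := hz₀
  set δ := (z₀.re - a) / 3 with hδ
  have hδ0 : 0 < δ := by rw [hδ]; linarith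
  have hmeas : ∀ z, AEStronglyMeasurable (fun x => cp z (f x) * k x) μ := fun z =>
    ((measurable_cp z).comp hf).aestronglyMeasurable.mul hk
  -- bound for `log t · t ^ (s - (z₀.re - 2 δ))` on `(0, C]`
  obtain ⟨K, hK⟩ : ∃ K : ℝ, ∀ t s : ℝ, 0 < t → t ≤ C → δ ≤ s → s ≤ 3 * δ →
      |Real.log t| * t ^ s ≤ K := by
    refine ⟨1 / δ + max C 1 ^ (1 + 3 * δ), fun t s ht htC hs1 hs2 => ?_⟩
    have hm : 0 ≤ max C 1 ^ (1 + 3 * δ) := by positivity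
    rcases le_total t 1 with h | h
    · have h1 : |Real.log t| * t ^ s ≤ |Real.log t| * t ^ δ :=
        mul_le_mul_of_nonneg_left (Real.rpow_le_rpow_of_exponent_ge ht h hs1) (abs_nonneg _)
      have h2 := Real.abs_log_mul_self_rpow_lt t δ ht h hδ0
      rw [abs_mul, abs_of_pos (Real.rpow_pos_of_pos ht δ)] at h2
      linarith
    · have h1 : |Real.log t| ≤ t := by
        rw [abs_of_nonneg (Real.log_nonneg h)]
        exact (Real.log_le_sub_one_of_pos ht).trans (by linarith)
      have h2 : |Real.log t| * t ^ s ≤ t * t ^ s := by gcongr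
      have h3 : t * t ^ s = t ^ (1 + s) := by rw [Real.rpow_add ht, Real.rpow_one]
      have h4 : t ^ (1 + s) ≤ max C 1 ^ (1 + s) :=
        Real.rpow_le_rpow ht.le (htC.trans (le_max_left _ _)) (by linarith)
      have h5 : max C 1 ^ (1 + s) ≤ max C 1 ^ (1 + 3 * δ) :=
        Real.rpow_le_rpow_of_exponent_le (le_max_right _ _) (by linarith)
      have : 0 ≤ 1 / δ := by positivity
      linarith
  have hσ : a < z₀.re - 2 * δ := by rw [hδ]; linarith
  have hkey := hasDerivAt_integral_of_dominated_loc_of_deriv_le (𝕜 := ℂ) (μ := μ)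
    (F := fun z x => cp z (f x) * k x)
    (F' := fun z x => (Real.log (f x) : ℂ) * cp z (f x) * k x) (x₀ := z₀)
    (s := Metric.ball z₀ δ)
    (bound := fun x => K * ‖cp ((z₀.re - 2 * δ : ℝ) : ℂ) (f x) * k x‖)
    (Metric.ball_mem_nhds _ hδ0)
    (Eventually.of_forall hmeas) ?_ ?_ ?_ ?_ ?_
  · exact hkey.2.differentiableAt.differentiableWithinAt
  · have h1 := hItg z₀.re hz₀
    refine h1.mono (hmeas _) (Eventually.of_forall fun x => ?_)
    rw [norm_mul, norm_mul, norm_cp, norm_cp]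
    simp
  · exact ((Complex.measurable_ofReal.comp (Real.measurable_log.comp hf)).mul
      ((measurable_cp z₀).comp hf)).aestronglyMeasurable.mul hk
  · refine Eventually.of_forall fun x z hz => ?_
    have hzre : |z.re - z₀.re| < δ := by
      have h1 := Complex.abs_re_le_norm (z - z₀)
      rw [Metric.mem_ball, dist_eq_norm] at hz
      simpa using h1.trans_lt hz
    rw [abs_lt] at hzre
    by_cases hx : k x = 0
    · simp [hx]
    rw [norm_mul, norm_mul, norm_mul, norm_cp, norm_cp, Complex.ofReal_re]
    split_ifs with h
    · have e : (f x) ^ z.re = (f x) ^ (z.re - (z₀.re - 2 * δ)) * (f x) ^ (z₀.re - 2 * δ) := by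
        rw [← Real.rpow_add h]; congr 1; ring
      rw [e, Complex.norm_real, Real.norm_eq_abs, ← mul_assoc, ← mul_assoc]
      have := hK (f x) (z.re - (z₀.re - 2 * δ)) h (hC x hx) (by linarith) (by linarith)
      gcongr
    · simp
  · exact (hItg _ hσ).norm.const_mul K
  · refine Eventually.of_forall fun x z _ => ?_
    refine HasDerivAt.mul_const ?_ _
    unfold cp
    split_ifs with h
    · have h1 := (hasDerivAt_id z).const_cpow (c := (f x : ℂ))
        (Or.inl (by exact_mod_cast h.ne'))
      rw [Complex.ofReal_log h.le]
      simpa [mul_comm] using h1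
    · simpa using hasDerivAt_const z (0 : ℂ)

end cpow

section ibp2

variable {n : ℕ}

lemma integral_lineDeriv_zero {f f' : (Fin n → ℝ) → ℂ} {v : Fin n → ℝ} (hf : Integrable f)
    (hf' : Integrable f') (h : ∀ x, HasLineDerivAt ℝ f (f' x) x v) : ∫ x, f' x = 0 := by
  have := integral_bilinear_hasLineDerivAt_right_eq_neg_left_of_integrable
    (μ := (volume : Measure (Fin n → ℝ))) (B := ContinuousLinearMap.mul ℝ ℂ)
    (f := f) (f' := f') (g := fun _ => 1) (g' := fun _ => 0) (v := v)
    (by simpa using hf') (by simp) (by simpa using hf) (fun x _ => h x)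
    (fun x _ => by
      simpa [HasLineDerivAt] using hasDerivAt_const (0 : ℝ) (1 : ℂ))
  simpa using this

lemma pd_hasLineDeriv {ψ : (Fin n → ℝ) → ℝ} (hψ : ContDiff ℝ (⊤ : ℕ∞) ψ) (i : Fin n)
    (u : Fin n → ℝ) : HasDerivAt (fun t : ℝ => ψ (u + t • Pi.single i 1)) (pd i ψ u) 0 :=
  (hψ.differentiable (by simp) u).hasFDerivAt.hasLineDerivAt (Pi.single i 1)

lemma Es_eq : (Es : (Fin n → ℝ) → ℝ) = fun u => Real.exp (dotR (fun _ => 1) u) := by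
  funext u; simp [Es, dotR]

lemma contDiff_Es : ContDiff ℝ (⊤ : ℕ∞) (Es : (Fin n → ℝ) → ℝ) := by
  rw [Es_eq]; exact contDiff_exp_dot _

lemma pd_Es (i : Fin n) (u : Fin n → ℝ) : pd i Es u = Es u := by
  rw [Es_eq, pd_exp_dot, one_mul]

lemma Mf_le {A : Finset (Fin n → ℕ)} {u : Fin n → ℝ} (hu : ∀ i, u i < 0) : Mf A u ≤ A.card := by
  have : Mf A u ≤ ∑ α ∈ A, (1 : ℝ) := Finset.sum_le_sum fun α _ => by
    rw [Real.exp_le_one_iff]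
    exact Finset.sum_nonpos fun i _ => mul_nonpos_of_nonneg_of_nonpos (Nat.cast_nonneg _) (hu i).le
  simpa using this

/-- The formal adjoint, with respect to the measure `e ^ {∑ u_i} du`, of the vector field
`∑ c_i ∂_i`, up to sign. -/
def Lop (S : Setup n) (ψ : (Fin n → ℝ) → ℝ) (u : Fin n → ℝ) : ℝ :=
  ∑ i, (pd i (fun u => S.c i u * ψ u) u + S.c i u * ψ u)

variable (S : Setup n)

/-- The operator `Lop` lowers the weight by one power of `M`. -/
lemma Lop_SS {w ψ : (Fin n → ℝ) → ℝ} (hψ : SS w ψ) :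
    SS (fun u => (Mf S.A u)⁻¹ * w u) (Lop S ψ) :=
  SS.sum _ fun i _ =>
    have h := (S.c_SS i).mul (fun u => (inv_pos.2 (Mf_pos S.hA u)).le) hψ
    (h.pd i).add h

lemma Lop_VB {ψ : (Fin n → ℝ) → ℝ} (hψ : VB S.r ψ) : VB S.r (Lop S ψ) := by
  intro u hu
  refine Finset.sum_eq_zero fun i _ => ?_
  rw [(hψ.mul_left (S.c i)).pd i u hu, hψ u hu]; simp

/-- Integration by parts along the vector field `∑ c_i ∂_i`. -/
lemma ibp {H H' : ℝ → ℂ} (hH : ∀ t, HasDerivAt H (H' t) t) (hH' : Continuous H') (hH0 : H 0 = 0)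
    {w ψ : (Fin n → ℝ) → ℝ} (hψ : SS w ψ) {C : ℝ}
    (hwC : ∀ u, (∀ i, u i < 0) → w u ≤ C) (hw : ∀ u, 0 ≤ w u) (hVB : VB S.r ψ) :
    ∫ u, Es u • (H' (Fl S.A S.g u) * (ψ u : ℂ)) =
      -∫ u, Es u • (H (Fl S.A S.g u) * (Lop S ψ u : ℂ)) := by
  set F := Fl S.A S.g with hF
  have hM := fun u => Mf_pos S.hA u
  have hFS : SS (Mf S.A) F := Fl_SS S.hg S.hgc
  have hHc : Continuous H := continuous_iff_continuousAt.2 fun t => (hH t).continuousAt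
  obtain ⟨C₁, hC₁⟩ := (hFS.2 0).zero
  set C₂ := |C₁| * S.A.card with hC₂
  have hFM : ∀ u, (∀ i, u i < 0) → |F u| ≤ |C₁| * Mf S.A u := fun u hu =>
    (hC₁ u hu).trans (mul_le_mul_of_nonneg_right (le_abs_self _) (hM u).le)
  have hFC : ∀ u, (∀ i, u i < 0) → |F u| ≤ C₂ := fun u hu =>
    (hFM u hu).trans (mul_le_mul_of_nonneg_left (Mf_le hu) (abs_nonneg _))
  obtain ⟨K, hK⟩ := (isCompact_Icc (a := -C₂) (b := C₂)).exists_bound_of_continuousOn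
    hH'.continuousOn
  have hK1 : ∀ u, (∀ i, u i < 0) → ‖H' (F u)‖ ≤ |K| := fun u hu =>
    (hK _ (abs_le.1 (hFC u hu))).trans (le_abs_self K)
  have hK2 : ∀ u, (∀ i, u i < 0) → ‖H (F u)‖ ≤ |K| * |F u| := by
    intro u hu
    have hC0 : 0 ≤ C₂ := (abs_nonneg _).trans (hFC u hu)
    have := (convex_Icc (-C₂) C₂).norm_image_sub_le_of_norm_hasDerivWithin_le (f := H) (f' := H')
      (C := |K|) (x := 0) (y := F u) (fun t _ => (hH t).hasDerivWithinAt)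
      (fun t ht => (hK t ht).trans (le_abs_self K)) ⟨by linarith, hC0⟩ (abs_le.1 (hFC u hu))
    simpa [hH0] using this
  -- weights `M⁻¹ w` are compensated by the factor `H(F) = O(M)`
  have hbd : ∀ η, SS (fun u => (Mf S.A u)⁻¹ * w u) η → ∃ D, ∀ u, (∀ i, u i < 0) →
      ‖H (F u) * (η u : ℂ)‖ ≤ D := by
    intro η hη
    obtain ⟨D, hD⟩ := (hη.2 0).zero
    refine ⟨|K| * |C₁| * |D| * C, fun u hu => ?_⟩
    rw [norm_mul, Complex.norm_real, Real.norm_eq_abs]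
    have h1 : |η u| ≤ |D| * ((Mf S.A u)⁻¹ * w u) := (hD u hu).trans (by
      gcongr
      · exact mul_nonneg (inv_pos.2 (hM u)).le (hw u)
      · exact le_abs_self D)
    calc ‖H (F u)‖ * |η u| ≤ (|K| * (|C₁| * Mf S.A u)) * (|D| * ((Mf S.A u)⁻¹ * w u)) := by
          refine mul_le_mul ((hK2 u hu).trans ?_) h1 (abs_nonneg _) (by have := hM u; positivity)
          gcongr
          exact hFM u hu
      _ = |K| * |C₁| * |D| * w u := by field_simp [(hM u).ne']
      _ ≤ _ := by gcongr; exact hwC u hu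
  have hbd' : ∀ η, SS w η → ∃ D, ∀ u, (∀ i, u i < 0) → ‖H' (F u) * (η u : ℂ)‖ ≤ D := by
    intro η hη
    obtain ⟨D, hD⟩ := (hη.2 0).zero
    refine ⟨|K| * (|D| * C), fun u hu => ?_⟩
    rw [norm_mul, Complex.norm_real, Real.norm_eq_abs]
    refine mul_le_mul (hK1 u hu) ((hD u hu).trans ?_) (abs_nonneg _) (abs_nonneg _)
    calc D * w u ≤ |D| * w u := mul_le_mul_of_nonneg_right (le_abs_self D) (hw u)
      _ ≤ _ := by gcongr; exact hwC u hu
  have hItg : ∀ η, SS (fun u => (Mf S.A u)⁻¹ * w u) η → VB S.r η →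
      Integrable fun u => Es u • (H (F u) * (η u : ℂ)) := by
    intro η hη hη'
    obtain ⟨D, hD⟩ := hbd η hη
    refine integrable_box S.r_lt (k := fun u => H (F u) * (η u : ℂ))
      ((hHc.comp hFS.1.continuous).mul
        (Complex.continuous_ofReal.comp hη.1.continuous)).aestronglyMeasurable
      (fun u hu => hD u (VB.neg_orthant S.r_lt hu)) fun u hu => ?_
    simp [hη' u hu]
  have hItg' : ∀ η, SS w η → VB S.r η →
      Integrable fun u => Es u • (H' (F u) * (η u : ℂ)) := by
    intro η hη hη'
    obtain ⟨D, hD⟩ := hbd' η hη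
    refine integrable_box S.r_lt (k := fun u => H' (F u) * (η u : ℂ))
      ((hH'.comp hFS.1.continuous).mul
        (Complex.continuous_ofReal.comp hη.1.continuous)).aestronglyMeasurable
      (fun u hu => hD u (VB.neg_orthant S.r_lt hu)) fun u hu => ?_
    simp [hη' u hu]
  have hcψ : ∀ i, SS (fun u => (Mf S.A u)⁻¹ * w u) fun u => S.c i u * ψ u := fun i =>
    (S.c_SS i).mul (fun u => (inv_pos.2 (hM u)).le) hψ
  have hcF : ∀ i, SS w fun u => pd i F u * (S.c i u * ψ u) := fun i =>
    ((hFS.pd i).mul (fun u => (hM u).le) (hcψ i)).mono 1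
      (fun u _ => le_of_eq (by field_simp [(hM u).ne']))
      (fun u => mul_nonneg (hM u).le (mul_nonneg (inv_pos.2 (hM u)).le (hw u)))
  have hstep : ∀ i, ∫ u, (Es u • (H' (F u) * ((pd i F u * (S.c i u * ψ u) : ℝ) : ℂ)) +
      Es u • (H (F u) *
        ((pd i (fun u => S.c i u * ψ u) u + S.c i u * ψ u : ℝ) : ℂ))) = 0 := by
    intro i
    refine integral_lineDeriv_zero (f := fun u => Es u • (H (F u) * ((S.c i u * ψ u : ℝ) : ℂ)))
      (v := Pi.single i 1) (hItg _ (hcψ i) (hVB.mul_left _)) ?_ fun u => ?_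
    · exact (hItg' _ (hcF i) ((hVB.mul_left _).mul_left _)).add (hItg _ (((hcψ i).pd i).add (hcψ i))
        (fun u hu => by rw [(hVB.mul_left (S.c i)).pd i u hu, hVB u hu]; simp))
    · have h1 := pd_hasLineDeriv contDiff_Es i u
      have h2 := pd_hasLineDeriv hFS.1 i u
      have h3 := (pd_hasLineDeriv (hcψ i).1 i u).ofReal_comp
      have h4 : HasDerivAt (fun t : ℝ => H (F (u + t • Pi.single i 1)))
          (pd i F u • H' (F u)) 0 := by
        refine HasDerivAt.scomp (h := fun t : ℝ => F (u + t • Pi.single i 1)) (g₁ := H) 0 ?_ h2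
        simpa using hH (F u)
      have h5 := h1.smul (h4.mul h3)
      rw [pd_Es] at h5
      refine h5.congr_deriv ?_
      simp only [Pi.mul_apply, zero_smul, add_zero, Complex.real_smul]
      push_cast
      ring
  have hsum : ∫ u, (Es u • (H' (F u) * (ψ u : ℂ)) + Es u • (H (F u) * (Lop S ψ u : ℂ))) = 0 := by
    have : ∀ u, Es u • (H' (F u) * (ψ u : ℂ)) + Es u • (H (F u) * (Lop S ψ u : ℂ)) =
        ∑ i, (Es u • (H' (F u) * ((pd i F u * (S.c i u * ψ u) : ℝ) : ℂ)) +
          Es u • (H (F u) *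
            ((pd i (fun u => S.c i u * ψ u) u + S.c i u * ψ u : ℝ) : ℂ))) := by
      intro u
      have hψ1 : ψ u = ∑ i, pd i F u * (S.c i u * ψ u) := by
        by_cases hu : ∀ i, Real.exp (u i) ≤ S.r
        · have := S.c_one u hu
          calc ψ u = (∑ i, S.c i u * pd i (Fl S.A S.g) u) * ψ u := by rw [this, one_mul]
            _ = _ := by
              rw [Finset.sum_mul]; exact Finset.sum_congr rfl fun i _ => by rw [hF]; ring
        · simp [hVB u hu]
      rw [Finset.sum_add_distrib, ← Finset.smul_sum, ← Finset.smul_sum, ← Finset.mul_sum,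
        ← Finset.mul_sum, ← Complex.ofReal_sum, ← Complex.ofReal_sum, ← hψ1]
      rfl
    simp_rw [this]
    rw [integral_finsetSum]
    · exact Finset.sum_eq_zero fun i _ => hstep i
    · intro i _
      exact (hItg' _ (hcF i) ((hVB.mul_left _).mul_left _)).add (hItg _ (((hcψ i).pd i).add (hcψ i))
        (fun u hu => by rw [(hVB.mul_left (S.c i)).pd i u hu, hVB u hu]; simp))
  rw [integral_add (hItg' _ hψ hVB) (hItg _ (Lop_SS S hψ) (Lop_VB S hVB))] at hsum
  exact eq_neg_of_add_eq_zero_left hsum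

end ibp2

/-! ### The integrals `J` and continuation up to polynomial factors -/

section Jsec

variable {n : ℕ} (S : Setup n)

/-- The integral `∫ F_+ ^ z ψ e ^ {∑ u_i} du` in logarithmic coordinates. -/
def J (z : ℂ) (ψ : (Fin n → ℝ) → ℝ) : ℂ :=
  ∫ u, Es u • (cp z (Fl S.A S.g u) * (ψ u : ℂ))

lemma Setup.Fl_bound : ∃ C, ∀ u : Fin n → ℝ, (∀ i, u i < 0) → |Fl S.A S.g u| ≤ C := by
  obtain ⟨C₁, hC₁⟩ := ((Fl_SS (A := S.A) S.hg S.hgc).2 0).zero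
  exact ⟨|C₁| * S.A.card, fun u hu => (hC₁ u hu).trans
    ((mul_le_mul_of_nonneg_right (le_abs_self _) (Mf_pos S.hA u).le).trans
      (mul_le_mul_of_nonneg_left (Mf_le hu) (abs_nonneg _)))⟩

lemma SS.bound {ψ : (Fin n → ℝ) → ℝ} (h : SS (fun _ => 1) ψ) :
    ∃ C, ∀ u, (∀ i, u i < 0) → |ψ u| ≤ C := by
  obtain ⟨C, hC⟩ := (h.2 0).zero
  exact ⟨C, fun u hu => by simpa using hC u hu⟩

lemma J_integrable {z : ℂ} (hz : 0 < z.re) {ψ : (Fin n → ℝ) → ℝ} (h : SS (fun _ => 1) ψ)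
    (hV : VB S.r ψ) : Integrable fun u => Es u • (cp z (Fl S.A S.g u) * (ψ u : ℂ)) := by
  obtain ⟨C₁, h₁⟩ := S.Fl_bound
  obtain ⟨C₂, h₂⟩ := h.bound
  obtain ⟨K, hK⟩ := (isCompact_Icc (a := -C₁) (b := C₁)).exists_bound_of_continuousOn
    (continuous_cp hz).continuousOn
  refine integrable_box S.r_lt (k := fun u => cp z (Fl S.A S.g u) * (ψ u : ℂ)) (C := |K| * |C₂|)
    (((continuous_cp hz).comp (contDiff_Fl S.A S.hg).continuous).mul
      (Complex.continuous_ofReal.comp h.1.continuous)).aestronglyMeasurable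
    (fun u hu => ?_) fun u hu => by simp [hV u hu]
  have hu := VB.neg_orthant S.r_lt hu
  rw [norm_mul, Complex.norm_real, Real.norm_eq_abs]
  exact mul_le_mul ((hK _ (abs_le.1 (h₁ u hu))).trans (le_abs_self _))
    ((h₂ u hu).trans (le_abs_self _)) (abs_nonneg _) (abs_nonneg _)

lemma J_const_mul (z : ℂ) (c : ℝ) (ψ : (Fin n → ℝ) → ℝ) :
    J S z (fun u => c * ψ u) = c * J S z ψ := by
  unfold J
  rw [← integral_const_mul]
  congr 1; funext u
  simp only [Complex.real_smul]; push_cast; ring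

lemma J_sum {z : ℂ} (hz : 0 < z.re) {ι : Type*} (s : Finset ι) {ψ : ι → (Fin n → ℝ) → ℝ}
    (h : ∀ j ∈ s, SS (fun _ => 1) (ψ j)) (hV : ∀ j ∈ s, VB S.r (ψ j)) :
    J S z (fun u => ∑ j ∈ s, ψ j u) = ∑ j ∈ s, J S z (ψ j) := by
  unfold J
  rw [← integral_finsetSum _ fun j hj => J_integrable S hz (h j hj) (hV j hj)]
  congr 1; funext u
  push_cast
  rw [Finset.mul_sum, Finset.smul_sum]

lemma J_add {z : ℂ} (hz : 0 < z.re) {ψ η : (Fin n → ℝ) → ℝ}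
    (h : SS (fun _ => 1) ψ) (h' : SS (fun _ => 1) η) (hV : VB S.r ψ) (hV' : VB S.r η) :
    J S z (fun u => ψ u + η u) = J S z ψ + J S z η := by
  unfold J
  rw [← integral_add (J_integrable S hz h hV) (J_integrable S hz h' hV')]
  congr 1; funext u
  push_cast
  rw [mul_add, smul_add]

lemma J_mul_F (z : ℂ) (ψ : (Fin n → ℝ) → ℝ) :
    J S z (fun u => Fl S.A S.g u * ψ u) = J S (z + 1) ψ := by
  unfold J
  congr 1; funext u
  rw [cp_succ_mul]; push_cast; ring_nf

/-- The hypothesis `0 ≤ t` keeps the weight `M ^ t` bounded; one integration by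
parts costs one power of `M`. -/
lemma J_step {t : ℝ} (ht : 0 ≤ t) {ψ : (Fin n → ℝ) → ℝ} (h : SS (fun u => Mf S.A u ^ t) ψ)
    (hV : VB S.r ψ) {z : ℂ} (hz : 0 < z.re) :
    (z + 1) * J S z ψ = J S (z + 1) (fun u => -1 * Lop S ψ u) := by
  have hH0 : cp (z + 1) 0 = 0 := by simp [cp]
  have := ibp S (H := cp (z + 1)) (H' := fun t => (z + 1) * cp z t) (hasDerivAt_cp hz)
    ((continuous_const).mul (continuous_cp hz)) hH0 h (C := (S.A.card : ℝ) ^ t)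
    (fun u hu => Real.rpow_le_rpow (Mf_pos S.hA u).le (Mf_le hu) ht)
    (fun u => Real.rpow_nonneg (Mf_pos S.hA u).le _) hV
  rw [J_const_mul]
  unfold J
  push_cast
  rw [neg_one_mul, ← this, ← integral_const_mul]
  congr 1; funext u
  simp only [Complex.real_smul]; ring

/-- The `m`-fold iteration of `J_step`. -/
lemma J_iter (m : ℕ) : ∀ (t : ℝ), (m : ℝ) ≤ t → ∀ ψ : (Fin n → ℝ) → ℝ,
    SS (fun u => Mf S.A u ^ t) ψ → VB S.r ψ →
    ∃ ψ', SS (fun u => Mf S.A u ^ (t - m)) ψ' ∧ VB S.r ψ' ∧ ∀ z : ℂ, 0 < z.re →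
      (∏ l ∈ Finset.range m, (z + (l + 1))) * J S z ψ = J S (z + m) ψ' := by
  induction m with
  | zero => intro t _ ψ h hV; exact ⟨ψ, by simpa using h, hV, fun z _ => by simp⟩
  | succ m ih =>
    intro t ht ψ h hV
    push_cast at ht
    have hL : SS (fun u => Mf S.A u ^ (t - 1)) (fun u => -1 * Lop S ψ u) := by
      refine ((Lop_SS S h).const_mul (-1)).mono 1 (fun u _ => ?_) fun u => ?_
      · rw [one_mul, Real.rpow_sub_one (Mf_pos S.hA u).ne', div_eq_mul_inv, mul_comm]
      · have := Mf_pos S.hA u; positivity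
    obtain ⟨ψ', h1, h2, h3⟩ := ih (t - 1) (by linarith) _ hL ((Lop_VB S hV).mul_left fun _ => -1)
    refine ⟨ψ', by convert h1 using 3; push_cast; ring, h2, fun z hz => ?_⟩
    have h4 := h3 (z + 1) (by simp; linarith)
    rw [Finset.prod_range_succ', show z + ((m + 1 : ℕ) : ℂ) = z + 1 + m by push_cast; ring, ← h4,
      ← J_step S (by have : (0:ℝ) ≤ m := m.cast_nonneg
                     linarith) h hV hz]
    simp only [Nat.cast_add, Nat.cast_zero, zero_add, Nat.cast_one]
    have : ∀ l : ℕ, z + ((l : ℂ) + 1 + 1) = z + 1 + (l + 1) := fun l => by ring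
    simp_rw [this]
    ring

/-- Integration by parts in one coordinate direction. -/
lemma J_dir {z : ℂ} (hz : 0 < z.re) {ψ : (Fin n → ℝ) → ℝ} (h : SS (fun _ => 1) ψ)
    (hV : VB S.r ψ) (i : Fin n) :
    J S (z + 1) (fun u => pd i ψ u + ψ u) + (z + 1) * J S z (fun u => pd i (Fl S.A S.g) u * ψ u)
      = 0 := by
  have hz1 : 0 < (z + 1).re := by simp; linarith
  have hF1 : SS (fun _ => 1) (Fl S.A S.g) := (Fl_SS S.hg S.hgc).mono S.A.card
    (fun u hu => by rw [mul_one]; exact Mf_le hu) fun u => (Mf_pos S.hA u).le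
  have hFψ : SS (fun _ => 1) fun u => pd i (Fl S.A S.g) u * ψ u := by
    simpa using (hF1.pd i).mul (fun _ => zero_le_one) h
  have i1 := J_integrable S hz1 ((h.pd i).add h) (fun u hu => by rw [hV.pd i u hu, hV u hu]; simp)
  have i2 := J_integrable S hz hFψ (hV.mul_left _)
  have := integral_lineDeriv_zero
    (f := fun u => Es u • (cp (z + 1) (Fl S.A S.g u) * ((ψ u : ℝ) : ℂ)))
    (f' := fun u => Es u • (cp (z + 1) (Fl S.A S.g u) * ((pd i ψ u + ψ u : ℝ) : ℂ)) +
      (z + 1) * (Es u • (cp z (Fl S.A S.g u) * ((pd i (Fl S.A S.g) u * ψ u : ℝ) : ℂ))))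
    (v := Pi.single i 1) (J_integrable S hz1 h hV) (i1.add (i2.const_mul _)) fun u => ?_
  · rw [integral_add i1 (i2.const_mul _), integral_const_mul] at this
    exact this
  · have h1 := pd_hasLineDeriv contDiff_Es i u
    have h2 := pd_hasLineDeriv (contDiff_Fl S.A S.hg) i u
    have h3 := (pd_hasLineDeriv h.1 i u).ofReal_comp
    have h4 : HasDerivAt (fun t : ℝ => cp (z + 1) (Fl S.A S.g (u + t • Pi.single i 1)))
        (pd i (Fl S.A S.g) u • ((z + 1) * cp z (Fl S.A S.g u))) 0 := by
      refine HasDerivAt.scomp (h := fun t : ℝ => Fl S.A S.g (u + t • Pi.single i 1))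
        (g₁ := cp (z + 1)) 0 ?_ h2
      simpa using hasDerivAt_cp hz (Fl S.A S.g u)
    have h5 := h1.smul (h4.mul h3)
    rw [pd_Es] at h5
    refine h5.congr_deriv ?_
    simp only [Pi.mul_apply, zero_smul, add_zero, Complex.real_smul]
    push_cast
    ring

end Jsec

/-- `J` continues, up to a polynomial factor, to the half-plane `-K < Re s`. -/
def PolyCont (K : ℝ) (J : ℂ → ℂ) : Prop :=
  ∃ P : Polynomial ℂ, P ≠ 0 ∧ ∃ E : ℂ → ℂ, DifferentiableOn ℂ E {s | -K < s.re} ∧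
    ∃ R : ℝ, ∀ s : ℂ, R < s.re → P.eval s * J s = E s

section cont

variable {K : ℝ}

lemma PolyCont.congr {J J' : ℂ → ℂ} (h : PolyCont K J) {R : ℝ} (hJ : ∀ s : ℂ, R < s.re → J' s = J s) :
    PolyCont K J' := by
  obtain ⟨P, hP, E, hE, R', h⟩ := h
  refine ⟨P, hP, E, hE, max R R', fun s hs => ?_⟩
  rw [hJ s (lt_of_le_of_lt (le_max_left _ _) hs), h s (lt_of_le_of_lt (le_max_right _ _) hs)]

lemma PolyCont.add {J J' : ℂ → ℂ} (h : PolyCont K J) (h' : PolyCont K J') : PolyCont K fun s => J s + J' s := by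
  obtain ⟨P, hP, E, hE, R, h⟩ := h
  obtain ⟨P', hP', E', hE', R', h'⟩ := h'
  refine ⟨P * P', mul_ne_zero hP hP', fun s => P'.eval s * E s + P.eval s * E' s,
    (P'.differentiable.differentiableOn.mul hE).add (P.differentiable.differentiableOn.mul hE'),
    max R R', fun s hs => ?_⟩
  beta_reduce
  rw [← h s (lt_of_le_of_lt (le_max_left _ _) hs), ← h' s (lt_of_le_of_lt (le_max_right _ _) hs),
    Polynomial.eval_mul]
  ring

lemma PolyCont.poly_mul {J : ℂ → ℂ} (h : PolyCont K J) (Q : Polynomial ℂ) :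
    PolyCont K fun s => Q.eval s * J s := by
  obtain ⟨P, hP, E, hE, R, h⟩ := h
  refine ⟨P, hP, fun s => Q.eval s * E s, Q.differentiable.differentiableOn.mul hE, R,
    fun s hs => ?_⟩
  beta_reduce
  rw [← h s hs]; ring

lemma PolyCont.const_mul {J : ℂ → ℂ} (h : PolyCont K J) (c : ℂ) : PolyCont K fun s => c * J s := by
  simpa using h.poly_mul (Polynomial.C c)

/-- Dividing by a polynomial does not destroy the property: it is absorbed in the factor. -/
lemma PolyCont.div {J : ℂ → ℂ} {Q : Polynomial ℂ} (hQ : Q ≠ 0) (h : PolyCont K fun s => Q.eval s * J s) :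
    PolyCont K J := by
  obtain ⟨P, hP, E, hE, R, h⟩ := h
  refine ⟨P * Q, mul_ne_zero hP hQ, E, hE, R, fun s hs => ?_⟩
  rw [← h s hs, Polynomial.eval_mul]; ring

lemma PolyCont.zero : PolyCont K fun _ => 0 :=
  ⟨1, one_ne_zero, fun _ => 0, differentiableOn_const _, 0, fun s _ => by simp⟩

lemma PolyCont.sum {ι : Type*} (s : Finset ι) {J : ι → ℂ → ℂ} (h : ∀ j ∈ s, PolyCont K (J j)) :
    PolyCont K fun z => ∑ j ∈ s, J j z := by
  induction s using Finset.induction_on with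
  | empty => simpa using PolyCont.zero
  | insert j s hj ih =>
    simp_rw [Finset.sum_insert hj]
    exact (h j (Finset.mem_insert_self _ _)).add
      (ih fun i hi => h i (Finset.mem_insert_of_mem hi))

end cont

/-! ### Monomial amplitudes and Euler identities -/

section monint

variable {n : ℕ} (S : Setup n)

/-- Smooth amplitudes supported in the box of the setup. -/
structure Amp (h : (Fin n → ℝ) → ℝ) : Prop where
  smooth : ContDiff ℝ (⊤ : ℕ∞) h
  compact : HasCompactSupport h
  box : VB S.r fun u => h (ex u)

/-- The integrand `x ^ β h(x)` in logarithmic coordinates. -/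
def mh (β : Fin n → ℕ) (h : (Fin n → ℝ) → ℝ) (u : Fin n → ℝ) : ℝ :=
  Real.exp (dotR (cv β) u) * h (ex u)

variable {S}

lemma pd_hasCompactSupport {h : (Fin n → ℝ) → ℝ} (hc : HasCompactSupport h) (i : Fin n) :
    HasCompactSupport (pd i h) := hc.fderiv_apply (𝕜 := ℝ) _

lemma Amp.pd {h : (Fin n → ℝ) → ℝ} (H : Amp S h) (i : Fin n) : Amp S (pd i h) := by
  refine ⟨contDiff_pd H.smooth i, pd_hasCompactSupport H.compact i, fun u hu => ?_⟩
  have := H.box.pd i u hu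
  rw [pd_comp_ex H.smooth] at this
  exact (mul_eq_zero.1 this).resolve_left (Real.exp_ne_zero _)

lemma Amp.mul {h : (Fin n → ℝ) → ℝ} (H : Amp S h) {k : (Fin n → ℝ) → ℝ}
    (hk : ContDiff ℝ (⊤ : ℕ∞) k) : Amp S fun x => k x * h x :=
  ⟨hk.mul H.smooth, H.compact.mul_left, H.box.mul_left _⟩

lemma mh_VB {h : (Fin n → ℝ) → ℝ} (H : Amp S h) (β : Fin n → ℕ) : VB S.r (mh β h) :=
  H.box.mul_left _

lemma mh_SS {h : (Fin n → ℝ) → ℝ} (H : Amp S h) (β : Fin n → ℕ) {w : (Fin n → ℝ) → ℝ}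
    (hw : ∀ u : Fin n → ℝ, (∀ i, u i < 0) → Real.exp (dotR (cv β) u) ≤ w u) : SS w (mh β h) :=
  ((SS.exp_dot (cv β)).mul (fun _ => (Real.exp_pos _).le) (SS.comp_ex H.smooth H.compact)).mono 1
    (fun u hu => by rw [mul_one, one_mul]; exact hw u hu) fun u => by positivity

lemma mh_SS_one {h : (Fin n → ℝ) → ℝ} (H : Amp S h) (β : Fin n → ℕ) :
    SS (fun _ => 1) (mh β h) :=
  mh_SS H β fun u hu => by
    rw [Real.exp_le_one_iff]
    exact Finset.sum_nonpos fun i _ => mul_nonpos_of_nonneg_of_nonpos (Nat.cast_nonneg _) (hu i).le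

lemma cv_add (α β : Fin n → ℕ) : cv (α + β) = cv α + cv β := by
  funext i; simp [cv]

lemma cv_single (i : Fin n) : cv (Pi.single i 1) = Pi.single i 1 := by
  funext j
  by_cases h : j = i
  · subst h; simp [cv]
  · simp [cv, h]

lemma mh_add (α β : Fin n → ℕ) (k h : (Fin n → ℝ) → ℝ) (u : Fin n → ℝ) :
    mh (β + α) (fun x => k x * h x) u = Real.exp (dotR (cv α) u) * k (ex u) * mh β h u := by
  simp only [mh, cv_add, dotR_add_left, Real.exp_add]; ring

lemma exp_single (i : Fin n) (u : Fin n → ℝ) :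
    Real.exp (dotR (cv (Pi.single i 1)) u) = Real.exp (u i) := by
  rw [cv_single, dotR_single_left]

lemma pd_mh {h : (Fin n → ℝ) → ℝ} (H : Amp S h) (β : Fin n → ℕ) (i : Fin n) (u : Fin n → ℝ) :
    pd i (mh β h) u = (β i : ℝ) * mh β h u + mh (β + Pi.single i 1) (pd i h) u := by
  unfold mh
  rw [pd_mul (contDiff_exp_dot _) (contDiff_comp_ex H.smooth), pd_exp_dot, pd_comp_ex H.smooth,
    cv_add, dotR_add_left, Real.exp_add, exp_single]
  simp only [cv]; ring

/-- The Euler identity for the vector field `∑ w_i ∂_i`, separating the leading weight `N`. -/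
lemma euler_Fl (w : Fin n → ℝ) (N : ℝ) (u : Fin n → ℝ) (β : Fin n → ℕ) (h : (Fin n → ℝ) → ℝ) :
    ∑ i, w i * (pd i (Fl S.A S.g) u * mh β h u) = N * (Fl S.A S.g u * mh β h u) +
      ∑ α ∈ S.A, ((dotR w (cv α) - N) * mh (β + α) (fun x => S.g α x * h x) u +
        ∑ i, w i * mh (β + α + Pi.single i 1) (fun x => pd i (S.g α) x * h x) u) := by
  have h1 : ∀ α : Fin n → ℕ, ∀ i, mh (β + α + Pi.single i 1) (fun x => pd i (S.g α) x * h x) u =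
      Real.exp (dotR (cv α) u) * (Real.exp (u i) * pd i (S.g α) (ex u)) * mh β h u := by
    intro α i
    rw [add_assoc, mh_add, cv_add, dotR_add_left, Real.exp_add, exp_single]; ring
  simp only [h1, mh_add, pd_Fl S.A S.hg, Fl, Finset.sum_mul, Finset.mul_sum]
  rw [Finset.sum_comm, ← Finset.sum_add_distrib]
  refine Finset.sum_congr rfl fun α _ => ?_
  have h2 : ∀ (e g M : ℝ) (E p : Fin n → ℝ), ∑ i, w i * (e * ((α i : ℝ) * g + E i * p i) * M) =
      dotR w (cv α) * (e * g * M) + ∑ i, w i * (e * (E i * p i) * M) := by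
    intro e g M E p
    rw [dotR, Finset.sum_mul, ← Finset.sum_add_distrib]
    exact Finset.sum_congr rfl fun i _ => by rw [cv]; ring
  rw [h2]; ring

/-- Integration by parts along a constant vector field `w` in logarithmic coordinates. -/
lemma J_euler {h : (Fin n → ℝ) → ℝ} (H : Amp S h) (β : Fin n → ℕ) (w : Fin n → ℝ) (N : ℝ)
    {z : ℂ} (hz : 0 < z.re) :
    ((z + 1) * N + dotR w (cv β) + ∑ i, w i : ℂ) * J S (z + 1) (mh β h) =
      -((∑ i, w i * J S (z + 1) (mh (β + Pi.single i 1) (pd i h))) + (z + 1) * ∑ α ∈ S.A,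
        ((dotR w (cv α) - N) * J S z (mh (β + α) fun x => S.g α x * h x) +
          ∑ i, w i * J S z (mh (β + α + Pi.single i 1) fun x => pd i (S.g α) x * h x))) := by
  have hz1 : 0 < (z + 1).re := by simp; linarith
  have hF1 : SS (fun _ => 1) (Fl S.A S.g) := (Fl_SS S.hg S.hgc).mono S.A.card
    (fun u hu => by rw [mul_one]; exact Mf_le hu) fun u => (Mf_pos S.hA u).le
  have hm := mh_SS_one H β
  have hv := mh_VB H β
  have hFψ : ∀ i, SS (fun _ => 1) fun u => pd i (Fl S.A S.g) u * mh β h u := fun i => by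
    simpa using (hF1.pd i).mul (fun _ => zero_le_one) hm
  have hFm : SS (fun _ => 1) fun u => Fl S.A S.g u * mh β h u := by
    simpa using hF1.mul (fun _ => zero_le_one) hm
  have hα : ∀ α, Amp S fun x => S.g α x * h x := fun α => H.mul (S.hg α)
  have hαi : ∀ α i, Amp S fun x => pd i (S.g α) x * h x := fun α i => H.mul (contDiff_pd (S.hg α) i)
  have hsum : ∑ i, (w i : ℂ) * (J S (z + 1) (fun u => pd i (mh β h) u + mh β h u) +
      (z + 1) * J S z (fun u => pd i (Fl S.A S.g) u * mh β h u)) = 0 :=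
    Finset.sum_eq_zero fun i _ => by rw [J_dir S hz hm hv i, mul_zero]
  have h1 : ∀ i, J S (z + 1) (fun u => pd i (mh β h) u + mh β h u) =
      ((β i : ℝ) + 1) * J S (z + 1) (mh β h) + J S (z + 1) (mh (β + Pi.single i 1) (pd i h)) := by
    intro i
    have e : (fun u => pd i (mh β h) u + mh β h u) = fun u =>
        ((β i : ℝ) + 1) * mh β h u + mh (β + Pi.single i 1) (pd i h) u := by
      funext u; rw [pd_mh H]; ring
    rw [e, J_add S hz1 (hm.const_mul _) (mh_SS_one (H.pd i) _) (hv.mul_left _)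
      (mh_VB (H.pd i) _), J_const_mul]
    push_cast; rfl
  have h2 : ∑ i, (w i : ℂ) * J S z (fun u => pd i (Fl S.A S.g) u * mh β h u) =
      N * J S (z + 1) (mh β h) + ∑ α ∈ S.A,
        ((dotR w (cv α) - N) * J S z (mh (β + α) fun x => S.g α x * h x) +
          ∑ i, w i * J S z (mh (β + α + Pi.single i 1) fun x => pd i (S.g α) x * h x)) := by
    have e := J_sum S hz Finset.univ (ψ := fun i u => w i * (pd i (Fl S.A S.g) u * mh β h u))
      (fun i _ => (hFψ i).const_mul _) fun i _ => (hv.mul_left _).mul_left _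
    simp only [J_const_mul] at e
    have t1 : ∀ α ∈ S.A, ∀ i ∈ Finset.univ, SS (fun _ => 1)
        (fun u => w i * mh (β + α + Pi.single i 1) (fun x => pd i (S.g α) x * h x) u) :=
      fun α _ i _ => (mh_SS_one (hαi α i) _).const_mul _
    have t2 : ∀ α ∈ S.A, ∀ i ∈ Finset.univ, VB S.r
        (fun u => w i * mh (β + α + Pi.single i 1) (fun x => pd i (S.g α) x * h x) u) :=
      fun α _ i _ => (mh_VB (hαi α i) _).mul_left _
    have t3 : ∀ α ∈ S.A, VB S.r
        (fun u => ∑ i, w i * mh (β + α + Pi.single i 1) (fun x => pd i (S.g α) x * h x) u) :=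
      fun α hα u hu => Finset.sum_eq_zero fun i hi => t2 α hα i hi u hu
    have t4 : ∀ α ∈ S.A, VB S.r (fun u => (dotR w (cv α) - N) *
        mh (β + α) (fun x => S.g α x * h x) u) := fun α _ => (mh_VB (hα α) _).mul_left _
    have t5 : ∀ α ∈ S.A, SS (fun _ => 1) (fun u => (dotR w (cv α) - N) *
        mh (β + α) (fun x => S.g α x * h x) u) := fun α _ => (mh_SS_one (hα α) _).const_mul _
    rw [← e]
    simp_rw [euler_Fl w N]
    rw [J_add S hz (hFm.const_mul _)
      (SS.sum _ fun α hα => (t5 α hα).add (SS.sum _ (t1 α hα))) ((hv.mul_left _).mul_left _)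
      (fun u hu => Finset.sum_eq_zero fun α hα => (congrArg₂ (· + ·) (t4 α hα u hu) (t3 α hα u hu)).trans
        (add_zero 0)),
      J_const_mul, J_mul_F, J_sum S hz _ (fun α hα => (t5 α hα).add (SS.sum _ (t1 α hα)))
      (fun α hα u hu => (congrArg₂ (· + ·) (t4 α hα u hu) (t3 α hα u hu)).trans
        (add_zero 0))]
    congr 1
    refine Finset.sum_congr rfl fun α hα => ?_
    rw [J_add S hz (t5 α hα) (SS.sum _ (t1 α hα)) (t4 α hα) (t3 α hα), J_const_mul,
      J_sum S hz _ (t1 α hα) (t2 α hα)]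
    simp only [J_const_mul]
    push_cast; rfl
  simp only [mul_add (w _ : ℂ), h1, Finset.sum_add_distrib] at hsum
  have h3 : ∑ i, (w i : ℂ) * ((z + 1) * J S z (fun u => pd i (Fl S.A S.g) u * mh β h u)) =
      (z + 1) * ∑ i, (w i : ℂ) * J S z (fun u => pd i (Fl S.A S.g) u * mh β h u) := by
    rw [Finset.mul_sum]; exact Finset.sum_congr rfl fun i _ => by ring
  have h4 : ∑ i, (w i : ℂ) * (((β i : ℝ) + 1) * J S (z + 1) (mh β h)) =
      (dotR w (cv β) + ∑ i, w i : ℂ) * J S (z + 1) (mh β h) := by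
    simp only [dotR, cv]
    push_cast
    rw [← Finset.sum_add_distrib, Finset.sum_mul]
    exact Finset.sum_congr rfl fun i _ => by ring
  rw [h3, h4, h2] at hsum
  linear_combination hsum

end monint

/-! ### Meromorphic continuation -/

section monint

variable {n : ℕ} {S : Setup n}

lemma exists_eps (T : Finset ℝ) : ∃ ε > 0, ∀ x ∈ T, 0 < x → ε ≤ x := by
  induction T using Finset.induction_on with
  | empty => exact ⟨1, one_pos, by simp⟩
  | insert a T _ ih =>
    obtain ⟨ε, hε, h⟩ := ih
    by_cases ha : 0 < a
    · refine ⟨min ε a, lt_min hε ha, fun x hx hx0 => ?_⟩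
      rcases Finset.mem_insert.1 hx with rfl | hx
      · exact min_le_right _ _
      · exact (min_le_left _ _).trans (h x hx hx0)
    · refine ⟨ε, hε, fun x hx hx0 => ?_⟩
      rcases Finset.mem_insert.1 hx with rfl | hx
      · exact absurd hx0 ha
      · exact h x hx hx0

/-- If `x ^ β` vanishes at the origin to order at least `(k + K) N(w)` along all test
directions, then `k + K` integrations by parts give the continuation to `-K < Re s`. -/
lemma cont_base (K k : ℕ) (β : Fin n → ℕ) {h : (Fin n → ℝ) → ℝ} (H : Amp S h)
    (hβ : ∀ v : Fin n → ℝ, (∀ i, 0 ≤ v i) → ((k : ℝ) + K) * Nm S.A S.hA v ≤ dotR (cv β) v) :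
    PolyCont K fun s => J S (s - k) (mh β h) := by
  have hm : SS (fun u => Mf S.A u ^ ((k : ℝ) + K)) (mh β h) := by
    refine mh_SS H β fun u hu => ?_
    have hv : ∀ i, 0 ≤ (-u) i := fun i => by simpa using (hu i).le
    obtain ⟨α, hα, h1⟩ := exists_Nm S.hA (-u)
    have h2 := hβ _ hv
    have hneg : ∀ a : Fin n → ℝ, dotR a (-u) = -dotR a u := fun a => by simp [dotR]
    rw [h1, hneg, hneg] at h2
    calc Real.exp (dotR (cv β) u) ≤ Real.exp (dotR (cv α) u * ((k : ℝ) + K)) := by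
          rw [Real.exp_le_exp]; linarith
      _ = Real.exp (dotR (cv α) u) ^ ((k : ℝ) + K) := by rw [Real.exp_mul]
      _ ≤ _ := Real.rpow_le_rpow (Real.exp_pos _).le (exp_le_Mf u hα) (by positivity)
  obtain ⟨ψ, hψ, hψV, hJ⟩ := J_iter S (k + K) ((k : ℝ) + K) (by push_cast; rfl) _ hm (mh_VB H β)
  have hψ1 : SS (fun _ => 1) ψ := by
    convert hψ using 2
    push_cast; rw [sub_self, Real.rpow_zero]
  obtain ⟨C, hC⟩ := S.Fl_bound
  have hE : DifferentiableOn ℂ (fun z => J S z ψ) {z | 0 < z.re} := by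
    have := differentiableOn_cp_integral (μ := volume) (f := Fl S.A S.g)
      (k := fun u => ((Es u * ψ u : ℝ) : ℂ))
      (contDiff_Fl S.A S.hg).continuous.measurable (C := C) (a := 0)
      (Complex.continuous_ofReal.comp (continuous_Es.mul hψ.1.continuous)).aestronglyMeasurable
      (fun u hu => ?_) (fun σ hσ => ?_)
    · refine this.congr fun z _ => ?_
      unfold J
      congr 1; funext u
      simp only [Complex.real_smul]; push_cast; ring
    · refine (le_abs_self _).trans (hC u ?_)
      by_contra hcon
      refine hu ?_
      rw [hψV u fun h => hcon (VB.neg_orthant S.r_lt h)]; simp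
    · refine (J_integrable S (z := (σ : ℂ)) (by simpa using hσ) hψ1 hψV).congr
        (Eventually.of_forall fun u => ?_)
      simp only [Complex.real_smul]; push_cast; ring
  refine ⟨∏ l ∈ Finset.range (k + K), (Polynomial.X + Polynomial.C ((l : ℂ) + 1 - k)), ?_,
    fun s => J S (s + K) ψ, ?_, k, fun s hs => ?_⟩
  · exact Finset.prod_ne_zero_iff.2 fun l _ => Polynomial.X_add_C_ne_zero _
  · refine hE.comp (by fun_prop) fun s hs => ?_
    have hs : -(K : ℝ) < s.re := hs
    show 0 < (s + K).re
    simp; linarith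
  · have := hJ (s - k) (by simpa using hs)
    rw [Polynomial.eval_prod]
    beta_reduce
    rw [show s + (K : ℂ) = s - k + ((k + K : ℕ) : ℂ) by push_cast; ring, ← this]
    congr 1
    refine Finset.prod_congr rfl fun l _ => ?_
    simp; ring

/-- Meromorphic continuation of `∫ F_+ ^ {s-k} x ^ β h`, to any half-plane. Integration by parts
along the test directions raises the order of vanishing until the base case applies. -/
lemma cont_mh (K : ℕ) : ∀ (k : ℕ) (β : Fin n → ℕ) (h : (Fin n → ℝ) → ℝ), Amp S h →
    PolyCont K fun s => J S (s - k) (mh β h) := by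
  obtain ⟨V, hV0, hVne, hV⟩ := exists_test S.hA
  obtain ⟨ε, hε, hεT⟩ := exists_eps
    ((V ×ˢ S.A).image (fun p => dotR p.1 (cv p.2) - Nm S.A S.hA p.1) ∪
      (V ×ˢ (Finset.univ : Finset (Fin n))).image fun p => p.1 p.2)
  have hε1 : ∀ v ∈ V, ∀ α ∈ S.A, 0 < dotR v (cv α) - Nm S.A S.hA v →
      ε ≤ dotR v (cv α) - Nm S.A S.hA v := fun v hv α hα h => hεT _ (Finset.mem_union_left _
    (Finset.mem_image.2 ⟨(v, α), Finset.mem_product.2 ⟨hv, hα⟩, rfl⟩)) h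
  have hε2 : ∀ v ∈ V, ∀ i, 0 < v i → ε ≤ v i := fun v hv i h => hεT _ (Finset.mem_union_right _
    (Finset.mem_image.2 ⟨(v, i), Finset.mem_product.2 ⟨hv, Finset.mem_univ _⟩, rfl⟩)) h
  set q : ℕ → (Fin n → ℕ) → (Fin n → ℝ) → ℝ := fun k β w => dotR w (cv β) - k * Nm S.A S.hA w
    with hq
  set d : ℕ → (Fin n → ℕ) → (Fin n → ℝ) → ℕ := fun k β w =>
    ⌈(K * Nm S.A S.hA w - q k β w) / ε⌉₊ with hd
  suffices hmain : ∀ L : ℕ, ∀ (k : ℕ) (β : Fin n → ℕ) (h : (Fin n → ℝ) → ℝ), Amp S h →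
      ∑ w ∈ V, d k β w ≤ L → PolyCont K fun s => J S (s - k) (mh β h) from
    fun k β h H => hmain _ k β h H le_rfl
  intro L
  induction L using Nat.strong_induction_on with
  | _ L ih =>
  intro k β h H hL
  by_cases hall : ∀ w ∈ V, d k β w = 0
  · refine cont_base K k β H (hV (cv β) _ fun w hw => ?_)
    have h1 := Nat.ceil_eq_zero.1 (hall w hw)
    rw [div_le_iff₀ hε, zero_mul, hq] at h1
    beta_reduce at h1
    rw [dotR_comm (cv β)]
    linarith
  push Not at hall
  obtain ⟨v, hv, hdv⟩ := hall
  -- a step not lowering any order and raising the order along `v` lowers the total defect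
  have hdec : ∀ (k' : ℕ) (β' : Fin n → ℕ) (h' : (Fin n → ℝ) → ℝ), Amp S h' →
      (∀ w ∈ V, q k β w ≤ q k' β' w) → q k β v + ε ≤ q k' β' v →
      PolyCont K fun s => J S (s - k') (mh β' h') := by
    intro k' β' h' H' h1 h2
    refine ih (∑ w ∈ V, d k' β' w) (lt_of_lt_of_le ?_ hL) k' β' h' H' le_rfl
    refine Finset.sum_lt_sum (fun w hw => ?_) ⟨v, hv, ?_⟩
    · refine Nat.ceil_le_ceil ?_
      gcongr
      exact h1 w hw
    · have h3 : 0 < (K * Nm S.A S.hA v - q k β v) / ε := Nat.ceil_pos.1 (Nat.pos_of_ne_zero hdv)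
      have h4 : (K * Nm S.A S.hA v - q k' β' v) / ε + 1 ≤ (K * Nm S.A S.hA v - q k β v) / ε := by
        rw [← le_sub_iff_add_le, ← sub_nonneg, ← mul_nonneg_iff_of_pos_right hε]
        field_simp
        linarith
      by_cases h5 : (K * Nm S.A S.hA v - q k' β' v) / ε ≤ 0
      · have : d k' β' v = 0 := Nat.ceil_eq_zero.2 h5
        rw [this]; exact Nat.pos_of_ne_zero hdv
      · push Not at h5
        refine Nat.lt_of_succ_le ?_
        calc d k' β' v + 1 = ⌈(K * Nm S.A S.hA v - q k' β' v) / ε + 1⌉₊ :=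
              (Nat.ceil_add_one h5.le).symm
          _ ≤ _ := Nat.ceil_le_ceil h4
  have hN : ∀ w ∈ V, ∀ α ∈ S.A, Nm S.A S.hA w ≤ dotR w (cv α) := fun w _ α hα => by
    rw [dotR_comm]; exact Nm_le S.hA w hα
  have c1 : ∀ i, PolyCont K fun s =>
      (v i : ℂ) * J S (s - k) (mh (β + Pi.single i 1) (pd i h)) := by
    intro i
    by_cases hi : v i = 0
    · simpa [hi] using PolyCont.zero (K := K)
    have hi' : 0 < v i := lt_of_le_of_ne (hV0 v hv i) (Ne.symm hi)
    refine (hdec k _ _ (H.pd i) (fun w hw => ?_) ?_).const_mul _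
    · simp only [hq, cv_add, cv_single, dotR_add_right, dotR_single]
      linarith [hV0 w hw i]
    · simp only [hq, cv_add, cv_single, dotR_add_right, dotR_single]
      linarith [hε2 v hv i hi']
  have c2 : ∀ α ∈ S.A, PolyCont K fun s => ((dotR v (cv α) : ℂ) - Nm S.A S.hA v) *
      J S (s - (k + 1 : ℕ)) (mh (β + α) fun x => S.g α x * h x) := by
    intro α hα
    by_cases hi : dotR v (cv α) - Nm S.A S.hA v = 0
    · have : ((dotR v (cv α) : ℂ) - Nm S.A S.hA v) = 0 := by exact_mod_cast hi
      simpa [this] using PolyCont.zero (K := K)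
    have hi' := hε1 v hv α hα (lt_of_le_of_ne (sub_nonneg.2 (hN v hv α hα)) (Ne.symm hi))
    refine (hdec (k + 1) _ _ (H.mul (S.hg α)) (fun w hw => ?_) ?_).const_mul _
    · simp only [hq, cv_add, dotR_add_right]
      push_cast
      linarith [hN w hw α hα]
    · simp only [hq, cv_add, dotR_add_right]
      push_cast
      linarith
  have c3 : ∀ α ∈ S.A, ∀ i, PolyCont K fun s => (v i : ℂ) *
      J S (s - (k + 1 : ℕ)) (mh (β + α + Pi.single i 1) fun x => pd i (S.g α) x * h x) := by
    intro α hα i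
    by_cases hi : v i = 0
    · simpa [hi] using PolyCont.zero (K := K)
    have hi' : 0 < v i := lt_of_le_of_ne (hV0 v hv i) (Ne.symm hi)
    refine (hdec (k + 1) _ _ (H.mul (contDiff_pd (S.hg α) i)) (fun w hw => ?_) ?_).const_mul _
    · simp only [hq, cv_add, cv_single, dotR_add_right, dotR_single]
      push_cast
      linarith [hV0 w hw i, hN w hw α hα]
    · simp only [hq, cv_add, cv_single, dotR_add_right, dotR_single]
      push_cast
      linarith [hε2 v hv i hi', hN v hv α hα]
  set D : ℂ := dotR v (cv β) + ∑ i, (v i : ℂ) with hD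
  have hDne : D ≠ 0 := by
    have h1 : 0 ≤ dotR v (cv β) := dotR_nonneg (hV0 v hv) fun i => Nat.cast_nonneg _
    have h2 : 0 < ∑ i, v i := by
      obtain ⟨i, hi⟩ := Function.ne_iff.1 (hVne v hv)
      exact Finset.sum_pos' (fun i _ => hV0 v hv i)
        ⟨i, Finset.mem_univ _, lt_of_le_of_ne (hV0 v hv i) (Ne.symm hi)⟩
    have : D = ((dotR v (cv β) + ∑ i, v i : ℝ) : ℂ) := by rw [hD]; push_cast; rfl
    rw [this]
    exact_mod_cast (by linarith : dotR v (cv β) + ∑ i, v i ≠ 0)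
  set Q : Polynomial ℂ := (Polynomial.X - Polynomial.C (k : ℂ)) *
    Polynomial.C (Nm S.A S.hA v : ℂ) + Polynomial.C D with hQ
  have hQne : Q ≠ 0 := by
    intro h0
    have : Q.eval (k : ℂ) = 0 := by rw [h0]; simp
    simp [hQ] at this
    exact hDne this
  refine PolyCont.div hQne ?_
  refine PolyCont.congr (J := fun s => (-1) * ((∑ i, (v i : ℂ) * J S (s - k)
    (mh (β + Pi.single i 1) (pd i h))) + (Polynomial.X - Polynomial.C (k : ℂ)).eval s *
      ∑ α ∈ S.A, (((dotR v (cv α) : ℂ) - Nm S.A S.hA v) *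
        J S (s - (k + 1 : ℕ)) (mh (β + α) fun x => S.g α x * h x) + ∑ i, (v i : ℂ) *
      J S (s - (k + 1 : ℕ)) (mh (β + α + Pi.single i 1) fun x => pd i (S.g α) x * h x))))
    (R := k + 1) ?_ fun s hs => ?_
  · exact ((PolyCont.sum _ fun i _ => c1 i).add ((PolyCont.sum _ fun α hα =>
      (c2 α hα).add (PolyCont.sum _ fun i _ => c3 α hα i)).poly_mul _)).const_mul _
  · have := J_euler H β v (Nm S.A S.hA v) (z := s - (k + 1 : ℕ))
      (by simp; linarith)
    rw [show s - ((k + 1 : ℕ) : ℂ) + 1 = s - k by push_cast; ring, Complex.ofReal_sum] at this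
    rw [neg_one_mul]
    simp only [hQ, hD, Polynomial.eval_add, Polynomial.eval_mul, Polynomial.eval_sub,
      Polynomial.eval_X, Polynomial.eval_C]
    rw [← this]
    ring

end monint

/-! ### Uniform integrability -/

section uniform

variable {n : ℕ}

/-- Regularized primitive of `(p + 1) t_+ ^ p`, for `p > -1`. -/
def Hreg (p η : ℝ) (t : ℝ) : ℂ := cp ((p + 2 : ℝ) + 1 : ℂ) t / ((t ^ 2 + η : ℝ) : ℂ)

/-- The derivative of `Hreg`. -/
def hreg (p η : ℝ) (t : ℝ) : ℝ :=
  if 0 < t then t ^ (p + 2) * ((p + 1) * t ^ 2 + (p + 3) * η) / (t ^ 2 + η) ^ 2 else 0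

lemma cp_ofReal (p t : ℝ) : cp (p : ℂ) t = (pPow t p : ℂ) := by
  unfold cp pPow
  split_ifs with h
  · rw [Complex.ofReal_cpow h.le]
  · simp

lemma hasDerivAt_Hreg {p η : ℝ} (hp : -1 < p) (hη : 0 < η) (t : ℝ) :
    HasDerivAt (Hreg p η) (hreg p η t : ℂ) t := by
  have h0 : (0 : ℝ) < t ^ 2 + η := by positivity
  have h1 := hasDerivAt_cp (z := ((p + 2 : ℝ) : ℂ)) (by simp; linarith) t
  have h2 : HasDerivAt (fun t : ℝ => ((t ^ 2 + η : ℝ) : ℂ)) ((2 * t : ℝ) : ℂ) t := by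
    have := ((hasDerivAt_pow 2 t).add_const η).ofReal_comp
    simpa using this
  have h3 := h1.div h2 (by exact_mod_cast h0.ne')
  refine h3.congr_deriv ?_
  rw [cp_succ_mul, cp_ofReal]
  unfold hreg pPow
  split_ifs with ht
  · rw [div_eq_iff (by exact_mod_cast (by positivity : (t ^ 2 + η) ^ 2 ≠ 0))]
    rw [← sub_eq_zero]
    have : (t ^ 2 + η) ^ 2 ≠ 0 := by positivity
    norm_cast
    field_simp
    ring
  · simp

lemma hreg_nonneg {p η : ℝ} (hp : -1 < p) (hη : 0 < η) (t : ℝ) : 0 ≤ hreg p η t := by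
  unfold hreg
  split_ifs with h
  · have : 0 < p + 1 := by linarith
    have : 0 < p + 3 := by linarith
    positivity
  · exact le_rfl

lemma continuous_hreg {p η : ℝ} (hp : -1 < p) (hη : 0 < η) :
    Continuous fun t => (hreg p η t : ℂ) := by
  have hc := continuous_cp (z := ((p + 2 : ℝ) : ℂ)) (by simp; linarith)
  have : (fun t => (hreg p η t : ℂ)) = fun t =>
      cp ((p + 2 : ℝ) : ℂ) t * (((p + 1) * t ^ 2 + (p + 3) * η : ℝ) : ℂ) /
        ((t ^ 2 + η) ^ 2 : ℝ) := by
    funext t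
    rw [cp_ofReal]
    unfold hreg pPow
    split_ifs <;> simp
  rw [this]
  refine (hc.mul (by fun_prop)).div (by fun_prop) fun t => ?_
  have : (t ^ 2 + η) ^ 2 ≠ 0 := by positivity
  exact_mod_cast this

lemma norm_Hreg_le {p η : ℝ} (hη : 0 < η) (t : ℝ) : ‖Hreg p η t‖ ≤ pPow t (p + 1) := by
  have h0 : (0 : ℝ) < t ^ 2 + η := by positivity
  have e : ((p + 2 : ℝ) + 1 : ℂ) = ((p + 3 : ℝ) : ℂ) := by push_cast; ring
  rw [Hreg, e, cp_ofReal, norm_div, Complex.norm_real, Complex.norm_real, Real.norm_eq_abs,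
    Real.norm_eq_abs, abs_of_pos h0]
  unfold pPow
  split_ifs with h
  · rw [abs_of_nonneg (by positivity), div_le_iff₀ h0,
      show p + 3 = p + 1 + (2 : ℕ) by push_cast; ring, Real.rpow_add h, Real.rpow_natCast]
    gcongr
    linarith
  · simp

lemma tendsto_hreg {p : ℝ} {η : ℕ → ℝ} (hη : Tendsto η atTop (𝓝 0)) (t : ℝ) :
    Tendsto (fun m => hreg p (η m) t) atTop (𝓝 ((p + 1) * pPow t p)) := by
  unfold hreg pPow
  split_ifs with h
  · have h1 : Tendsto (fun m => t ^ (p + 2) * ((p + 1) * t ^ 2 + (p + 3) * η m) /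
        (t ^ 2 + η m) ^ 2) atTop
        (𝓝 (t ^ (p + 2) * ((p + 1) * t ^ 2 + (p + 3) * 0) / (t ^ 2 + 0) ^ 2)) :=
      (((hη.const_mul _).const_add _).const_mul _).div ((hη.const_add _).pow 2) (by positivity)
    convert h1 using 2
    rw [Real.rpow_add h, show t ^ (2 : ℝ) = t ^ 2 by exact_mod_cast Real.rpow_natCast t 2]
    field_simp
    ring
  · simp

@[fun_prop]
lemma measurable_pPow (p : ℝ) : Measurable fun t => pPow t p :=
  Measurable.ite measurableSet_Ioi (by fun_prop) measurable_const

lemma pPow_nonneg (t p : ℝ) : 0 ≤ pPow t p := by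
  unfold pPow; split_ifs with h <;> positivity

variable (S : Setup n)

/-- The closed box `x_i ≤ r` in logarithmic coordinates. -/
def Setup.box : Set (Fin n → ℝ) := {u | ∀ i, Real.exp (u i) ≤ S.r}

lemma Setup.measurableSet_box : MeasurableSet S.box := by
  have : IsClosed S.box := by
    simp only [Setup.box, Set.ofPred_forall]
    exact isClosed_iInter fun i => isClosed_le (by fun_prop) continuous_const
  exact this.measurableSet

lemma Setup.box_neg {u : Fin n → ℝ} (hu : u ∈ S.box) (i : Fin n) : u i < 0 :=
  VB.neg_orthant S.r_lt hu i

lemma continuous_Mf (A : Finset (Fin n → ℕ)) : Continuous (Mf A) := by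
  unfold Mf
  exact continuous_finsetSum _ fun α _ => Real.continuous_exp.comp (continuous_dotR _)

/-- For fixed `t ≥ 0`, the integral of `F_+ ^ p M ^ t χ` is controlled by that of
`M ^ {p + t}` over the box, up to the factor `(p + 1)⁻¹`. Non-degeneracy enters here:
the singularity of `F_+ ^ p` along the zero set of `F` is removed by integrating by parts. -/
lemma uniform_bound {t : ℝ} (ht : 0 ≤ t) {χ : (Fin n → ℝ) → ℝ} (H : Amp S χ)
    (hχ : ∀ x, 0 ≤ χ x) : ∃ C : ℝ, 0 ≤ C ∧ ∀ p : ℝ, -1 < p → p < 0 →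
      ∫⁻ u, ENNReal.ofReal ((p + 1) * (Es u * (pPow (Fl S.A S.g u) p * (Mf S.A u ^ t * χ (ex u))))) ≤
        ∫⁻ u in S.box, ENNReal.ofReal (C * (Es u * Mf S.A u ^ (p + t))) := by
  set F := Fl S.A S.g with hF
  have hM := fun u => Mf_pos S.hA u
  set ψ : (Fin n → ℝ) → ℝ := fun u => Mf S.A u ^ t * χ (ex u) with hψ
  have hψ0 : ∀ u, 0 ≤ ψ u := fun u => mul_nonneg (Real.rpow_nonneg (hM u).le _) (hχ _)
  have hψS : SS (fun u => Mf S.A u ^ t) ψ := by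
    have h1 := SS.rpow (hM) (Mf_SS (A := S.A)) one_pos (fun u => by rw [one_mul]) t
    simpa using h1.mul (fun u => Real.rpow_nonneg (hM u).le _) (SS.comp_ex H.smooth H.compact)
  have hψV : VB S.r ψ := H.box.mul_left _
  obtain ⟨C₁, hC₁⟩ := ((Fl_SS (A := S.A) S.hg S.hgc).2 0).zero
  obtain ⟨C₂, hC₂⟩ := ((Lop_SS S hψS).2 0).zero
  refine ⟨max |C₁| 1 * |C₂|, by positivity, fun p hp hp0 => ?_⟩
  set η : ℕ → ℝ := fun m => 1 / ((m : ℝ) + 1) with hη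
  have hη0 : ∀ m, 0 < η m := fun m => by positivity
  have hηl : Tendsto η atTop (𝓝 0) := tendsto_one_div_add_atTop_nhds_zero_nat
  have hFc : Continuous F := (contDiff_Fl S.A S.hg).continuous
  have hψc : Continuous ψ := hψS.1.continuous
  have hpt : ∀ u, Tendsto (fun m => ENNReal.ofReal (Es u * (hreg p (η m) (F u) * ψ u))) atTop
      (𝓝 (ENNReal.ofReal ((p + 1) * (Es u * (pPow (F u) p * ψ u))))) := by
    intro u
    refine ENNReal.tendsto_ofReal ?_
    have := ((tendsto_hreg (p := p) hηl (F u)).mul_const (ψ u)).const_mul (Es u)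
    convert this using 2
    ring
  -- each regularization obeys the bound
  have hbd : ∀ m, ∫⁻ u, ENNReal.ofReal (Es u * (hreg p (η m) (F u) * ψ u)) ≤
      ∫⁻ u in S.box, ENNReal.ofReal (max |C₁| 1 * |C₂| * (Es u * Mf S.A u ^ (p + t))) := by
    intro m
    have hHc : Continuous (Hreg p (η m)) :=
      continuous_iff_continuousAt.2 fun t => (hasDerivAt_Hreg hp (hη0 m) t).continuousAt
    have hib := ibp S (hasDerivAt_Hreg hp (hη0 m)) (continuous_hreg hp (hη0 m))
      (by simp [Hreg, cp]) hψS (C := (S.A.card : ℝ) ^ t)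
      (fun u hu => Real.rpow_le_rpow (hM u).le (Mf_le hu) ht)
      (fun u => Real.rpow_nonneg (hM u).le _) hψV
    have e1 : ∀ u, Es u • (((hreg p (η m) (F u) : ℝ) : ℂ) * (ψ u : ℂ)) =
        ((Es u * (hreg p (η m) (F u) * ψ u) : ℝ) : ℂ) := fun u => by
      rw [Complex.real_smul]; push_cast; rfl
    have hnn : ∀ u, 0 ≤ Es u * (hreg p (η m) (F u) * ψ u) := fun u =>
      mul_nonneg (Es_pos u).le (mul_nonneg (hreg_nonneg hp (hη0 m) _) (hψ0 u))
    have hItg : Integrable fun u => Es u * (hreg p (η m) (F u) * ψ u) := by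
      have hcr : Continuous fun t => hreg p (η m) t := Complex.continuous_re.comp (continuous_hreg hp (hη0 m))
      obtain ⟨C₀, hC₀⟩ := S.Fl_bound
      obtain ⟨K, hK⟩ := (isCompact_Icc (a := -C₀) (b := C₀)).exists_bound_of_continuousOn
        hcr.continuousOn
      obtain ⟨D, hD⟩ := (hψS.2 0).zero
      refine integrable_box S.r_lt (k := fun u => hreg p (η m) (F u) * ψ u)
        (C := |K| * (|D| * (S.A.card : ℝ) ^ t))
        ((hcr.comp hFc).mul hψc).aestronglyMeasurable (fun u hu => ?_) fun u hu => by
          simp [hψV u hu]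
      have hu := VB.neg_orthant S.r_lt hu
      rw [norm_mul]
      refine mul_le_mul ((hK _ (abs_le.1 (hC₀ u hu))).trans (le_abs_self _)) ?_ (norm_nonneg _)
        (abs_nonneg _)
      refine (hD u hu).trans ?_
      have := hM u
      gcongr
      · exact le_abs_self D
      · exact Mf_le hu
    rw [← ofReal_integral_eq_lintegral_ofReal hItg (Eventually.of_forall hnn)]
    have e2 : ∫ u, Es u * (hreg p (η m) (F u) * ψ u) =
        ‖∫ u, Es u • (Hreg p (η m) (F u) * (Lop S ψ u : ℂ))‖ := by
      rw [← norm_neg, ← hib]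
      simp_rw [← hF, e1]
      rw [integral_complex_ofReal, Complex.norm_real, Real.norm_eq_abs,
        abs_of_nonneg (integral_nonneg hnn)]
    rw [e2, ofReal_norm]
    refine (enorm_integral_le_lintegral_enorm _).trans ?_
    rw [← lintegral_indicator S.measurableSet_box]
    refine lintegral_mono fun u => ?_
    by_cases hu : u ∈ S.box
    · rw [Set.indicator_of_mem hu, ← ofReal_norm]
      refine ENNReal.ofReal_le_ofReal ?_
      rw [norm_smul, norm_mul, Real.norm_eq_abs, abs_of_pos (Es_pos u), Complex.norm_real,
        Real.norm_eq_abs, mul_left_comm (max |C₁| 1 * |C₂|)]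
      refine mul_le_mul_of_nonneg_left ?_ (Es_pos u).le
      have hun := S.box_neg hu
      have h1 : pPow (F u) (p + 1) ≤ max |C₁| 1 * Mf S.A u ^ (p + 1) := by
        have h2 : |F u| ≤ max |C₁| 1 * Mf S.A u := (hC₁ u hun).trans
          (mul_le_mul_of_nonneg_right ((le_abs_self _).trans (le_max_left _ _)) (hM u).le)
        unfold pPow
        have := hM u
        split_ifs with h3
        · calc F u ^ (p + 1) ≤ (max |C₁| 1 * Mf S.A u) ^ (p + 1) :=
                Real.rpow_le_rpow h3.le ((le_abs_self _).trans h2) (by linarith)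
            _ = (max |C₁| 1) ^ (p + 1) * Mf S.A u ^ (p + 1) :=
                Real.mul_rpow (by positivity) this.le
            _ ≤ (max |C₁| 1) ^ (1 : ℝ) * Mf S.A u ^ (p + 1) := by
                gcongr
                · exact le_max_right _ _
                · linarith
            _ = _ := by rw [Real.rpow_one]
        · positivity
      calc ‖Hreg p (η m) (F u)‖ * |Lop S ψ u|
          ≤ (max |C₁| 1 * Mf S.A u ^ (p + 1)) * (|C₂| * ((Mf S.A u)⁻¹ * Mf S.A u ^ t)) := by
            have := hM u
            refine mul_le_mul ((norm_Hreg_le (hη0 m) _).trans h1) ((hC₂ u hun).trans ?_)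
              (abs_nonneg _) (by positivity)
            gcongr
            exact le_abs_self _
        _ = max |C₁| 1 * |C₂| * (Mf S.A u ^ (p + 1) * (Mf S.A u ^ (-1 : ℝ) * Mf S.A u ^ t)) := by
            rw [Real.rpow_neg_one]; ring
        _ = _ := by
            rw [← Real.rpow_add (hM u), ← Real.rpow_add (hM u)]
            congr 2; ring
    · rw [Set.indicator_of_notMem hu, (Lop_VB S hψV) u hu]; simp
  have hcr : ∀ m, Continuous fun t => hreg p (η m) t := fun m =>
    Complex.continuous_re.comp (continuous_hreg hp (hη0 m))
  calc ∫⁻ u, ENNReal.ofReal ((p + 1) * (Es u * (pPow (F u) p * ψ u)))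
      = ∫⁻ u, liminf (fun m => ENNReal.ofReal (Es u * (hreg p (η m) (F u) * ψ u))) atTop :=
        lintegral_congr fun u => (hpt u).liminf_eq.symm
    _ ≤ liminf (fun m => ∫⁻ u, ENNReal.ofReal (Es u * (hreg p (η m) (F u) * ψ u))) atTop :=
        lintegral_liminf_le fun m => (continuous_Es.mul
          (((hcr m).comp hFc).mul hψc)).measurable.ennreal_ofReal
    _ ≤ liminf (fun _ : ℕ => ∫⁻ u in S.box,
          ENNReal.ofReal (max |C₁| 1 * |C₂| * (Es u * Mf S.A u ^ (p + t)))) atTop :=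
        liminf_le_liminf (Eventually.of_forall hbd)
    _ = _ := liminf_const _

end uniform

/-! ### The logarithmic chart and a convergence theorem -/

section logchart

variable {n : ℕ}

lemma hasFDerivAt_ex (u : Fin n → ℝ) :
    HasFDerivAt (ex (n := n)) (ContinuousLinearMap.pi fun i =>
      Real.exp (u i) • (ContinuousLinearMap.proj i : (Fin n → ℝ) →L[ℝ] ℝ)) u := by
  rw [hasFDerivAt_pi]
  intro i
  exact (hasFDerivAt_apply i u).exp

lemma det_ex (u : Fin n → ℝ) :
    (ContinuousLinearMap.pi fun i =>
      Real.exp (u i) • (ContinuousLinearMap.proj i : (Fin n → ℝ) →L[ℝ] ℝ)).det = Es u := by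
  have : ((ContinuousLinearMap.pi fun i =>
      Real.exp (u i) • (ContinuousLinearMap.proj i : (Fin n → ℝ) →L[ℝ] ℝ)) :
        (Fin n → ℝ) →ₗ[ℝ] (Fin n → ℝ)) =
      Matrix.toLin' (Matrix.diagonal fun i => Real.exp (u i)) := by
    ext i j
    simp [Matrix.toLin'_apply, Matrix.mulVec_diagonal]
  rw [ContinuousLinearMap.det, this, LinearMap.det_toLin', Matrix.det_diagonal, Es, Real.exp_sum]

lemma ex_injective : Function.Injective (ex (n := n)) := fun _ _ h =>
  funext fun i => Real.exp_injective (congrFun h i)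

lemma image_ex : ex (n := n) '' Set.univ = posOrthant n := by
  ext y
  simp only [Set.image_univ, Set.mem_range, posOrthant, Set.mem_ofPred_eq]
  constructor
  · rintro ⟨u, rfl⟩ i
    exact Real.exp_pos _
  · intro h
    exact ⟨fun i => Real.log (y i), funext fun i => Real.exp_log (h i)⟩

/-- Change of variables `x = e ^ u` on the positive orthant. -/
lemma integral_orthant {E : Type*} [NormedAddCommGroup E] [NormedSpace ℝ E]
    (H : (Fin n → ℝ) → E) : ∫ x in posOrthant n, H x = ∫ u, Es u • H (ex u) := by
  rw [← image_ex, integral_image_eq_integral_abs_det_fderiv_smul volume MeasurableSet.univ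
    (fun u _ => (hasFDerivAt_ex u).hasFDerivWithinAt) ex_injective.injOn]
  simp [det_ex, abs_of_pos (Es_pos _)]

lemma integrableOn_orthant {E : Type*} [NormedAddCommGroup E] [NormedSpace ℝ E]
    (H : (Fin n → ℝ) → E) :
    IntegrableOn H (posOrthant n) ↔ Integrable fun u => Es u • H (ex u) := by
  rw [← image_ex, integrableOn_image_iff_integrableOn_abs_det_fderiv_smul volume MeasurableSet.univ
    (fun u _ => (hasFDerivAt_ex u).hasFDerivWithinAt) ex_injective.injOn]
  simp [det_ex, abs_of_pos (Es_pos _)]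

end logchart

section limit

variable {Ω : Type*} [MeasurableSpace Ω] {μ : Measure Ω}

/-- A convergence theorem for products `X_i m_i` with `m_i` dominated and `X_i` uniformly
integrable against `m_i`. -/
lemma tendsto_integral_of_tail {l : Filter ℝ} [l.NeBot] [l.IsCountablyGenerated]
    {X m : ℝ → Ω → ℝ} {X₀ m₀ D : Ω → ℝ} (hX : ∀ i, Measurable (X i)) (hm : ∀ i, Measurable (m i))
    (hX0 : ∀ i ω, 0 ≤ X i ω) (hX₀ : Measurable X₀) (hm₀ : Measurable m₀) (hX₀0 : ∀ ω, 0 ≤ X₀ ω)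
    (hD : Integrable D μ) (hmD : ∀ᶠ i in l, ∀ ω, |m i ω| ≤ D ω)
    (hlim : ∀ᵐ ω ∂μ, (Tendsto (fun i => X i ω) l (𝓝 (X₀ ω)) ∧ Tendsto (fun i => m i ω) l (𝓝 (m₀ ω)))
      ∨ (Tendsto (fun i => m i ω) l (𝓝 0) ∧ m₀ ω = 0))
    {B : ℝ → ℝ} (hB : Tendsto B atTop (𝓝 0))
    (htail : ∀ K, 1 ≤ K → ∀ᶠ i in l,
      ∫⁻ ω, ENNReal.ofReal ((if K < X i ω then X i ω else 0) * |m i ω|) ∂μ ≤ ENNReal.ofReal (B K)) :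
    Integrable (fun ω => X₀ ω * m₀ ω) μ ∧
      Tendsto (fun i => ∫ ω, X i ω * m i ω ∂μ) l (𝓝 (∫ ω, X₀ ω * m₀ ω ∂μ)) := by
  have hD0 : ∀ ω, 0 ≤ D ω := by
    obtain ⟨i, hi⟩ := hmD.exists
    exact fun ω => (abs_nonneg _).trans (hi ω)
  -- convergence of the truncated products
  have hpt : ∀ K, 0 ≤ K → ∀ᵐ ω ∂μ,
      Tendsto (fun i => min (X i ω) K * m i ω) l (𝓝 (min (X₀ ω) K * m₀ ω)) := by
    intro K hK
    filter_upwards [hlim] with ω hω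
    rcases hω with ⟨h1, h2⟩ | ⟨h1, h2⟩
    · exact (h1.min tendsto_const_nhds).mul h2
    · rw [h2, mul_zero]
      refine squeeze_zero_norm (a := fun i => K * |m i ω|) (fun i => ?_) ?_
      · rw [Real.norm_eq_abs, abs_mul, abs_of_nonneg (le_min (hX0 i ω) hK)]
        exact mul_le_mul_of_nonneg_right (min_le_right _ _) (abs_nonneg _)
      · simpa using (h1.abs.const_mul K)
  have hbd : ∀ K, 0 ≤ K → ∀ᶠ i in l, ∀ᵐ ω ∂μ, ‖min (X i ω) K * m i ω‖ ≤ K * D ω := by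
    intro K hK
    filter_upwards [hmD] with i hi
    refine Eventually.of_forall fun ω => ?_
    rw [Real.norm_eq_abs, abs_mul, abs_of_nonneg (le_min (hX0 i ω) hK)]
    exact mul_le_mul (min_le_right _ _) (hi ω) (abs_nonneg _) hK
  have htr : ∀ K, 0 ≤ K → Tendsto (fun i => ∫ ω, min (X i ω) K * m i ω ∂μ) l
      (𝓝 (∫ ω, min (X₀ ω) K * m₀ ω ∂μ)) := by
    intro K hK
    exact tendsto_integral_filter_of_dominated_convergence (fun ω => K * D ω)
      (Eventually.of_forall fun i => (((hX i).min measurable_const).mul (hm i)).aestronglyMeasurable)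
      (hbd K hK) (hD.const_mul K) (hpt K hK)
  -- the tail of a product
  have htl : ∀ K, 1 ≤ K → ∀ᶠ i in l, Integrable (fun ω => X i ω * m i ω) μ ∧
      |∫ ω, X i ω * m i ω ∂μ - ∫ ω, min (X i ω) K * m i ω ∂μ| ≤ max (B K) 0 := by
    intro K hK
    have hK0 : 0 ≤ K := zero_le_one.trans hK
    filter_upwards [htail K hK, hbd K hK0] with i hi hb
    have i1 : Integrable (fun ω => min (X i ω) K * m i ω) μ :=
      (hD.const_mul K).mono' (((hX i).min measurable_const).mul (hm i)).aestronglyMeasurable hb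
    have hmeas : Measurable fun ω => (if K < X i ω then X i ω else 0) * |m i ω| :=
      (Measurable.ite (measurableSet_lt measurable_const (hX i)) (hX i) measurable_const).mul
        ((hm i).norm)
    have h0 : ∀ ω, 0 ≤ (if K < X i ω then X i ω else 0) * |m i ω| := fun ω => by
      have := hX0 i ω
      split_ifs <;> positivity
    have i2 : Integrable (fun ω => (if K < X i ω then X i ω else 0) * |m i ω|) μ := by
      refine ⟨hmeas.aestronglyMeasurable, ?_⟩
      rw [hasFiniteIntegral_iff_ofReal (Eventually.of_forall h0)]
      exact hi.trans_lt ENNReal.ofReal_lt_top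
    have hdiff : ∀ ω, |X i ω * m i ω - min (X i ω) K * m i ω| ≤
        (if K < X i ω then X i ω else 0) * |m i ω| := by
      intro ω
      rw [← sub_mul, abs_mul]
      refine mul_le_mul_of_nonneg_right ?_ (abs_nonneg _)
      have := hX0 i ω
      split_ifs with h
      · rw [min_eq_right h.le, abs_of_nonneg (sub_nonneg.2 h.le)]
        linarith
      · rw [min_eq_left (not_lt.1 h)]; simp
    have i3 : Integrable (fun ω => X i ω * m i ω - min (X i ω) K * m i ω) μ :=
      i2.mono' (((hX i).mul (hm i)).sub
        (((hX i).min measurable_const).mul (hm i))).aestronglyMeasurable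
        (Eventually.of_forall hdiff)
    have i4 : Integrable (fun ω => X i ω * m i ω) μ := by
      exact (i3.add i1).congr (Eventually.of_forall fun ω => by simp)
    refine ⟨i4, ?_⟩
    rw [← integral_sub i4 i1]
    refine (abs_integral_le_integral_abs).trans ?_
    refine (integral_mono i3.abs i2 hdiff).trans ?_
    rw [integral_eq_lintegral_of_nonneg_ae (Eventually.of_forall h0) hmeas.aestronglyMeasurable]
    have := ENNReal.toReal_mono ENNReal.ofReal_ne_top hi
    rwa [ENNReal.toReal_ofReal'] at this
  -- Fatou
  have hfat : ∫⁻ ω, ENNReal.ofReal (X₀ ω * |m₀ ω|) ∂μ ≤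
      ENNReal.ofReal (∫ ω, D ω ∂μ + max (B 1) 0) := by
    have hb : ∀ᶠ i in l, ∫⁻ ω, ENNReal.ofReal (X i ω * |m i ω|) ∂μ ≤
        ENNReal.ofReal (∫ ω, D ω ∂μ + max (B 1) 0) := by
      filter_upwards [htail 1 le_rfl, hmD] with i hi hb
      rw [ENNReal.ofReal_add (integral_nonneg hD0) (le_max_right _ _),
        ofReal_integral_eq_lintegral_ofReal hD (Eventually.of_forall hD0)]
      refine le_trans ?_ (add_le_add_right (hi.trans (ENNReal.ofReal_le_ofReal (le_max_left _ _))) _)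
      rw [← lintegral_add_left' hD.1.aemeasurable.ennreal_ofReal]
      refine lintegral_mono fun ω => ?_
      have h0 := hX0 i ω
      have h1 := abs_nonneg (m i ω)
      have h2 := hb ω
      simp only
      rw [← ENNReal.ofReal_add (hD0 ω) (by split_ifs <;> positivity)]
      refine ENNReal.ofReal_le_ofReal ?_
      split_ifs with h
      · nlinarith [hD0 ω]
      · rw [zero_mul, add_zero]
        calc X i ω * |m i ω| ≤ 1 * |m i ω| := mul_le_mul_of_nonneg_right (not_lt.1 h) h1
          _ ≤ D ω := by simpa using h2
    refine le_trans ?_ (le_trans (lintegral_liminf_le (μ := μ) (u := l)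
      (f := fun k ω => ENNReal.ofReal (X k ω * |m k ω|))
      fun k => ((hX _).mul (hm _).norm).ennreal_ofReal) ?_)
    · refine lintegral_mono_ae ?_
      filter_upwards [hlim] with ω hω
      rcases hω with ⟨h1, h2⟩ | ⟨h1, h2⟩
      · exact (((ENNReal.continuous_ofReal.tendsto _).comp
          (h1.mul h2.abs)).liminf_eq).ge
      · simp [h2]
    · refine liminf_le_of_frequently_le' (hb.frequently)
  have hItg : Integrable (fun ω => X₀ ω * m₀ ω) μ := by
    refine ⟨(hX₀.mul hm₀).aestronglyMeasurable, ?_⟩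
    rw [hasFiniteIntegral_iff_norm]
    refine lt_of_le_of_lt (le_of_eq (lintegral_congr fun ω => ?_)) (hfat.trans_lt ENNReal.ofReal_lt_top)
    rw [Real.norm_eq_abs, abs_mul, abs_of_nonneg (hX₀0 ω)]
  refine ⟨hItg, ?_⟩
  have hK : Tendsto (fun K : ℝ => ∫ ω, min (X₀ ω) K * m₀ ω ∂μ) atTop (𝓝 (∫ ω, X₀ ω * m₀ ω ∂μ)) := by
    refine tendsto_integral_filter_of_dominated_convergence (fun ω => ‖X₀ ω * m₀ ω‖)
      (Eventually.of_forall fun K => ((hX₀.min measurable_const).mul hm₀).aestronglyMeasurable)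
      ?_ hItg.norm ?_
    · filter_upwards [eventually_ge_atTop 0] with K hK
      refine Eventually.of_forall fun ω => ?_
      rw [norm_mul, norm_mul]
      refine mul_le_mul_of_nonneg_right ?_ (norm_nonneg _)
      rw [Real.norm_eq_abs, Real.norm_eq_abs, abs_of_nonneg (le_min (hX₀0 ω) hK), abs_of_nonneg (hX₀0 ω)]
      exact min_le_left _ _
    · refine Eventually.of_forall fun ω => ?_
      refine (tendsto_const_nhds (x := X₀ ω * m₀ ω)).congr' ?_
      filter_upwards [eventually_ge_atTop (X₀ ω)] with K hK
      rw [min_eq_left hK]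
  rw [Metric.tendsto_nhds]
  intro ε hε
  have e1 := (Metric.tendsto_nhds.1 hK) (ε / 3) (by positivity)
  have e2 := (Metric.tendsto_nhds.1 hB) (ε / 3) (by positivity)
  obtain ⟨K, ⟨k1, k2⟩, k3⟩ := ((e1.and e2).and (eventually_ge_atTop 1)).exists
  filter_upwards [htl K k3, (Metric.tendsto_nhds.1 (htr K (zero_le_one.trans k3))) (ε / 3) (by positivity)]
    with i h1 h2
  rw [Real.dist_eq] at *
  have k2' : max (B K) 0 < ε / 3 := by
    rw [sub_zero] at k2
    exact max_lt ((le_abs_self _).trans_lt k2) (by positivity)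
  have h3 := abs_lt.1 h2
  have h4 := abs_le.1 h1.2
  have h5 := abs_lt.1 k1
  rw [abs_lt]
  constructor <;> linarith
end limit

/-! ### Volumes of slices of cones -/

section volume

open scoped Pointwise

variable {n : ℕ}

/-- The Laplace transform of a cone: `∫_𝒞 e ^ {-λ} = n! vol {z ∈ 𝒞 : λ z ≤ 1}`. -/
lemma lintegral_cone {Cn : Set (Fin n → ℝ)} (hCm : MeasurableSet Cn)
    (hCs : ∀ c : ℝ, 0 < c → ∀ z ∈ Cn, c • z ∈ Cn) (L : (Fin n → ℝ) →ₗ[ℝ] ℝ)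
    (hL : ∀ z ∈ Cn, 0 ≤ L z) :
    ∫⁻ z in Cn, ENNReal.ofReal (Real.exp (-L z)) =
      (n.factorial : ENNReal) * volume {z | z ∈ Cn ∧ L z ≤ 1} := by
  have hLm : Measurable L := (LinearMap.continuous_of_finiteDimensional L).measurable
  have h1 : ∀ x : ℝ, ENNReal.ofReal (Real.exp (-x)) =
      ∫⁻ T, (if x ≤ T then ENNReal.ofReal (Real.exp (-T)) else 0) := by
    intro x
    have : (fun T => if x ≤ T then ENNReal.ofReal (Real.exp (-T)) else 0) =
        (Set.Ici x).indicator fun T => ENNReal.ofReal (Real.exp (-T)) := by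
      ext T; simp [Set.indicator_apply]
    rw [this, lintegral_indicator measurableSet_Ici, setLIntegral_congr Ioi_ae_eq_Ici.symm,
      ← ofReal_integral_eq_lintegral_ofReal (integrableOn_exp_neg_Ioi x)
        (Eventually.of_forall fun _ => (Real.exp_pos _).le), integral_exp_neg_Ioi]
  have h2 : ∀ T : ℝ, ∫⁻ z in Cn, (if L z ≤ T then ENNReal.ofReal (Real.exp (-T)) else 0) =
      (Set.Ioi (0:ℝ)).indicator (fun T => ENNReal.ofReal (Real.exp (-T) * T ^ n)) T *
        volume {z | z ∈ Cn ∧ L z ≤ 1} ∨ T = 0 := by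
    intro T
    rcases lt_trichotomy T 0 with hT | hT | hT
    · left
      rw [Set.indicator_of_notMem (by simp [hT.le]), zero_mul, setLIntegral_eq_zero hCm]
      intro z hz
      have := hL z hz
      simp only [Pi.zero_apply]
      rw [if_neg (by linarith)]
    · right; exact hT
    · left
      rw [Set.indicator_of_mem (by exact hT)]
      have e1 : (fun z => if L z ≤ T then ENNReal.ofReal (Real.exp (-T)) else 0) =
          {z | L z ≤ T}.indicator fun _ => ENNReal.ofReal (Real.exp (-T)) := by
        ext z; simp [Set.indicator_apply]
      have hms : MeasurableSet {z | L z ≤ T} := measurableSet_le hLm measurable_const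
      rw [e1, lintegral_indicator hms, setLIntegral_const, Measure.restrict_apply hms]
      have e2 : {z | L z ≤ T} ∩ Cn = T • {z | z ∈ Cn ∧ L z ≤ 1} := by
        ext z
        rw [Set.mem_smul_set_iff_inv_smul_mem₀ hT.ne']
        simp only [Set.mem_inter_iff, Set.mem_ofPred_eq, map_smul, smul_eq_mul]
        rw [inv_mul_le_iff₀ hT, mul_one]
        constructor
        · rintro ⟨a, b⟩
          exact ⟨hCs _ (inv_pos.2 hT) _ b, a⟩
        · rintro ⟨a, b⟩
          refine ⟨b, ?_⟩
          have := hCs T hT _ a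
          rwa [smul_inv_smul₀ hT.ne'] at this
      rw [e2, Measure.addHaar_smul, Module.finrank_fin_fun, abs_of_pos (pow_pos hT n), ← mul_assoc,
        ← ENNReal.ofReal_mul (Real.exp_pos _).le]
  have hmeas : Measurable fun p : (Fin n → ℝ) × ℝ =>
      (if L p.1 ≤ p.2 then ENNReal.ofReal (Real.exp (-p.2)) else 0) :=
    Measurable.ite (measurableSet_le (hLm.comp measurable_fst) measurable_snd)
      (by fun_prop) measurable_const
  calc ∫⁻ z in Cn, ENNReal.ofReal (Real.exp (-L z))
      = ∫⁻ z in Cn, ∫⁻ T, (if L z ≤ T then ENNReal.ofReal (Real.exp (-T)) else 0) :=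
        lintegral_congr fun z => h1 (L z)
    _ = ∫⁻ T, ∫⁻ z in Cn, (if L z ≤ T then ENNReal.ofReal (Real.exp (-T)) else 0) :=
        lintegral_lintegral_swap hmeas.aemeasurable
    _ = ∫⁻ T, (Set.Ioi (0:ℝ)).indicator (fun T => ENNReal.ofReal (Real.exp (-T) * T ^ n)) T *
        volume {z | z ∈ Cn ∧ L z ≤ 1} := by
        refine lintegral_congr_ae ?_
        have : ∀ᵐ T : ℝ, T ≠ 0 := by
          simp [ae_iff]
        filter_upwards [this] with T hT
        exact (h2 T).resolve_right hT
    _ = _ := by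
        rw [lintegral_mul_const _ (Measurable.indicator (by fun_prop) measurableSet_Ioi)]
        congr 1
        rw [lintegral_indicator measurableSet_Ioi]
        have hg := Real.GammaIntegral_convergent (s := (n:ℝ) + 1) (by positivity)
        have hG := Real.Gamma_eq_integral (s := (n:ℝ) + 1) (by positivity)
        rw [Real.Gamma_nat_eq_factorial] at hG
        have e : ∀ x : ℝ, Real.exp (-x) * x ^ ((n:ℝ) + 1 - 1) = Real.exp (-x) * x ^ n := by
          intro x; rw [add_sub_cancel_right, Real.rpow_natCast]
        simp only [e] at hg hG
        rw [← ofReal_integral_eq_lintegral_ofReal hg, ← hG, ENNReal.ofReal_natCast]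
        filter_upwards [self_mem_ae_restrict measurableSet_Ioi] with x hx
        have : 0 < x := hx
        simp only [Pi.zero_apply]
        positivity

/-- A simplex-like convex hull as a slice of a cone: if the generators all lie on `{L = 1}`, the
hull of `0` and the generators is the part of the cone where `L ≤ 1`. -/
lemma hull_eq_slice {P : Set (Fin n → ℝ)} {Cn : Set (Fin n → ℝ)} (L : (Fin n → ℝ) →ₗ[ℝ] ℝ)
    (hP : ∀ p ∈ P, L p = 1) (hPC : P ⊆ Cn) (h0 : (0 : Fin n → ℝ) ∈ Cn)
    (hadd : ∀ x ∈ Cn, ∀ y ∈ Cn, x + y ∈ Cn)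
    (hCs : ∀ c : ℝ, 0 < c → ∀ z ∈ Cn, c • z ∈ Cn)
    (hgen : ∀ z ∈ Cn, ∃ (s : Finset (Fin n → ℝ)) (c : (Fin n → ℝ) → ℝ), (∀ p ∈ s, p ∈ P ∧ 0 ≤ c p) ∧
      z = ∑ p ∈ s, c p • p) :
    convexHull ℝ (insert 0 P) = {z | z ∈ Cn ∧ L z ≤ 1} := by
  have hCs' : ∀ c : ℝ, 0 ≤ c → ∀ z ∈ Cn, c • z ∈ Cn := by
    intro c hc z hz
    rcases hc.eq_or_lt with rfl | hc
    · simpa using h0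
    · exact hCs c hc z hz
  apply Set.Subset.antisymm
  · apply convexHull_min
    · intro z hz
      rcases hz with rfl | hz
      · exact ⟨h0, by simp⟩
      · exact ⟨hPC hz, (hP z hz).le⟩
    · intro x hx y hy a b ha hb hab
      refine ⟨hadd _ (hCs' _ ha _ hx.1) _ (hCs' _ hb _ hy.1), ?_⟩
      have h1 := hx.2
      have h2 := hy.2
      simp only [map_add, map_smul, smul_eq_mul]
      nlinarith
  · rintro z ⟨hz, hz1⟩
    obtain ⟨s, c, hs, rfl⟩ := hgen z hz
    have hL : L (∑ p ∈ s, c p • p) = ∑ p ∈ s, c p := by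
      rw [map_sum]
      exact Finset.sum_congr rfl fun p hp => by simp [hP p (hs p hp).1]
    rw [hL] at hz1
    have hconv := convex_convexHull ℝ (insert (0 : Fin n → ℝ) P)
    have hmem : ∀ p ∈ s, p ∈ convexHull ℝ (insert (0 : Fin n → ℝ) P) := fun p hp =>
      subset_convexHull _ _ (Or.inr (hs p hp).1)
    have hz0 : (0 : Fin n → ℝ) ∈ convexHull ℝ (insert (0 : Fin n → ℝ) P) :=
      subset_convexHull _ _ (Or.inl rfl)
    rcases (Finset.sum_nonneg fun p hp => (hs p hp).2).eq_or_lt with h | h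
    · have : ∑ p ∈ s, c p • p = 0 := Finset.sum_eq_zero fun p hp => by
        rw [(Finset.sum_eq_zero_iff_of_nonneg fun p hp => (hs p hp).2).1 h.symm p hp, zero_smul]
      rwa [this]
    · have h1 := hconv.centerMass_mem (t := s) (w := c) (z := id) (fun p hp => (hs p hp).2) h
        (fun p hp => hmem p hp)
      have h2 := hconv hz0 h1 (sub_nonneg.2 hz1) h.le (by ring)
      rw [Finset.centerMass] at h2
      simpa [smul_smul, mul_inv_cancel₀ h.ne'] using h2

end volume

/-! ### Leading coefficients of meromorphic continuations -/

section continuation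

/-- The polynomial factor of a continuation vanishes only at isolated points. -/
lemma PolyCont.eventually_ne {P : Polynomial ℂ} (hP : P ≠ 0) (z : ℂ) :
    ∀ᶠ s in 𝓝[≠] z, P.eval s ≠ 0 := by
  have hfin : (P.rootSet ℂ \ {z}).Finite := (P.rootSet_finite ℂ).subset Set.sdiff_subset
  have h1 : (P.rootSet ℂ \ {z})ᶜ ∈ 𝓝 z := hfin.isClosed.isOpen_compl.mem_nhds (by simp)
  filter_upwards [nhdsWithin_le_nhds h1, self_mem_nhdsWithin] with s hs hne h0
  refine hs ⟨?_, hne⟩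
  rw [Polynomial.mem_rootSet]
  exact ⟨hP, by simpa [Polynomial.aeval_def] using h0⟩

/-- The leading coefficient of a continuation of `Z` at `s₀` can be read off from `Z` itself on the
real half-line to the right of `s₀`, provided that `Z` is holomorphic there. The polynomial-factor
continuations of `Z` to all half-planes show that every meromorphic continuation agrees with `Z`
near `s₀`, whatever its domain. -/
lemma mero_limit {Z G : ℂ → ℂ} {s₀ : ℝ} {ρ : ℕ} {L : ℂ} (hs₀ : s₀ < 0)
    (hcont : ∀ K : ℕ, PolyCont K Z) (hZ : DifferentiableOn ℂ Z {s | s₀ < s.re})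
    (hG : IsMeroCont Z s₀ G)
    (hlim : Tendsto (fun ε : ℝ => (ε : ℂ) ^ ρ * Z ((s₀ + ε : ℝ) : ℂ)) (𝓝[>] 0) (𝓝 L)) :
    Tendsto (fun s : ℂ => (s - (s₀ : ℂ)) ^ ρ * G s) (𝓝[≠] (s₀ : ℂ)) (𝓝 L) := by
  obtain ⟨U, hUo, hUc, hUsub, hGm, hGZ⟩ := hG
  have h1U : (1 : ℂ) ∈ U := hUsub (Or.inl (by simp))
  have hsU : (s₀ : ℂ) ∈ U := hUsub (Or.inr rfl)
  have hpc := (hUo.isConnected_iff_isPathConnected).1 hUc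
  obtain ⟨γ, hγ⟩ := hpc.joinedIn _ h1U _ hsU
  obtain ⟨K, hK⟩ : ∃ K : ℕ, ∀ t, -(K:ℝ) < (γ t).re := by
    have hc : IsCompact (Set.range fun t => (γ t).re) :=
      isCompact_range (Complex.continuous_re.comp γ.continuous)
    obtain ⟨b, hb⟩ := hc.bddBelow
    obtain ⟨K, hK⟩ := exists_nat_gt (-b)
    exact ⟨K, fun t => by have := hb ⟨t, rfl⟩; simp only at this; linarith⟩
  obtain ⟨P, hP, E, hE, R, hPE⟩ := hcont K
  have hKs : -(K:ℝ) < s₀ := by simpa using hK 1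
  have hhalf : ∀ b : ℝ, IsOpen {s : ℂ | b < s.re} := fun b =>
    isOpen_lt continuous_const Complex.continuous_re
  have hPd : Differentiable ℂ fun s => P.eval s := P.differentiable
  -- the relation `P Z = E` on the half-plane `Re s > s₀`
  have hPZ : Set.EqOn (fun s => P.eval s * Z s) E {s | s₀ < s.re} := by
    have a1 : AnalyticOnNhd ℂ (fun s => P.eval s * Z s) {s | s₀ < s.re} :=
      (hPd.differentiableOn.mul hZ).analyticOnNhd (hhalf _)
    have a2 : AnalyticOnNhd ℂ E {s | s₀ < s.re} :=
      (hE.mono fun s hs => lt_trans hKs hs).analyticOnNhd (hhalf _)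
    have hz : ((max R s₀ + 1 : ℝ) : ℂ) ∈ {s : ℂ | s₀ < s.re} := by
      have := le_max_right R s₀
      simp only [Set.mem_ofPred_eq, Complex.ofReal_re]
      linarith
    refine a1.eqOn_of_preconnected_of_eventuallyEq a2
      (convex_halfSpace_re_gt _).isPreconnected hz ?_
    have hz' : ((max R s₀ + 1 : ℝ) : ℂ) ∈ {s : ℂ | R < s.re} := by
      have := le_max_left R s₀
      simp only [Set.mem_ofPred_eq, Complex.ofReal_re]
      linarith
    filter_upwards [(hhalf R).mem_nhds hz'] with s hs
    exact hPE s hs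
  set V := connectedComponentIn (U ∩ {s : ℂ | -(K:ℝ) < s.re}) (s₀ : ℂ) with hV
  have hsV' : (s₀ : ℂ) ∈ U ∩ {s : ℂ | -(K:ℝ) < s.re} := ⟨hsU, by simpa using hKs⟩
  have hVsub : V ⊆ U ∩ {s : ℂ | -(K:ℝ) < s.re} := connectedComponentIn_subset _ _
  have hsV : (s₀ : ℂ) ∈ V := mem_connectedComponentIn hsV'
  have hVpre : IsPreconnected V := isPreconnected_connectedComponentIn
  have h1V : (1 : ℂ) ∈ V := by
    have : Set.range γ ⊆ V := by
      refine (isPreconnected_range γ.continuous).subset_connectedComponentIn ⟨1, by simp⟩ ?_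
      rintro _ ⟨t, rfl⟩
      exact ⟨hγ t, hK t⟩
    exact this ⟨0, by simp⟩
  have hEm : ∀ s ∈ V, MeromorphicAt E s := fun s hs =>
    ((hE.analyticOnNhd (hhalf _)) s (hVsub hs).2).meromorphicAt
  have hPm : ∀ s, MeromorphicAt (fun s => P.eval s) s := fun s =>
    ((hPd.differentiableOn (s := Set.univ)).analyticOnNhd isOpen_univ s trivial).meromorphicAt
  have hm : MeromorphicOn (fun s => P.eval s * G s - E s) V := fun s hs =>
    ((hPm s).mul (hGm s (hVsub hs).1)).sub (hEm s hs)
  have htop : meromorphicOrderAt (fun s => P.eval s * G s - E s) (s₀ : ℂ) = ⊤ := by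
    by_contra hne
    refine hm.meromorphicOrderAt_ne_top_of_isPreconnected hVpre hsV h1V hne ?_
    rw [meromorphicOrderAt_eq_top_iff]
    refine nhdsWithin_le_nhds ?_
    filter_upwards [(hhalf 0).mem_nhds (show (1:ℂ) ∈ {s : ℂ | (0:ℝ) < s.re} by simp)] with s hs
    rw [hGZ s hs, sub_eq_zero]
    exact hPZ (lt_trans hs₀ hs)
  rw [meromorphicOrderAt_eq_top_iff] at htop
  -- the punctured right half-line at `s₀`
  have hline : Tendsto (fun ε : ℝ => ((s₀ + ε : ℝ) : ℂ)) (𝓝[>] 0) (𝓝[≠] (s₀ : ℂ)) := by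
    refine tendsto_nhdsWithin_iff.2 ⟨?_, ?_⟩
    · have : Tendsto (fun ε : ℝ => ((s₀ + ε : ℝ) : ℂ)) (𝓝 0) (𝓝 ((s₀ + 0 : ℝ) : ℂ)) :=
        (Continuous.tendsto (by fun_prop) _)
      rw [add_zero] at this
      exact this.mono_left nhdsWithin_le_nhds
    · filter_upwards [self_mem_nhdsWithin] with ε hε
      have : (0:ℝ) < ε := hε
      simp [this.ne']
  have hlimG : Tendsto (fun ε : ℝ => (((s₀ + ε : ℝ) : ℂ) - s₀) ^ ρ * G ((s₀ + ε : ℝ) : ℂ))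
      (𝓝[>] 0) (𝓝 L) := by
    refine hlim.congr' ?_
    filter_upwards [hline.eventually htop, hline.eventually (PolyCont.eventually_ne hP _),
      self_mem_nhdsWithin] with ε h1 h2 h3
    have h3 : (0:ℝ) < ε := h3
    have h4 : P.eval (((s₀ + ε : ℝ) : ℂ)) * Z ((s₀ + ε : ℝ) : ℂ) = E ((s₀ + ε : ℝ) : ℂ) :=
      hPZ (by simpa using h3)
    rw [sub_eq_zero, ← h4] at h1
    rw [mul_left_cancel₀ h2 h1]
    congr 2
    push_cast
    ring
  have hmer : MeromorphicAt (fun s : ℂ => (s - (s₀ : ℂ)) ^ ρ * G s) (s₀ : ℂ) :=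
    (((MeromorphicAt.id _).sub (MeromorphicAt.const _ _)).pow ρ).mul (hGm _ hsU)
  obtain ⟨c, hc⟩ : ∃ c, Tendsto (fun s : ℂ => (s - (s₀ : ℂ)) ^ ρ * G s) (𝓝[≠] (s₀ : ℂ)) (𝓝 c) := by
    refine tendsto_nhds_of_meromorphicOrderAt_nonneg hmer ?_
    by_contra hneg
    push Not at hneg
    have h1 := (tendsto_cobounded_of_meromorphicOrderAt_neg hneg).comp hline
    exact not_tendsto_atTop_of_tendsto_nhds hlimG.norm (tendsto_norm_atTop_iff_cobounded.2 h1)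
  rwa [tendsto_nhds_unique (hc.comp hline) hlimG] at hc

end continuation

/-! ### The normal cone of the face through the diagonal point -/

section geometry

variable {n : ℕ}

/-- The vector `α - (t₀, …, t₀)`. -/
def dv (t₀ : ℝ) (α : Fin n → ℕ) : Fin n → ℝ := fun i => (α i : ℝ) - t₀

lemma dotR_dv (t₀ : ℝ) (α : Fin n → ℕ) (v : Fin n → ℝ) :
    dotR (dv t₀ α) v = dotR (cv α) v - t₀ * ∑ i, v i := by
  simp [dotR, dv, cv, sub_mul, Finset.sum_sub_distrib, Finset.mul_sum]

lemma dotR_dv' (t₀ : ℝ) (α : Fin n → ℕ) (v : Fin n → ℝ) :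
    dotR (dv t₀ α) v = dotR v (cv α) - dotR v (fun _ => t₀) := by
  rw [dotR_dv, dotR_comm v]
  simp [dotR, Finset.mul_sum, mul_comm]

/-- The inner normals of the faces of the polyhedron that contain `(t₀, …, t₀)`. -/
def Pc (A : Finset (Fin n → ℕ)) (t₀ : ℝ) : Set (Fin n → ℝ) :=
  {v | (∀ i, 0 ≤ v i) ∧ ∀ α ∈ A, 0 ≤ dotR (dv t₀ α) v}

lemma mem_Pc_iff {a : (Fin n → ℕ) → ℝ} {A : Finset (Fin n → ℕ)} (hA : ∀ α ∈ A, a α ≠ 0)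
    (hmin : ∀ α, a α ≠ 0 → ∃ β ∈ A, β ≤ α) {t₀ : ℝ}
    (ht : (fun _ => t₀) ∈ newtonPolyhedron {α | a α ≠ 0}) {v : Fin n → ℝ} (hv : ∀ i, 0 ≤ v i) :
    v ∈ Pc A t₀ ↔ (fun _ => t₀) ∈ traceFace (newtonPolyhedron {α | a α ≠ 0}) v := by
  constructor
  · rintro ⟨-, h⟩
    refine ⟨ht, fun z hz => newton_ge hmin hv (fun α hα => ?_) hz⟩
    have := h α hα
    rw [dotR_dv'] at this
    linarith
  · rintro ⟨-, h⟩
    refine ⟨hv, fun α hα => ?_⟩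
    have := h _ (cv_mem_newton (hA α hα))
    rw [dotR_dv']
    linarith

lemma traceFace_eq_val {Γ : Set (Fin n → ℝ)} {v x y : Fin n → ℝ} (hx : x ∈ traceFace Γ v)
    (hy : y ∈ traceFace Γ v) : dotR v x = dotR v y :=
  le_antisymm (hx.2 _ hy.1) (hy.2 _ hx.1)

lemma dotL_mem_annihilator {Γ : Set (Fin n → ℝ)} {v : Fin n → ℝ} :
    dotL v ∈ (vectorSpan ℝ (traceFace Γ v)).dualAnnihilator := by
  rw [Submodule.mem_dualAnnihilator]
  intro x hx
  rw [vectorSpan_def] at hx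
  refine Submodule.span_induction (p := fun x _ => dotL v x = 0) ?_ (by simp) ?_ ?_ hx
  · rintro _ ⟨y, hy, z, hz, rfl⟩
    simp only [vsub_eq_sub, map_sub, dotL_apply]
    rw [traceFace_eq_val hy hz, sub_self]
  · intro x y _ _ hx hy
    rw [map_add, hx, hy, add_zero]
  · intro c x _ hx
    rw [map_smul, hx, smul_zero]

lemma dotL_injective : Function.Injective (dotL (n := n)) := by
  intro v w h
  ext i
  have := LinearMap.congr_fun h (Pi.single i 1)
  simpa [dotL_apply, dotR, Pi.single_apply] using this

lemma exists_dotL (φ : Module.Dual ℝ (Fin n → ℝ)) : ∃ v, φ = dotL v := by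
  refine ⟨fun i => φ (Pi.single i 1), ?_⟩
  refine LinearMap.pi_ext' fun i => ?_
  ext
  simp [dotL_apply, dotR, Pi.single_apply]

/-- The cone of normals of the faces containing `(t₀, …, t₀)` is generated by the facet normals:
an extreme normal cuts out a face of codimension one. -/
lemma cone_gen {a : (Fin n → ℕ) → ℝ} {A : Finset (Fin n → ℕ)} (hA : ∀ α ∈ A, a α ≠ 0)
    (hmin : ∀ α, a α ≠ 0 → ∃ β ∈ A, β ≤ α) {t₀ : ℝ} {Γ τ₀ : Set (Fin n → ℝ)}
    (hΓ : Γ = newtonPolyhedron {α | a α ≠ 0}) (ht : (fun _ => t₀) ∈ Γ)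
    (hτmin : ∀ τ : Set (Fin n → ℝ), IsFaceOf Γ τ → (fun _ => t₀) ∈ τ → τ₀ ⊆ τ)
    {r : ℕ} {ξ : Fin r → Fin n → ℕ} (hξ0 : ∀ j, ξ j ≠ 0)
    (hξall : ∀ τ : Set (Fin n → ℝ), IsFaceOf Γ τ → faceDim τ = n - 1 → τ₀ ⊆ τ →
      ∃ j, τ = traceFace Γ (fun i => (ξ j i : ℝ)))
    {v : Fin n → ℝ} (hv : v ∈ Pc A t₀) :
    ∃ c : Fin r → ℝ, (∀ j, 0 ≤ c j) ∧ v = ∑ j, c j • cv (ξ j) := by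
  let g : (A ⊕ Fin n) → (Fin n → ℝ) →ₗ[ℝ] ℝ :=
    Sum.elim (fun α => dotL (dv t₀ α.1)) (fun i => LinearMap.proj i)
  obtain ⟨V, hV, hgen⟩ := extreme_gen g fun x hx => funext fun i => hx (Sum.inr i)
  obtain ⟨c, hc, rfl⟩ := hgen v (by
    rintro (α | i)
    · exact hv.2 α.1 α.2
    · exact hv.1 i)
  refine Finset.sum_induction _
    (fun v => ∃ c : Fin r → ℝ, (∀ j, 0 ≤ c j) ∧ v = ∑ j, c j • cv (ξ j)) ?_ ?_ ?_
  · rintro x y ⟨c, hc, rfl⟩ ⟨d, hd, rfl⟩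
    exact ⟨c + d, fun j => add_nonneg (hc j) (hd j), by
      simp [add_smul, Finset.sum_add_distrib]⟩
  · exact ⟨0, fun _ => le_rfl, by simp⟩
  intro w hw
  obtain ⟨hw0, hwg, hext⟩ := hV w hw
  have hwnn : ∀ i, 0 ≤ w i := fun i => hwg (Sum.inr i)
  have hwP : w ∈ Pc A t₀ := ⟨hwnn, fun α hα => hwg (Sum.inl ⟨α, hα⟩)⟩
  have htw : (fun _ => t₀) ∈ traceFace Γ w := by
    rw [hΓ] at ht ⊢
    exact (mem_Pc_iff hA hmin ht hwnn).1 hwP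
  -- a vector orthogonal to the face is a multiple of `w`
  have horth : ∀ d, dotL d ∈ (vectorSpan ℝ (traceFace Γ w)).dualAnnihilator →
      ∃ c : ℝ, d = c • w := by
    intro d hd
    rw [Submodule.mem_dualAnnihilator] at hd
    refine hext d ?_
    rintro (α | i) h
    · have hα : cv α.1 ∈ traceFace Γ w := by
        refine ⟨hΓ ▸ cv_mem_newton (hA _ α.2), fun z hz => ?_⟩
        have h : dotR (dv t₀ α.1) w = 0 := h
        rw [dotR_dv'] at h
        have := htw.2 z hz
        linarith
      have h1 := hd _ (vsub_mem_vectorSpan ℝ hα htw)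
      show dotR (dv t₀ α.1) d = 0
      rw [dotR_comm]
      exact h1
    · have h : w i = 0 := h
      have hi : (fun _ => t₀) + Pi.single i 1 ∈ traceFace Γ w := by
        refine ⟨?_, fun z hz => ?_⟩
        · rw [hΓ] at ht ⊢
          refine newton_add ht fun k => ?_
          by_cases hk : k = i
          · subst hk; simp
          · simp [hk]
        · rw [dotR_add_right]
          have : dotR w (Pi.single i 1) = 0 := by simp [dotR, Pi.single_apply, h]
          rw [this, add_zero]
          exact htw.2 z hz
      have h1 := hd _ (vsub_mem_vectorSpan ℝ hi htw)
      have : dotL d (Pi.single i 1) = 0 := by simpa using h1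
      show d i = 0
      simpa [dotL_apply, dotR, Pi.single_apply] using this
  have hdim : faceDim (traceFace Γ w) = n - 1 := by
    have hann : (vectorSpan ℝ (traceFace Γ w)).dualAnnihilator = Submodule.span ℝ {dotL w} := by
      apply le_antisymm
      · intro φ hφ
        obtain ⟨d, rfl⟩ := exists_dotL φ
        obtain ⟨c, rfl⟩ := horth d hφ
        refine Submodule.mem_span_singleton.2 ⟨c, ?_⟩
        ext
        simp [dotL_apply, dotR_smul_left]
      · rw [Submodule.span_singleton_le_iff_mem]
        exact dotL_mem_annihilator
    have h1 := Subspace.finrank_add_finrank_dualAnnihilator_eq (vectorSpan ℝ (traceFace Γ w))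
    have hne : dotL w ≠ 0 := fun h => hw0 (dotL_injective (h.trans (by
      ext; simp [dotL_apply, dotR])))
    rw [hann, finrank_span_singleton hne, Module.finrank_fin_fun] at h1
    unfold faceDim
    omega
  have hface : IsFaceOf Γ (traceFace Γ w) := ⟨w, hwnn, rfl⟩
  obtain ⟨j, hj⟩ := hξall _ hface hdim (hτmin _ hface htw)
  obtain ⟨k, hk⟩ := horth (cv (ξ j)) (by rw [hj]; exact dotL_mem_annihilator)
  have hkpos : 0 < k := by
    obtain ⟨i, hi⟩ := Function.ne_iff.1 (hξ0 j)
    have h1 : (ξ j i : ℝ) = k * w i := congrFun hk i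
    have h2 : 0 < (ξ j i : ℝ) := by exact_mod_cast Nat.pos_of_ne_zero hi
    rw [h1] at h2
    exact pos_of_mul_pos_left h2 (hwnn i)
  refine ⟨Pi.single j (c w * k⁻¹), fun i => ?_, ?_⟩
  · by_cases h : i = j
    · subst h
      simpa using mul_nonneg (hc w) (inv_pos.2 hkpos).le
    · simp [h]
  · rw [Finset.sum_eq_single j (fun b _ hb => by simp [hb]) (by simp), hk]
    simp [smul_smul, hkpos.ne']

/-- A compact face is cut out by strictly positive functionals only. -/
lemma pos_of_compact {a : (Fin n → ℕ) → ℝ} {t₀ : ℝ} {v : Fin n → ℝ} (hv : ∀ i, 0 ≤ v i)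
    (hc : IsCompact (traceFace (newtonPolyhedron {α | a α ≠ 0}) v))
    (ht : (fun _ => t₀) ∈ traceFace (newtonPolyhedron {α | a α ≠ 0}) v) (i : Fin n) : 0 < v i := by
  refine (hv i).lt_of_ne fun h => ?_
  obtain ⟨b, hb⟩ := (hc.image (continuous_apply i)).bddAbove
  set k : ℝ := max 0 (b - t₀) + 1 with hk
  have hk0 : 0 ≤ k := by have := le_max_left 0 (b - t₀); linarith
  have hmem : (fun _ => t₀) + Pi.single i k ∈ traceFace (newtonPolyhedron {α | a α ≠ 0}) v := by
    refine ⟨newton_add ht.1 fun l => ?_, fun z hz => ?_⟩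
    · by_cases hl : l = i
      · subst hl; simpa using hk0
      · simp [hl]
    · rw [dotR_add_right]
      have : dotR v (Pi.single i k) = 0 := by simp [dotR, Pi.single_apply, ← h]
      rw [this, add_zero]
      exact ht.2 z hz
  have := hb ⟨_, hmem, rfl⟩
  have h2 := le_max_right 0 (b - t₀)
  simp at this
  linarith

/-- The inclusion of `ℝ^{n-ρ}` as the last coordinates of `ℝⁿ`. -/
def iota (n ρ : ℕ) : (Fin (n - ρ) → ℝ) →ₗ[ℝ] (Fin n → ℝ) where
  toFun b := fun i => if h : (i : ℕ) < ρ then 0 else b ⟨(i : ℕ) - ρ, by have := i.isLt; omega⟩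
  map_add' x y := by ext i; dsimp only [Pi.add_apply]; split_ifs <;> simp
  map_smul' c x := by
    ext i; dsimp only [Pi.smul_apply, RingHom.id_apply, smul_eq_mul]; split_ifs <;> simp

lemma iota_apply (ρ : ℕ) (b : Fin (n - ρ) → ℝ) (i : Fin n) : iota n ρ b i =
    if h : (i : ℕ) < ρ then 0 else b ⟨(i : ℕ) - ρ, by have := i.isLt; omega⟩ := rfl

lemma ex_iota (ρ : ℕ) (b : Fin (n - ρ) → ℝ) : ex (iota n ρ b) = padR ρ (ex b) := by
  ext i
  simp only [ex, iota_apply, padR]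
  split_ifs <;> simp

lemma sum_iota {ρ : ℕ} (hρ : ρ ≤ n) (b : Fin (n - ρ) → ℝ) : ∑ i, iota n ρ b i = ∑ k, b k := by
  obtain ⟨m, rfl⟩ := Nat.exists_eq_add_of_le hρ
  rw [Fin.sum_univ_add]
  have h1 : ∀ i : Fin ρ, iota (ρ + m) ρ b (Fin.castAdd m i) = 0 := fun i => by simp [iota_apply]
  have h2 : ∀ i : Fin m, iota (ρ + m) ρ b (Fin.natAdd ρ i) = b ⟨i, by omega⟩ := fun i => by
    simp [iota_apply]
  simp only [h1, h2, Finset.sum_const_zero, zero_add]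
  exact Fintype.sum_equiv (finCongr (by omega)) _ _ fun i => rfl

lemma iota_injective {ρ : ℕ} (hρ : ρ ≤ n) : Function.Injective (iota n ρ) := by
  intro x y h
  ext k
  have h1 := congrFun h ⟨ρ + k, by omega⟩
  simpa [iota_apply] using h1

lemma range_iota {ρ : ℕ} (hρ : ρ ≤ n) : LinearMap.range (iota n ρ) =
    Submodule.span ℝ {x : Fin n → ℝ | ∃ i : Fin n, ρ ≤ (i : ℕ) ∧ x = Pi.single i 1} := by
  apply le_antisymm
  · rintro _ ⟨b, rfl⟩
    have : iota n ρ b = ∑ i, iota n ρ b i • (Pi.single i 1 : Fin n → ℝ) :=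
      pi_eq_sum_univ' (iota n ρ b) |>.trans (by simp)
    rw [this]
    refine Submodule.sum_mem _ fun i _ => ?_
    by_cases h : (i : ℕ) < ρ
    · have : iota n ρ b i = 0 := by simp [iota_apply, h]
      rw [this, zero_smul]; exact Submodule.zero_mem _
    · exact Submodule.smul_mem _ _ (Submodule.subset_span ⟨i, not_lt.1 h, rfl⟩)
  · rw [Submodule.span_le]
    rintro _ ⟨i, hi, rfl⟩
    refine ⟨Pi.single ⟨(i : ℕ) - ρ, by omega⟩ 1, ?_⟩
    ext k
    rw [iota_apply]
    split_ifs with h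
    · rw [Pi.single_eq_of_ne]
      rintro rfl
      omega
    · by_cases hk : k = i
      · subst hk; simp
      · rw [Pi.single_eq_of_ne hk, Pi.single_eq_of_ne]
        simp only [ne_eq, Fin.mk.injEq]
        intro h'
        exact hk (Fin.ext (by omega))

end geometry

/-! ### The scaled coordinates and the integrable majorant -/

/-- The geometry of the face through `(t₀, …, t₀)` in a splitting of `ℝⁿ` into the span of its
normals, parametrized by `ℓ`, and the last `n - ρ` coordinate directions; `u₀` is an inner normal
of that face and `Φ` is the resulting isomorphism `ℝ^ρ × ℝ^{n-ρ} ≅ ℝⁿ`. -/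
structure Geo {n : ℕ} (A : Finset (Fin n → ℕ)) (t₀ : ℝ) (ρ : ℕ) where
  hρ : ρ ≤ n
  t₀_pos : 0 < t₀
  u₀ : Fin n → ℝ
  u₀_pos : ∀ i, 0 < u₀ i
  u₀_mem : ∀ α ∈ A, 0 ≤ dotR (dv t₀ α) u₀
  tight_ne : ∃ α ∈ A, dotR (dv t₀ α) u₀ = 0
  ℓ : (Fin ρ → ℝ) →ₗ[ℝ] (Fin n → ℝ)
  mem_range : ∀ v ∈ Pc A t₀, ∃ a, ℓ a = v
  tight : ∀ α ∈ A, dotR (dv t₀ α) u₀ = 0 → ∀ a, dotR (dv t₀ α) (ℓ a) = 0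
  Φ : ((Fin ρ → ℝ) × (Fin (n - ρ) → ℝ)) ≃ₗ[ℝ] (Fin n → ℝ)
  Φ_apply : ∀ p, Φ p = ℓ p.1 + iota n ρ p.2

namespace Geo

variable {n : ℕ} {A : Finset (Fin n → ℕ)} {t₀ : ℝ} {ρ : ℕ} (Γ : Geo A t₀ ρ)

/-- The exponents on the face through `(t₀, …, t₀)`. -/
def At : Finset (Fin n → ℕ) := A.filter fun α => dotR (dv t₀ α) Γ.u₀ = 0

lemma mem_At {α : Fin n → ℕ} : α ∈ Γ.At ↔ α ∈ A ∧ dotR (dv t₀ α) Γ.u₀ = 0 := by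
  simp [At]

lemma At_nonempty : Γ.At.Nonempty := by
  obtain ⟨α, h1, h2⟩ := Γ.tight_ne
  exact ⟨α, Γ.mem_At.2 ⟨h1, h2⟩⟩

lemma pos_of_not_tight {α : Fin n → ℕ} (hα : α ∈ A) (h : α ∉ Γ.At) :
    0 < dotR (dv t₀ α) Γ.u₀ :=
  (Γ.u₀_mem α hα).lt_of_ne fun h' => h (Γ.mem_At.2 ⟨hα, h'.symm⟩)

/-- In a transversal direction some exponent of the face grows: otherwise a small perturbation of
the normal `u₀` in that direction would still be a normal, hence in the span of the normals. -/
lemma exists_pos {b : Fin (n - ρ) → ℝ} (hb : b ≠ 0) :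
    ∃ α ∈ Γ.At, 0 < dotR (dv t₀ α) (iota n ρ b) := by
  by_contra! hcon
  have hev : ∀ᶠ δ : ℝ in 𝓝[>] 0, Γ.u₀ - δ • iota n ρ b ∈ Pc A t₀ := by
    have hc : ∀ v : Fin n → ℝ, Tendsto (fun δ : ℝ => dotR v (Γ.u₀ - δ • iota n ρ b)) (𝓝[>] 0)
        (𝓝 (dotR v Γ.u₀)) := by
      intro v
      have : Continuous fun δ : ℝ => dotR v (Γ.u₀ - δ • iota n ρ b) :=
        (continuous_dotR v).comp (by fun_prop)
      have h := (this.tendsto 0).mono_left (nhdsWithin_le_nhds (s := Set.Ioi 0))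
      simpa using h
    have h1 : ∀ᶠ δ : ℝ in 𝓝[>] 0, ∀ i, 0 ≤ (Γ.u₀ - δ • iota n ρ b) i := by
      rw [eventually_all]
      intro i
      have h := hc (Pi.single i 1)
      have e : ∀ x : Fin n → ℝ, dotR (Pi.single i 1) x = x i := fun x => by
        simp [dotR, Pi.single_apply]
      simp only [e] at h
      exact (h.eventually (lt_mem_nhds (Γ.u₀_pos i))).mono fun _ h => le_of_lt h
    have h2 : ∀ᶠ δ : ℝ in 𝓝[>] 0, ∀ α ∈ A, 0 ≤ dotR (dv t₀ α) (Γ.u₀ - δ • iota n ρ b) := by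
      rw [Finset.eventually_all]
      intro α hα
      by_cases ht : α ∈ Γ.At
      · filter_upwards [self_mem_nhdsWithin] with δ hδ
        have hδ : (0:ℝ) < δ := hδ
        rw [dotR_sub_right, dotR_smul_right, (Γ.mem_At.1 ht).2, zero_sub, ← mul_neg]
        exact mul_nonneg hδ.le (neg_nonneg.2 (hcon α ht))
      · exact ((hc _).eventually (lt_mem_nhds (Γ.pos_of_not_tight hα ht))).mono
          fun _ h => le_of_lt h
    filter_upwards [h1, h2] with δ a1 a2 using ⟨a1, a2⟩
  obtain ⟨δ, h1, h2⟩ := (hev.and self_mem_nhdsWithin).exists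
  have h2 : (0:ℝ) < δ := h2
  obtain ⟨a₁, e1⟩ := Γ.mem_range _ h1
  obtain ⟨a₀, e0⟩ := Γ.mem_range _ (show Γ.u₀ ∈ Pc A t₀ from ⟨fun i => (Γ.u₀_pos i).le, Γ.u₀_mem⟩)
  have : Γ.Φ (a₁ - a₀, δ • b) = Γ.Φ 0 := by
    rw [Γ.Φ_apply, map_zero]
    simp only [map_sub, map_smul, e1, e0]
    abel
  have h3 := congrArg Prod.snd (Γ.Φ.injective this)
  exact hb ((smul_eq_zero.1 h3).resolve_left h2.ne')

/-- By compactness of the sphere, the growth in transversal directions is uniform; it makes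
the transversal integrand decay exponentially. -/
lemma coercive : ∃ c : ℝ, 0 < c ∧ ∀ b : Fin (n - ρ) → ℝ,
    ∃ α ∈ Γ.At, c * ‖b‖ ≤ dotR (dv t₀ α) (iota n ρ b) := by
  set D : (Fin (n - ρ) → ℝ) → ℝ := fun b => ∑ α ∈ Γ.At, max (dotR (dv t₀ α) (iota n ρ b)) 0 with hD
  have hDc : Continuous D := continuous_finsetSum _ fun α _ =>
    ((continuous_dotR _).comp (LinearMap.continuous_of_finiteDimensional _)).max continuous_const
  have hD0 : ∀ b, b ≠ 0 → 0 < D b := by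
    intro b hb
    obtain ⟨α, hα, h⟩ := Γ.exists_pos hb
    exact Finset.sum_pos' (fun _ _ => le_max_right _ _) ⟨α, hα, lt_max_of_lt_left h⟩
  have hcoer : ∃ c : ℝ, 0 < c ∧ ∀ b, c * ‖b‖ ≤ D b := by
    rcases (Metric.sphere (0 : Fin (n - ρ) → ℝ) 1).eq_empty_or_nonempty with he | hne
    · refine ⟨1, one_pos, fun b => ?_⟩
      by_cases hb : b = 0
      · subst hb
        simpa using Finset.sum_nonneg fun _ _ => le_max_right _ _
      · exfalso
        have : (‖b‖⁻¹ • b) ∈ Metric.sphere (0 : Fin (n - ρ) → ℝ) 1 := by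
          simp [norm_smul, hb]
        rw [he] at this
        exact this
    · obtain ⟨b₀, hb₀, hmin⟩ := (isCompact_sphere (0 : Fin (n - ρ) → ℝ) 1).exists_isMinOn hne
        hDc.continuousOn
      have hb₀' : b₀ ≠ 0 := by
        rintro rfl
        simp at hb₀
      refine ⟨D b₀, hD0 _ hb₀', fun b => ?_⟩
      by_cases hb : b = 0
      · subst hb
        simpa using Finset.sum_nonneg fun _ _ => le_max_right _ _
      · have hnb : 0 < ‖b‖ := norm_pos_iff.2 hb
        have hmem : (‖b‖⁻¹ • b) ∈ Metric.sphere (0 : Fin (n - ρ) → ℝ) 1 := by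
          simp [norm_smul, hb]
        have h1 : D b₀ ≤ D (‖b‖⁻¹ • b) := hmin hmem
        have h2 : D (‖b‖⁻¹ • b) = ‖b‖⁻¹ * D b := by
          simp only [hD, map_smul, dotR_smul_right, Finset.mul_sum]
          refine Finset.sum_congr rfl fun α _ => ?_
          rw [mul_max_of_nonneg _ _ (inv_pos.2 hnb).le, mul_zero]
        rw [h2] at h1
        calc D b₀ * ‖b‖ ≤ ‖b‖⁻¹ * D b * ‖b‖ := mul_le_mul_of_nonneg_right h1 hnb.le
          _ = D b := by field_simp
  obtain ⟨c, hc, h⟩ := hcoer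
  have hcard : (0:ℝ) < Γ.At.card := by exact_mod_cast Finset.card_pos.2 Γ.At_nonempty
  refine ⟨c / Γ.At.card, by positivity, fun b => ?_⟩
  by_cases hb : b = 0
  · obtain ⟨α, hα⟩ := Γ.At_nonempty
    exact ⟨α, hα, by subst hb; simp [dotR]⟩
  have hnb : 0 < ‖b‖ := norm_pos_iff.2 hb
  obtain ⟨α, hα, hle⟩ := Finset.exists_le_of_sum_le Γ.At_nonempty
    (f := fun _ => c / Γ.At.card * ‖b‖) (g := fun α => max (dotR (dv t₀ α) (iota n ρ b)) 0) (by
      refine le_trans (le_of_eq ?_) (h b)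
      rw [Finset.sum_const, nsmul_eq_mul]
      field_simp)
  refine ⟨α, hα, ?_⟩
  rcases le_max_iff.1 hle with h' | h'
  · exact h'
  · exfalso
    have : 0 < c / Γ.At.card * ‖b‖ := by positivity
    linarith

/-- The substitution `u = ℓ(a / ε) + b`. -/
def T (ε : ℝ) (p : (Fin ρ → ℝ) × (Fin (n - ρ) → ℝ)) : Fin n → ℝ := Γ.Φ (ε⁻¹ • p.1, p.2)

lemma T_apply (ε : ℝ) (p : (Fin ρ → ℝ) × (Fin (n - ρ) → ℝ)) :
    Γ.T ε p = ε⁻¹ • Γ.ℓ p.1 + iota n ρ p.2 := by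
  rw [T, Γ.Φ_apply, map_smul]

lemma continuous_T (ε : ℝ) : Continuous (Γ.T ε) :=
  Γ.Φ.toContinuousLinearEquiv.continuous.comp
    (by fun_prop : Continuous fun p : (Fin ρ → ℝ) × (Fin (n - ρ) → ℝ) => (ε⁻¹ • p.1, p.2))

lemma measurableEmbedding_T {ε : ℝ} (hε : ε ≠ 0) : MeasurableEmbedding (Γ.T ε) := by
  have h1 : MeasurableEmbedding fun p : (Fin ρ → ℝ) × (Fin (n - ρ) → ℝ) => (ε⁻¹ • p.1, p.2) :=
    ((Homeomorph.smulOfNeZero ε⁻¹ (inv_ne_zero hε)).prodCongr (Homeomorph.refl _)).measurableEmbedding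
  exact Γ.Φ.toContinuousLinearEquiv.toHomeomorph.measurableEmbedding.comp h1

/-- Lebesgue measure in the scaled coordinates: the determinant of `Φ` enters only through the
constant `c`, which cancels against the same constant in the volume of `C`. -/
lemma exists_volume : ∃ c : ENNReal, c ≠ 0 ∧ c ≠ ⊤ ∧ ∀ ε : ℝ, 0 < ε →
    (volume : Measure (Fin n → ℝ)) =
      (c * ENNReal.ofReal ((ε ^ ρ)⁻¹)) • Measure.map (Γ.T ε) volume := by
  set e := Γ.Φ.toContinuousLinearEquiv
  have : (volume : Measure ((Fin ρ → ℝ) × (Fin (n - ρ) → ℝ))).IsAddHaarMeasure := by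
    exact Measure.prod.instIsAddHaarMeasure _ _
  have hH : (Measure.map e volume).IsAddHaarMeasure := e.isAddHaarMeasure_map _
  obtain ⟨c, hc⟩ : ∃ c : ENNReal, c ≠ 0 ∧ c ≠ ⊤ ∧
      (volume : Measure (Fin n → ℝ)) = c • Measure.map e volume := by
    refine ⟨_, ?_, ?_, Measure.isAddLeftInvariant_eq_smul volume (Measure.map e volume)⟩
    · simp [Measure.addHaarScalarFactor_pos_of_isAddHaarMeasure volume (Measure.map e volume) |>.ne']
    · simp
  refine ⟨c, hc.1, hc.2.1, fun ε hε => ?_⟩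
  have h1 : Measure.map (fun p : (Fin ρ → ℝ) × (Fin (n - ρ) → ℝ) => (ε⁻¹ • p.1, p.2)) volume =
      ENNReal.ofReal (ε ^ ρ) • volume := by
    have := Measure.map_prod_map (volume : Measure (Fin ρ → ℝ)) (volume : Measure (Fin (n - ρ) → ℝ))
      (f := fun x => ε⁻¹ • x) (g := id) (by fun_prop) measurable_id
    rw [Measure.map_id, Measure.map_addHaar_smul _ (inv_ne_zero hε.ne')] at this
    rw [Measure.volume_eq_prod]
    refine Eq.trans this.symm ?_
    rw [Module.finrank_fin_fun, Measure.prod_smul_left]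
    simp [abs_of_pos hε]
  have h2 : Measure.map (Γ.T ε) volume = ENNReal.ofReal (ε ^ ρ) • Measure.map e volume := by
    rw [← Measure.map_smul, ← h1, Measure.map_map e.continuous.measurable (by fun_prop)]
    rfl
  rw [h2, smul_smul, mul_assoc, ← ENNReal.ofReal_mul (by positivity), inv_mul_cancel₀ (by positivity)]
  simpa using hc.2.2

/-- The scaled comparison integrands have an integrable majorant independent of `ε`. -/
lemma domination {s₀ : ℝ} (hs₀ : s₀ = -1 / t₀) : ∃ D : (Fin ρ → ℝ) × (Fin (n - ρ) → ℝ) → ℝ,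
    Integrable D ∧ (∀ p, 0 ≤ D p) ∧ ∀ᶠ ε in 𝓝[>] (0:ℝ), ∀ p, (∀ i, Γ.T ε p i < 0) →
      Es (Γ.T ε p) * Mf A (Γ.T ε p) ^ (s₀ + ε) ≤ D p := by
  have ht := Γ.t₀_pos
  obtain ⟨c, hc, hco⟩ := Γ.coercive
  -- `ℓ` and `iota` are bounded below and above
  obtain ⟨k, hk, hkℓ⟩ : ∃ k : ℝ, 0 < k ∧ ∀ a, k * ‖a‖ ≤ ∑ i, |Γ.ℓ a i| := by
    have hinj : LinearMap.ker Γ.ℓ = ⊥ := by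
      rw [LinearMap.ker_eq_bot]
      intro x y h
      have : Γ.Φ (x, 0) = Γ.Φ (y, 0) := by rw [Γ.Φ_apply, Γ.Φ_apply]; simp [h]
      exact congrArg Prod.fst (Γ.Φ.injective this)
    obtain ⟨K, hK, hanti⟩ := LinearMap.exists_antilipschitzWith _ hinj
    refine ⟨(K:ℝ)⁻¹, by positivity, fun a => ?_⟩
    have h1 := hanti.le_mul_dist a 0
    rw [map_zero, dist_zero_right, dist_zero_right] at h1
    have h2 : ‖Γ.ℓ a‖ ≤ ∑ i, |Γ.ℓ a i| := by
      refine (pi_norm_le_iff_of_nonneg (Finset.sum_nonneg fun _ _ => abs_nonneg _)).2 fun i => ?_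
      exact Finset.single_le_sum (f := fun i => |Γ.ℓ a i|) (fun _ _ => abs_nonneg _)
        (Finset.mem_univ i)
    rw [inv_mul_le_iff₀ (by positivity)]
    exact h1.trans (by gcongr)
  have hio : ∀ b : Fin (n - ρ) → ℝ, ∑ i, |iota n ρ b i| ≤ n * ‖b‖ := by
    intro b
    refine (Finset.sum_le_card_nsmul _ _ ‖b‖ fun i _ => ?_).trans (by simp)
    rw [iota_apply]
    split_ifs
    · simp
    · exact norm_le_pi_norm b _
  set κ : ℝ := c * (-s₀) / 4 with hκ
  have hs₀n : s₀ < 0 := by rw [hs₀]; exact div_neg_of_neg_of_pos (by norm_num) ht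
  have hκ0 : 0 < κ := by rw [hκ]; have := neg_pos.2 hs₀n; positivity
  have hexp : ∀ (m : ℕ) (κ : ℝ), 0 < κ → Integrable fun x : Fin m → ℝ => Real.exp (-κ * ‖x‖) := by
    intro m κ hκ
    rcases m.eq_zero_or_pos with rfl | hm
    · exact Integrable.of_finite
    have h1 : Integrable fun x : ℝ => Real.exp (-(κ / m) * |x|) := by
      have : (0:ℝ) < m := by exact_mod_cast hm
      have hb : 0 < κ / m := by positivity
      have i1 := integrableOn_exp_mul_Iic hb 0
      have i2 := integrableOn_exp_mul_Ioi (neg_lt_zero.2 hb) 0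
      rw [← integrableOn_univ, ← Set.Iic_union_Ioi (a := (0:ℝ))]
      refine IntegrableOn.union ?_ ?_
      · refine i1.congr_fun (fun x hx => ?_) measurableSet_Iic
        have hx : x ≤ 0 := hx
        simp only [abs_of_nonpos hx]
        ring_nf
      · refine i2.congr_fun (fun x hx => ?_) measurableSet_Ioi
        have hx : 0 < x := hx
        simp only [abs_of_pos hx]
    refine (Integrable.fintype_prod (𝕜 := ℝ) (μ := fun _ : Fin m => volume) (fun _ => h1)).mono'
      (by fun_prop) (Eventually.of_forall fun x => ?_)
    rw [Real.norm_eq_abs, Real.abs_exp, ← Real.exp_sum]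
    refine Real.exp_le_exp.2 ?_
    rw [← Finset.mul_sum]
    have h2 : ∑ i, |x i| ≤ m * ‖x‖ := by
      refine (Finset.sum_le_card_nsmul _ _ ‖x‖ fun i _ => norm_le_pi_norm x i).trans (by simp)
    have : (0:ℝ) < m := by exact_mod_cast hm
    have h3 : κ / m * ∑ i, |x i| ≤ κ * ‖x‖ := by
      calc κ / m * ∑ i, |x i| ≤ κ / m * (m * ‖x‖) := by gcongr
        _ = κ * ‖x‖ := by field_simp
    linarith
  refine ⟨fun p => Real.exp (-(t₀ * k) * ‖p.1‖) * Real.exp (-κ * ‖p.2‖), ?_, fun p => by positivity, ?_⟩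
  · exact (hexp ρ _ (by positivity)).mul_prod (hexp (n - ρ) _ hκ0)
  have hsm : ∀ᶠ ε in 𝓝[>] (0:ℝ), s₀ + ε < s₀ / 2 ∧ ε * (t₀ * n) < κ := by
    have h1 : Tendsto (fun ε : ℝ => s₀ + ε) (𝓝[>] 0) (𝓝 s₀) := by
      have : Continuous fun ε : ℝ => s₀ + ε := by fun_prop
      simpa using (this.tendsto 0).mono_left nhdsWithin_le_nhds
    have h2 : Tendsto (fun ε : ℝ => ε * (t₀ * n)) (𝓝[>] 0) (𝓝 0) := by
      have : Continuous fun ε : ℝ => ε * (t₀ * n) := by fun_prop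
      simpa using (this.tendsto 0).mono_left nhdsWithin_le_nhds
    exact (h1.eventually (gt_mem_nhds (by linarith))).and (h2.eventually (gt_mem_nhds hκ0))
  filter_upwards [hsm, self_mem_nhdsWithin] with ε h12 hε p hp
  obtain ⟨h1, h2⟩ := h12
  have hε : (0:ℝ) < ε := hε
  set u := Γ.T ε p with hu
  obtain ⟨α, hα, hαc⟩ := hco p.2
  have hαA := (Γ.mem_At.1 hα).1
  have hval : dotR (cv α) u = t₀ * ∑ i, u i + dotR (dv t₀ α) (iota n ρ p.2) := by
    have e1 := dotR_dv t₀ α u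
    have e2 : dotR (dv t₀ α) u = dotR (dv t₀ α) (iota n ρ p.2) := by
      rw [hu, T_apply, dotR_add_right, dotR_smul_right, Γ.tight α hαA (Γ.mem_At.1 hα).2, mul_zero,
        zero_add]
    linarith
  have hM : Real.exp (t₀ * ∑ i, u i + c * ‖p.2‖) ≤ Mf A u :=
    (Real.exp_le_exp.2 (by rw [hval]; linarith)).trans (exp_le_Mf u hαA)
  have hsneg : s₀ + ε < 0 := by linarith
  have hMs : Mf A u ^ (s₀ + ε) ≤ Real.exp ((t₀ * ∑ i, u i + c * ‖p.2‖) * (s₀ + ε)) := by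
    rw [Real.exp_mul]
    exact Real.rpow_le_rpow_of_nonpos (Real.exp_pos _) hM hsneg.le
  have hsum : ∑ i, u i ≤ -(ε⁻¹ * (k * ‖p.1‖)) + n * ‖p.2‖ := by
    have e1 : ∑ i, u i = -∑ i, |u i| := by
      rw [← Finset.sum_neg_distrib]
      exact Finset.sum_congr rfl fun i _ => by rw [abs_of_neg (hp i), neg_neg]
    have e2 : ∑ i, |ε⁻¹ * Γ.ℓ p.1 i| ≤ ∑ i, |u i| + ∑ i, |iota n ρ p.2 i| := by
      rw [← Finset.sum_add_distrib]
      refine Finset.sum_le_sum fun i _ => ?_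
      have : ε⁻¹ * Γ.ℓ p.1 i = u i - iota n ρ p.2 i := by rw [hu, T_apply]; simp
      rw [this]
      exact abs_sub _ _
    have e3 : ∑ i, |ε⁻¹ * Γ.ℓ p.1 i| = ε⁻¹ * ∑ i, |Γ.ℓ p.1 i| := by
      rw [Finset.mul_sum]
      exact Finset.sum_congr rfl fun i _ => by rw [abs_mul, abs_of_pos (inv_pos.2 hε)]
    have e4 : ε⁻¹ * (k * ‖p.1‖) ≤ ε⁻¹ * ∑ i, |Γ.ℓ p.1 i| :=
      mul_le_mul_of_nonneg_left (hkℓ _) (inv_pos.2 hε).le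
    have e5 := hio p.2
    linarith
  calc Es u * Mf A u ^ (s₀ + ε)
      ≤ Real.exp (∑ i, u i) * Real.exp ((t₀ * ∑ i, u i + c * ‖p.2‖) * (s₀ + ε)) :=
        mul_le_mul_of_nonneg_left hMs (Es_pos u).le
    _ = Real.exp (ε * t₀ * ∑ i, u i + c * ‖p.2‖ * (s₀ + ε)) := by
        rw [← Real.exp_add]
        congr 1
        rw [hs₀]
        field_simp
        ring
    _ ≤ Real.exp (-(t₀ * k) * ‖p.1‖ + -κ * ‖p.2‖) := by
        refine Real.exp_le_exp.2 ?_
        have q1 : ε * t₀ * ∑ i, u i ≤ ε * t₀ * (-(ε⁻¹ * (k * ‖p.1‖)) + n * ‖p.2‖) :=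
          mul_le_mul_of_nonneg_left hsum (by positivity)
        have q2 : ε * t₀ * (-(ε⁻¹ * (k * ‖p.1‖)) + n * ‖p.2‖) =
            -(t₀ * k) * ‖p.1‖ + ε * (t₀ * n) * ‖p.2‖ := by
          field_simp
        have q3 : ε * (t₀ * n) * ‖p.2‖ ≤ κ * ‖p.2‖ :=
          mul_le_mul_of_nonneg_right h2.le (norm_nonneg _)
        have q4 : c * ‖p.2‖ * (s₀ + ε) ≤ c * ‖p.2‖ * (s₀ / 2) :=
          mul_le_mul_of_nonneg_left h1.le (by positivity)
        have q5 : c * ‖p.2‖ * (s₀ / 2) = -(2 * κ) * ‖p.2‖ := by rw [hκ]; ring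
        linarith
    _ = _ := by rw [Real.exp_add]

end Geo

/-! ### The zero set of the face polynomial -/

/-- The zero set of a function whose gradient does not vanish on it is a null set: on every line
parallel to a coordinate axis, the zeros with non-vanishing partial derivative are isolated. -/
lemma ae_ne_zero_of_grad {m : ℕ} {F : (Fin m → ℝ) → ℝ} {D : Fin m → (Fin m → ℝ) → ℝ}
    (hF : Measurable F) (hD : ∀ j, Measurable (D j))
    (hder : ∀ j b (t : ℝ), HasDerivAt (fun t : ℝ => F (b + t • Pi.single j 1))
      (D j (b + t • Pi.single j 1)) t)
    (hne : ∀ b, F b = 0 → ∃ j, D j b ≠ 0) : ∀ᵐ b, F b ≠ 0 := by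
  have key : ∀ j, ∀ᵐ b : Fin m → ℝ, b ∈ {b | ¬(F b = 0 ∧ D j b ≠ 0)} := by
    intro j
    refine ae_mem_of_ae_add_linearMap_mem
      (LinearMap.toSpanSingleton ℝ (Fin m → ℝ) (Pi.single j 1)) (volume : Measure ℝ) _ ?_ ?_
    · exact ((measurableSet_eq_fun hF measurable_const).inter
        (measurableSet_eq_fun (hD j) measurable_const).compl).compl
    · intro b
      set s : Set ℝ := {t | F (b + t • Pi.single j 1) = 0 ∧ D j (b + t • Pi.single j 1) ≠ 0} with hs
      have hc : s.Countable := by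
        refine (countable_setOfPred_isolated_right_within (s := s)).mono fun t ht => ?_
        refine Set.mem_sep ht ?_
        have h1 := (hder j b t).eventually_ne (c := F (b + t • Pi.single j 1)) ht.2
        rw [← Filter.empty_mem_iff_bot]
        have h2 : ∀ᶠ x in 𝓝[s ∩ Set.Ioi t] t, F (b + x • Pi.single j 1) ≠ 0 := by
          have := h1.filter_mono (nhdsWithin_mono t (show s ∩ Set.Ioi t ⊆ {t}ᶜ from
            fun x hx => ne_of_gt hx.2))
          rw [ht.1] at this
          exact this
        filter_upwards [h2, self_mem_nhdsWithin] with x hx hx'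
        exact hx hx'.1.1
      have : ∀ᵐ t : ℝ, t ∉ s := (compl_mem_ae_iff).2 (hc.measure_zero _)
      filter_upwards [this] with t ht
      exact ht
  have := ae_all_iff.2 key
  filter_upwards [this] with b hb h0
  obtain ⟨j, hj⟩ := hne b h0
  exact hb j ⟨h0, hj⟩

lemma ae_linear_ne {m : ℕ} (L : (Fin m → ℝ) →ₗ[ℝ] ℝ) {a₀ : Fin m → ℝ} (h : L a₀ ≠ 0) :
    ∀ᵐ a, L a ≠ 0 := by
  have : volume ((LinearMap.ker L : Submodule ℝ (Fin m → ℝ)) : Set (Fin m → ℝ)) = 0 :=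
    Measure.addHaar_submodule _ _ fun h' => h (by
      rw [LinearMap.ker_eq_top] at h'
      simp [h'])
  exact (compl_mem_ae_iff.2 this)

namespace Geo

variable {n : ℕ} {A : Finset (Fin n → ℕ)} {t₀ : ℝ} {ρ : ℕ} (Γ : Geo A t₀ ρ)

/-- Off finitely many hyperplanes no coordinate and no exponent off the face is stationary along
`ℓ a`. -/
lemma ae_generic : ∀ᵐ a : Fin ρ → ℝ, (∀ i, Γ.ℓ a i ≠ 0) ∧
    ∀ α ∈ A, α ∉ Γ.At → dotR (dv t₀ α) (Γ.ℓ a) ≠ 0 := by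
  obtain ⟨a₀, h0⟩ := Γ.mem_range Γ.u₀ ⟨fun i => (Γ.u₀_pos i).le, Γ.u₀_mem⟩
  have h1 : ∀ i, ∀ᵐ a : Fin ρ → ℝ, Γ.ℓ a i ≠ 0 := fun i =>
    ae_linear_ne (LinearMap.proj i ∘ₗ Γ.ℓ) (a₀ := a₀) (by simpa [h0] using (Γ.u₀_pos i).ne')
  have h2 : ∀ᵐ a : Fin ρ → ℝ, ∀ α ∈ A, α ∉ Γ.At → dotR (dv t₀ α) (Γ.ℓ a) ≠ 0 := by
    rw [Finset.eventually_all]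
    intro α hα
    by_cases ht : α ∈ Γ.At
    · exact Eventually.of_forall fun a h => absurd ht h
    · filter_upwards [ae_linear_ne (dotL (dv t₀ α) ∘ₗ Γ.ℓ) (a₀ := a₀) (by
        simpa [h0, dotL_apply] using (Γ.pos_of_not_tight hα ht).ne')] with a ha _
      simpa [dotL_apply] using ha
  filter_upwards [ae_all_iff.2 h1, h2] with a h h' using ⟨h, h'⟩

/-- The leading part of the phase, normalized by `exp (-t₀ ∑ u)`. -/
def F₀ (g : (Fin n → ℕ) → (Fin n → ℝ) → ℝ) (b : Fin (n - ρ) → ℝ) : ℝ :=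
  ∑ α ∈ Γ.At, Real.exp (dotR (dv t₀ α) (iota n ρ b)) * g α 0

/-- The leading part of `Mf`, normalized by `exp (-t₀ ∑ u)`. -/
def M₀ (b : Fin (n - ρ) → ℝ) : ℝ :=
  ∑ α ∈ Γ.At, Real.exp (dotR (dv t₀ α) (iota n ρ b))

lemma M₀_pos (b : Fin (n - ρ) → ℝ) : 0 < Γ.M₀ b :=
  Finset.sum_pos (fun _ _ => Real.exp_pos _) Γ.At_nonempty

lemma continuous_iota_dot (v : Fin n → ℝ) : Continuous fun b => dotR v (iota n ρ b) :=
  (continuous_dotR v).comp (LinearMap.continuous_of_finiteDimensional _)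

lemma continuous_F₀ (g : (Fin n → ℕ) → (Fin n → ℝ) → ℝ) : Continuous (Γ.F₀ g) :=
  continuous_finsetSum _ fun _ _ => ((continuous_iota_dot _).rexp).mul continuous_const

lemma continuous_M₀ : Continuous Γ.M₀ :=
  continuous_finsetSum _ fun _ _ => (continuous_iota_dot _).rexp

lemma Amin_eq : Amin A Γ.u₀ = Γ.At := by
  obtain ⟨β, hβ, hβ0⟩ := Γ.tight_ne
  ext α
  rw [mem_At, Amin, Finset.mem_filter]
  refine and_congr_right fun hα => ⟨fun h => ?_, fun h γ hγ => ?_⟩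
  · have h1 := h β hβ
    have h2 := Γ.u₀_mem α hα
    rw [dotR_dv] at h2 hβ0 ⊢
    linarith
  · have h2 := Γ.u₀_mem γ hγ
    rw [dotR_dv] at h2 h
    linarith

/-- The weighted homogeneity of the face polynomial forces its gradient at a zero to be
transversal, so non-degeneracy survives the restriction to the transversal coordinates. -/
lemma ae_F₀_ne {g : (Fin n → ℕ) → (Fin n → ℝ) → ℝ}
    (hnd : ∀ y : Fin n → ℝ, ∃ i, ∑ α ∈ Amin A Γ.u₀, (α i : ℝ) * g α 0 *
      Real.exp (dotR (cv α) y) ≠ 0) : ∀ᵐ b, Γ.F₀ g b ≠ 0 := by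
  refine ae_ne_zero_of_grad (Γ.continuous_F₀ g).measurable
    (D := fun j b => ∑ α ∈ Γ.At, Real.exp (dotR (dv t₀ α) (iota n ρ b)) *
      dotR (dv t₀ α) (iota n ρ (Pi.single j 1)) * g α 0) (fun j => ?_) (fun j b t => ?_) (fun b hb => ?_)
  · exact (continuous_finsetSum _ fun _ _ => (((continuous_iota_dot _).rexp).mul
      continuous_const).mul continuous_const).measurable
  · refine HasDerivAt.fun_sum fun α _ => HasDerivAt.mul_const (HasDerivAt.exp ?_) _
    simp only [map_add, map_smul, dotR_add_right, dotR_smul_right]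
    simpa using ((hasDerivAt_id t).mul_const (dotR (dv t₀ α) (iota n ρ (Pi.single j 1)))).const_add
      (dotR (dv t₀ α) (iota n ρ b))
  · by_contra! hcon
    set q : (Fin n → ℕ) → ℝ := fun α => Real.exp (dotR (dv t₀ α) (iota n ρ b)) with hq
    -- all directional derivatives vanish
    have hall : ∀ w : Fin n → ℝ, ∑ α ∈ Γ.At, q α * dotR (dv t₀ α) w * g α 0 = 0 := by
      intro w
      obtain ⟨p, rfl⟩ := Γ.Φ.surjective w
      have e : ∀ α ∈ Γ.At, q α * dotR (dv t₀ α) (Γ.Φ p) * g α 0 =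
          ∑ j, p.2 j * (q α * dotR (dv t₀ α) (iota n ρ (Pi.single j 1)) * g α 0) := by
        intro α hα
        have e1 : iota n ρ p.2 = ∑ j, p.2 j • iota n ρ (Pi.single j 1) := by
          conv_lhs => rw [pi_eq_sum_univ' p.2]
          rw [map_sum]
          refine Finset.sum_congr rfl fun j _ => ?_
          rw [map_smul]
        rw [Γ.Φ_apply, dotR_add_right, Γ.tight α (Γ.mem_At.1 hα).1 (Γ.mem_At.1 hα).2, zero_add, e1,
          dotR_sum_right]
        simp only [dotR_smul_right, Finset.mul_sum, Finset.sum_mul]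
        exact Finset.sum_congr rfl fun j _ => by ring
      rw [Finset.sum_congr rfl e, Finset.sum_comm]
      refine Finset.sum_eq_zero fun j _ => ?_
      rw [← Finset.mul_sum, hcon j, mul_zero]
    obtain ⟨i, hi⟩ := hnd (iota n ρ b)
    apply hi
    rw [Γ.Amin_eq]
    have h1 := hall (Pi.single i 1)
    have h2 : ∀ α, Real.exp (dotR (cv α) (iota n ρ b)) =
        q α * Real.exp (t₀ * ∑ i, iota n ρ b i) := fun α => by
      rw [hq]
      simp only
      rw [← Real.exp_add, dotR_dv]
      congr 1; ring
    have h3 : ∀ α : Fin n → ℕ, dotR (dv t₀ α) (Pi.single i 1) = (α i : ℝ) - t₀ := fun α => by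
      rw [dotR_dv]
      simp [dotR, Pi.single_apply, cv]
    simp only [h2]
    simp only [h3] at h1
    have h4 : ∑ α ∈ Γ.At, q α * g α 0 = 0 := hb
    have h5 : ∑ α ∈ Γ.At, q α * ((α i : ℝ) - t₀) * g α 0 =
        ∑ α ∈ Γ.At, (α i : ℝ) * g α 0 * q α - t₀ * ∑ α ∈ Γ.At, q α * g α 0 := by
      rw [Finset.mul_sum, ← Finset.sum_sub_distrib]
      exact Finset.sum_congr rfl fun α _ => by ring
    rw [h5, h4, mul_zero, sub_zero] at h1
    simp only [← mul_assoc]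
    rw [← Finset.sum_mul, h1, zero_mul]

end Geo

/-! ### Pointwise limits -/

lemma tendsto_pPow {l : Filter ℝ} {q s : ℝ → ℝ} {q₀ s₀ : ℝ} (hq : Tendsto q l (𝓝 q₀))
    (hs : Tendsto s l (𝓝 s₀)) (h : q₀ ≠ 0) :
    Tendsto (fun ε => pPow (q ε) (s ε)) l (𝓝 (pPow q₀ s₀)) := by
  rcases h.lt_or_gt with h | h
  · have : pPow q₀ s₀ = 0 := if_neg (not_lt.2 h.le)
    rw [this]
    refine tendsto_const_nhds.congr' ?_
    filter_upwards [hq.eventually (gt_mem_nhds h)] with ε hε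
    exact (if_neg (not_lt.2 hε.le)).symm
  · have : pPow q₀ s₀ = q₀ ^ s₀ := if_pos h
    rw [this]
    refine (hq.rpow hs (Or.inl h.ne')).congr' ?_
    filter_upwards [hq.eventually (lt_mem_nhds h)] with ε hε
    exact (if_pos hε).symm

lemma pPow_mul {q c : ℝ} (hc : 0 < c) (s : ℝ) : pPow (q * c) s = pPow q s * c ^ s := by
  unfold pPow
  by_cases hq : 0 < q
  · rw [if_pos (mul_pos hq hc), if_pos hq, Real.mul_rpow hq.le hc.le]
  · rw [if_neg (by rw [mul_pos_iff_of_pos_right hc]; exact hq), if_neg hq, zero_mul]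

lemma pPow_div {q c : ℝ} (hc : 0 < c) (s : ℝ) : pPow (q / c) s = pPow q s * c ^ (-s) := by
  rw [div_eq_mul_inv, pPow_mul (inv_pos.2 hc), Real.inv_rpow hc.le, ← Real.rpow_neg hc.le]

namespace Geo

variable {n : ℕ} {A : Finset (Fin n → ℕ)} {t₀ : ℝ} {ρ : ℕ} (Γ : Geo A t₀ ρ)

/-- `Fl` divided by `exp (t₀ ∑ u)`. -/
def Fn (_ : Geo A t₀ ρ) (g : (Fin n → ℕ) → (Fin n → ℝ) → ℝ) (u : Fin n → ℝ) : ℝ :=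
  ∑ α ∈ A, Real.exp (dotR (dv t₀ α) u) * g α (ex u)

/-- `Mf` divided by `exp (t₀ ∑ u)`. -/
def Mn (_ : Geo A t₀ ρ) (u : Fin n → ℝ) : ℝ := ∑ α ∈ A, Real.exp (dotR (dv t₀ α) u)

lemma exp_cv (t₀ : ℝ) (α : Fin n → ℕ) (u : Fin n → ℝ) : Real.exp (dotR (cv α) u) =
    Real.exp (dotR (dv t₀ α) u) * Real.exp (t₀ * ∑ i, u i) := by
  rw [← Real.exp_add, dotR_dv]
  congr 1; ring

lemma Fl_eq (g : (Fin n → ℕ) → (Fin n → ℝ) → ℝ) (u : Fin n → ℝ) :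
    Fl A g u = Γ.Fn g u * Real.exp (t₀ * ∑ i, u i) := by
  rw [Fl, Fn, Finset.sum_mul]
  exact Finset.sum_congr rfl fun α _ => by rw [exp_cv t₀]; ring

lemma Mf_eq (u : Fin n → ℝ) : Mf A u = Γ.Mn u * Real.exp (t₀ * ∑ i, u i) := by
  rw [Mf, Mn, Finset.sum_mul]
  exact Finset.sum_congr rfl fun α _ => exp_cv t₀ α u

lemma Mn_pos (u : Fin n → ℝ) : 0 < Γ.Mn u :=
  Finset.sum_pos (fun _ _ => Real.exp_pos _) (Γ.At_nonempty.mono (Finset.filter_subset _ _))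

lemma dot_T_tight {α : Fin n → ℕ} (hα : α ∈ Γ.At) (ε : ℝ) (p : (Fin ρ → ℝ) × (Fin (n - ρ) → ℝ)) :
    dotR (dv t₀ α) (Γ.T ε p) = dotR (dv t₀ α) (iota n ρ p.2) := by
  rw [T_apply, dotR_add_right, dotR_smul_right, Γ.tight α (Γ.mem_At.1 hα).1 (Γ.mem_At.1 hα).2,
    mul_zero, zero_add]

lemma sum_T (ε : ℝ) (p : (Fin ρ → ℝ) × (Fin (n - ρ) → ℝ)) :
    ∑ i, Γ.T ε p i = ε⁻¹ * ∑ i, Γ.ℓ p.1 i + ∑ i, iota n ρ p.2 i := by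
  simp [T_apply, Finset.sum_add_distrib, Finset.mul_sum]

lemma Es_mul_Mf {s₀ : ℝ} (hs₀ : s₀ = -1 / t₀) {ε : ℝ} (hε : 0 < ε)
    (p : (Fin ρ → ℝ) × (Fin (n - ρ) → ℝ)) :
    Es (Γ.T ε p) * Mf A (Γ.T ε p) ^ (s₀ + ε) = Γ.Mn (Γ.T ε p) ^ (s₀ + ε) *
      Real.exp (t₀ * ∑ i, Γ.ℓ p.1 i + ε * (t₀ * ∑ i, iota n ρ p.2 i)) := by
  rw [Γ.Mf_eq, Real.mul_rpow (Γ.Mn_pos _).le (Real.exp_pos _).le, ← Real.exp_mul, Es,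
    mul_left_comm, ← Real.exp_add, sum_T]
  congr 2
  have := Γ.t₀_pos
  rw [hs₀]
  field_simp
  ring

lemma tendsto_lin_add {c d : ℝ} (hc : 0 < c) :
    Tendsto (fun ε : ℝ => ε⁻¹ * c + d) (𝓝[>] 0) atTop :=
  tendsto_atTop_add_const_right _ _ (tendsto_inv_nhdsGT_zero.atTop_mul_const hc)

lemma tendsto_lin_add_bot {c d : ℝ} (hc : c < 0) :
    Tendsto (fun ε : ℝ => ε⁻¹ * c + d) (𝓝[>] 0) atBot :=
  tendsto_atBot_add_const_right _ _ (tendsto_inv_nhdsGT_zero.atTop_mul_const_of_neg hc)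

lemma tendsto_s (s₀ : ℝ) : Tendsto (fun ε : ℝ => s₀ + ε) (𝓝[>] 0) (𝓝 s₀) := by
  have : Continuous fun ε : ℝ => s₀ + ε := by fun_prop
  simpa using (this.tendsto 0).mono_left nhdsWithin_le_nhds

lemma tendsto_expfac (x y : ℝ) :
    Tendsto (fun ε : ℝ => Real.exp (x + ε * y)) (𝓝[>] 0) (𝓝 (Real.exp x)) := by
  have : Continuous fun ε : ℝ => Real.exp (x + ε * y) := by fun_prop
  simpa using (this.tendsto 0).mono_left nhdsWithin_le_nhds

/-- The comparison measure density in the scaled coordinates. -/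
def mm (s₀ : ℝ) (h : (Fin n → ℝ) → ℝ) (ε : ℝ) (p : (Fin ρ → ℝ) × (Fin (n - ρ) → ℝ)) : ℝ :=
  Es (Γ.T ε p) * Mf A (Γ.T ε p) ^ (s₀ + ε) * h (ex (Γ.T ε p))

/-- The `(s₀ + ε)`-th power of the normalized phase in the scaled coordinates. -/
def XX (g : (Fin n → ℕ) → (Fin n → ℝ) → ℝ) (s₀ : ℝ) (ε : ℝ)
    (p : (Fin ρ → ℝ) × (Fin (n - ρ) → ℝ)) : ℝ :=
  pPow (Fl A g (Γ.T ε p) / Mf A (Γ.T ε p)) (s₀ + ε)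

/-- The weight `exp (t₀ ∑ ℓ a)` on the cone `-ℓ a ∈ Pc`. -/
def W (a : Fin ρ → ℝ) : ℝ :=
  if -(Γ.ℓ a) ∈ Pc A t₀ then Real.exp (t₀ * ∑ i, Γ.ℓ a i) else 0

/-- The limit of `mm`. -/
def mm₀ (s₀ : ℝ) (h : (Fin n → ℝ) → ℝ) (p : (Fin ρ → ℝ) × (Fin (n - ρ) → ℝ)) : ℝ :=
  Γ.W p.1 * (Γ.M₀ p.2 ^ s₀ * h 0)

/-- The limit of `XX`. -/
def XX₀ (g : (Fin n → ℕ) → (Fin n → ℝ) → ℝ) (s₀ : ℝ)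
    (p : (Fin ρ → ℝ) × (Fin (n - ρ) → ℝ)) : ℝ :=
  pPow (Γ.F₀ g p.2 / Γ.M₀ p.2) s₀

/-- Pointwise limits where `-ℓ a` is a normal: the exponents off the face and the point `x` itself
tend to `0`, so only the face polynomial and the value `h 0` survive. -/
lemma tendsto_good {g : (Fin n → ℕ) → (Fin n → ℝ) → ℝ} (hg : ∀ α, Continuous (g α))
    {h : (Fin n → ℝ) → ℝ} (hh : Continuous h) {s₀ : ℝ} (hs₀ : s₀ = -1 / t₀)
    {p : (Fin ρ → ℝ) × (Fin (n - ρ) → ℝ)} (h1 : ∀ i, Γ.ℓ p.1 i ≠ 0)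
    (h2 : ∀ α ∈ A, α ∉ Γ.At → dotR (dv t₀ α) (Γ.ℓ p.1) ≠ 0) (h3 : Γ.F₀ g p.2 ≠ 0)
    (hp : -(Γ.ℓ p.1) ∈ Pc A t₀) :
    Tendsto (fun ε => Γ.XX g s₀ ε p) (𝓝[>] 0) (𝓝 (Γ.XX₀ g s₀ p)) ∧
      Tendsto (fun ε => Γ.mm s₀ h ε p) (𝓝[>] 0) (𝓝 (Γ.mm₀ s₀ h p)) := by
  have a1 : ∀ i, Γ.ℓ p.1 i < 0 := fun i => lt_of_le_of_ne (by
    have := hp.1 i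
    simpa using this) (h1 i)
  have hneg : ∀ α : Fin n → ℕ, dotR (dv t₀ α) (-(Γ.ℓ p.1)) = -dotR (dv t₀ α) (Γ.ℓ p.1) := fun α => by
    simp [dotR]
  have a2 : ∀ α ∈ A, α ∉ Γ.At → dotR (dv t₀ α) (Γ.ℓ p.1) < 0 := fun α hα ht =>
    lt_of_le_of_ne (by
      have := hp.2 α hα
      rw [hneg] at this
      linarith) (h2 α hα ht)
  have hex : Tendsto (fun ε => ex (Γ.T ε p)) (𝓝[>] 0) (𝓝 0) := by
    rw [tendsto_pi_nhds]
    intro i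
    refine Real.tendsto_exp_atBot.comp ?_
    have := tendsto_lin_add_bot (d := iota n ρ p.2 i) (a1 i)
    refine this.congr fun ε => ?_
    simp [T_apply]
  have hexp : ∀ α ∈ A, Tendsto (fun ε => Real.exp (dotR (dv t₀ α) (Γ.T ε p))) (𝓝[>] 0)
      (𝓝 (if α ∈ Γ.At then Real.exp (dotR (dv t₀ α) (iota n ρ p.2)) else 0)) := by
    intro α hα
    split_ifs with ht
    · simp only [Γ.dot_T_tight ht]
      exact tendsto_const_nhds
    · refine Real.tendsto_exp_atBot.comp ?_
      refine (tendsto_lin_add_bot (d := dotR (dv t₀ α) (iota n ρ p.2)) (a2 α hα ht)).congr fun ε => ?_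
      rw [T_apply, dotR_add_right, dotR_smul_right]
  have hAt : A.filter (fun α => α ∈ Γ.At) = Γ.At := by
    ext α
    simp only [Finset.mem_filter, and_iff_right_iff_imp]
    exact fun h => (Γ.mem_At.1 h).1
  have hM : Tendsto (fun ε => Γ.Mn (Γ.T ε p)) (𝓝[>] 0) (𝓝 (Γ.M₀ p.2)) := by
    have := tendsto_finsetSum A hexp
    rwa [← Finset.sum_filter, hAt] at this
  have hF : Tendsto (fun ε => Γ.Fn g (Γ.T ε p)) (𝓝[>] 0) (𝓝 (Γ.F₀ g p.2)) := by
    have := tendsto_finsetSum A fun α hα => (hexp α hα).mul (((hg α).tendsto 0).comp hex)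
    simp only [ite_mul, zero_mul] at this
    rwa [← Finset.sum_filter, hAt] at this
  constructor
  · refine tendsto_pPow ?_ (tendsto_s s₀) (div_ne_zero h3 (Γ.M₀_pos _).ne')
    refine (hF.div hM (Γ.M₀_pos _).ne').congr fun ε => ?_
    simp only [Pi.div_apply]
    rw [Γ.Fl_eq, Γ.Mf_eq, mul_div_mul_right _ _ (Real.exp_pos _).ne']
  · have h4 := ((hM.rpow (tendsto_s s₀) (Or.inl (Γ.M₀_pos _).ne')).mul
      (tendsto_expfac (t₀ * ∑ i, Γ.ℓ p.1 i) (t₀ * ∑ i, iota n ρ p.2 i))).mul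
      ((hh.tendsto 0).comp hex)
    have e : Γ.mm₀ s₀ h p = Γ.M₀ p.2 ^ s₀ * Real.exp (t₀ * ∑ i, Γ.ℓ p.1 i) * h 0 := by
      rw [mm₀, W, if_pos hp]
      ring
    rw [e]
    refine h4.congr' ?_
    filter_upwards [self_mem_nhdsWithin] with ε hε
    rw [mm, Γ.Es_mul_Mf hs₀ hε]
    rfl

/-- Where `-ℓ a` is not a normal, either the point leaves the box or `M` blows up, and the
comparison density tends to `0`. -/
lemma tendsto_bad {h : (Fin n → ℝ) → ℝ} {r B : ℝ} (hB : ∀ x, |h x| ≤ B)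
    (hbox : VB r fun u => h (ex u)) {s₀ : ℝ} (hs₀ : s₀ = -1 / t₀)
    {p : (Fin ρ → ℝ) × (Fin (n - ρ) → ℝ)} (hp : -(Γ.ℓ p.1) ∉ Pc A t₀) :
    Tendsto (fun ε => Γ.mm s₀ h ε p) (𝓝[>] 0) (𝓝 0) ∧ Γ.mm₀ s₀ h p = 0 := by
  have hs₀n : s₀ < 0 := by rw [hs₀]; exact div_neg_of_neg_of_pos (by norm_num) Γ.t₀_pos
  refine ⟨?_, by rw [mm₀, W, if_neg hp, zero_mul]⟩
  have hcase : (∃ i, 0 < Γ.ℓ p.1 i) ∨ ∃ α ∈ A, 0 < dotR (dv t₀ α) (Γ.ℓ p.1) := by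
    by_contra! hcon
    refine hp ⟨fun i => by simpa using hcon.1 i, fun α hα => ?_⟩
    have hneg : dotR (dv t₀ α) (-(Γ.ℓ p.1)) = -dotR (dv t₀ α) (Γ.ℓ p.1) := by simp [dotR]
    rw [hneg]
    have := hcon.2 α hα
    linarith
  rcases hcase with ⟨i, hi⟩ | ⟨α, hα, hαp⟩
  · have h1 : Tendsto (fun ε => Real.exp (Γ.T ε p i)) (𝓝[>] 0) atTop := by
      refine Real.tendsto_exp_atTop.comp ?_
      refine (tendsto_lin_add (d := iota n ρ p.2 i) hi).congr fun ε => ?_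
      simp [T_apply]
    refine tendsto_const_nhds.congr' ?_
    filter_upwards [h1.eventually_gt_atTop r] with ε hε
    have : h (ex (Γ.T ε p)) = 0 := hbox (Γ.T ε p) fun hc => absurd (hc i) (not_le.2 hε)
    rw [mm, this, mul_zero]
  · have h1 : Tendsto (fun ε => Γ.Mn (Γ.T ε p)) (𝓝[>] 0) atTop := by
      refine tendsto_atTop_mono (fun ε => Finset.single_le_sum
        (f := fun α => Real.exp (dotR (dv t₀ α) (Γ.T ε p))) (fun _ _ => (Real.exp_pos _).le) hα) ?_
      refine Real.tendsto_exp_atTop.comp ?_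
      refine (tendsto_lin_add (d := dotR (dv t₀ α) (iota n ρ p.2)) hαp).congr fun ε => ?_
      rw [T_apply, dotR_add_right, dotR_smul_right]
    have h2 : Tendsto (fun ε => Γ.Mn (Γ.T ε p) ^ (s₀ + ε)) (𝓝[>] 0) (𝓝 0) := by
      have := Real.tendsto_exp_atBot.comp
        ((Real.tendsto_log_atTop.comp h1).atTop_mul_neg hs₀n (tendsto_s s₀))
      refine this.congr fun ε => ?_
      rw [Real.rpow_def_of_pos (Γ.Mn_pos _)]
      rfl
    have h3 := (h2.mul (tendsto_expfac (t₀ * ∑ i, Γ.ℓ p.1 i) (t₀ * ∑ i, iota n ρ p.2 i))).mul_const B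
    rw [zero_mul, zero_mul] at h3
    refine squeeze_zero_norm' ?_ h3
    filter_upwards [self_mem_nhdsWithin] with ε hε
    rw [mm, Γ.Es_mul_Mf hs₀ hε, norm_mul, Real.norm_eq_abs, abs_of_nonneg
      (mul_nonneg (Real.rpow_nonneg (Γ.Mn_pos _).le _) (Real.exp_pos _).le)]
    exact mul_le_mul_of_nonneg_left (hB _)
      (mul_nonneg (Real.rpow_nonneg (Γ.Mn_pos _).le _) (Real.exp_pos _).le)

lemma XX₀_mul_mm₀ (g : (Fin n → ℕ) → (Fin n → ℝ) → ℝ) (s₀ : ℝ) (h : (Fin n → ℝ) → ℝ)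
    (p : (Fin ρ → ℝ) × (Fin (n - ρ) → ℝ)) :
    Γ.XX₀ g s₀ p * Γ.mm₀ s₀ h p = h 0 * (Γ.W p.1 * pPow (Γ.F₀ g p.2) s₀) := by
  rw [XX₀, mm₀, pPow_div (Γ.M₀_pos _)]
  have := (Γ.M₀_pos p.2)
  have e : Γ.M₀ p.2 ^ (-s₀) * Γ.M₀ p.2 ^ s₀ = 1 := by
    rw [← Real.rpow_add this]; simp
  linear_combination (Γ.W p.1 * h 0 * pPow (Γ.F₀ g p.2) s₀) * e

end Geo

/-! ### The limit on the real half-line and holomorphy to its right -/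

namespace Geo

variable {n : ℕ} {A : Finset (Fin n → ℕ)} {t₀ : ℝ} {ρ : ℕ} (Γ : Geo A t₀ ρ)

lemma lintegral_T_le {c : ENNReal} (hc0 : c ≠ 0) (hcT : c ≠ ⊤)
    (hc : ∀ ε : ℝ, 0 < ε → (volume : Measure (Fin n → ℝ)) =
      (c * ENNReal.ofReal ((ε ^ ρ)⁻¹)) • Measure.map (Γ.T ε) volume) {ε : ℝ} (hε : 0 < ε)
    {F₁ F₂ : (Fin n → ℝ) → ENNReal} (h : ∫⁻ u, F₁ u ≤ ∫⁻ u, F₂ u) :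
    ∫⁻ p, F₁ (Γ.T ε p) ≤ ∫⁻ p, F₂ (Γ.T ε p) := by
  have hk0 : c * ENNReal.ofReal ((ε ^ ρ)⁻¹) ≠ 0 := mul_ne_zero hc0 (by
    rw [ne_eq, ENNReal.ofReal_eq_zero, not_le]; positivity)
  have hkT : c * ENNReal.ofReal ((ε ^ ρ)⁻¹) ≠ ⊤ := ENNReal.mul_ne_top hcT ENNReal.ofReal_ne_top
  rw [hc ε hε, lintegral_smul_measure, lintegral_smul_measure,
    (Γ.measurableEmbedding_T hε.ne').lintegral_map,
    (Γ.measurableEmbedding_T hε.ne').lintegral_map] at h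
  exact (ENNReal.mul_le_mul_iff_right hk0 hkT).1 h

lemma integral_T {c : ENNReal}
    (hc : ∀ ε : ℝ, 0 < ε → (volume : Measure (Fin n → ℝ)) =
      (c * ENNReal.ofReal ((ε ^ ρ)⁻¹)) • Measure.map (Γ.T ε) volume) {ε : ℝ} (hε : 0 < ε)
    (F : (Fin n → ℝ) → ℝ) : ε ^ ρ * ∫ u, F u = c.toReal * ∫ p, F (Γ.T ε p) := by
  conv_lhs => rw [hc ε hε]
  rw [integral_smul_measure, (Γ.measurableEmbedding_T hε.ne').integral_map, ENNReal.toReal_mul,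
    ENNReal.toReal_ofReal (by positivity), smul_eq_mul]
  field_simp

lemma exp_le_Mf' (Γ : Geo A t₀ ρ) (u : Fin n → ℝ) : Real.exp (t₀ * ∑ i, u i) ≤ Mf A u := by
  obtain ⟨c, hc, hco⟩ := Γ.coercive
  obtain ⟨p, rfl⟩ := Γ.Φ.surjective u
  obtain ⟨α, hα, h⟩ := hco p.2
  have e : Γ.Φ p = Γ.T 1 p := by simp [T]
  have h1 := Γ.dot_T_tight hα 1 p
  rw [← e] at h1
  refine le_trans (Real.exp_le_exp.2 ?_) (exp_le_Mf _ (Γ.mem_At.1 hα).1)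
  have h2 := dotR_dv t₀ α (Γ.Φ p)
  have : 0 ≤ c * ‖p.2‖ := by positivity
  linarith

lemma measurable_W : Measurable Γ.W := by
  have hℓ : Continuous Γ.ℓ := LinearMap.continuous_of_finiteDimensional _
  have hcl : IsClosed {a | -(Γ.ℓ a) ∈ Pc A t₀} := by
    have : IsClosed (Pc A t₀) := by
      have e : Pc A t₀ = (⋂ i, {v : Fin n → ℝ | 0 ≤ v i}) ∩ ⋂ α ∈ A, {v | 0 ≤ dotR (dv t₀ α) v} := by
        ext v; simp [Pc]
      rw [e]
      refine (isClosed_iInter fun i => isClosed_le continuous_const (continuous_apply i)).inter ?_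
      exact isClosed_biInter fun α _ => isClosed_le continuous_const (continuous_dotR _)
    exact this.preimage hℓ.neg
  refine Measurable.ite hcl.measurableSet ?_ measurable_const
  have : Continuous fun a => Real.exp (t₀ * ∑ i, Γ.ℓ a i) := by fun_prop
  exact this.measurable

end Geo

section limit

variable {n : ℕ} {S : Setup n} {t₀ : ℝ} {ρ : ℕ} (Γ : Geo S.A t₀ ρ)

lemma measurable_Mf (A : Finset (Fin n → ℕ)) : Measurable (Mf A) := (continuous_Mf A).measurable

lemma Setup.measurable_Fl (S : Setup n) : Measurable (Fl S.A S.g) :=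
  (contDiff_Fl S.A S.hg).continuous.measurable

/-- The part of the normalized power above the level `K` is controlled, with a gain `K ^ (-t)`,
by the power with exponent `s - t`. -/
lemma tail_pointwise {F M K s t : ℝ} (hM : 0 < M) (hK : 1 ≤ K) (hs : s < 0) (hs1 : -1 < s)
    (ht : 0 < t) :
    (if K < pPow (F / M) s then pPow (F / M) s else 0) * M ^ s ≤
      K ^ (-t) * (pPow F (s - t) * M ^ t) := by
  have hK0 : 0 < K := by linarith
  split_ifs with h
  · have hF : 0 < F / M := by
      by_contra hF
      rw [pPow, if_neg hF] at h
      linarith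
    have hF' : 0 < F := by
      have := mul_pos hF hM
      rwa [div_mul_cancel₀ _ hM.ne'] at this
    rw [pPow, if_pos hF] at h ⊢
    rw [pPow, if_pos hF']
    set Q := F / M with hQ
    have hFQ : F = Q * M := by rw [hQ]; field_simp
    have hQ1 : Q < 1 := by
      by_contra hQ1
      have := Real.rpow_le_one_of_one_le_of_nonpos (not_lt.1 hQ1) hs.le
      linarith
    have h1 : Q ^ s ≤ Q ^ (-1 : ℝ) := Real.rpow_le_rpow_of_exponent_ge hF hQ1.le hs1.le
    have h2 : K ^ t ≤ Q ^ (-t) := by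
      have : K ^ t ≤ (Q ^ (-1 : ℝ)) ^ t := Real.rpow_le_rpow hK0.le (h.le.trans h1) ht.le
      rwa [← Real.rpow_mul hF.le, neg_one_mul] at this
    have h3 : 1 ≤ K ^ (-t) * Q ^ (-t) := by
      rw [Real.rpow_neg hK0.le, ← div_eq_inv_mul]
      exact (one_le_div (by positivity)).2 h2
    rw [hFQ, Real.mul_rpow hF.le hM.le]
    have e1 : M ^ (s - t) * M ^ t = M ^ s := by rw [← Real.rpow_add hM]; ring_nf
    have e2 : Q ^ (s - t) = Q ^ s * Q ^ (-t) := by rw [← Real.rpow_add hF]; ring_nf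
    calc Q ^ s * M ^ s ≤ (Q ^ s * M ^ s) * (K ^ (-t) * Q ^ (-t)) :=
          le_mul_of_one_le_right (by positivity) h3
      _ = K ^ (-t) * (Q ^ (s - t) * M ^ (s - t) * M ^ t) := by
          rw [mul_assoc (Q ^ (s - t)), e1, e2]; ring
  · rw [zero_mul]
    exact mul_nonneg (Real.rpow_nonneg hK0.le _)
      (mul_nonneg (pPow_nonneg _ _) (Real.rpow_nonneg hM.le _))

/-- The leading coefficient on the real half-line: after the substitution `u = ℓ(a / ε) + b` the
integrand converges almost everywhere, is dominated up to the power of the normalized phase, and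
that power is uniformly integrable by `uniform_bound`. -/
theorem main_limit
    (hnd : ∀ y : Fin n → ℝ, ∃ i, ∑ α ∈ Amin S.A Γ.u₀, (α i : ℝ) * S.g α 0 *
      Real.exp (dotR (cv α) y) ≠ 0)
    {s₀ : ℝ} (hs₀ : s₀ = -1 / t₀) (hs₀gt : -1 < s₀) (hs₀lt : s₀ < 0)
    {h χ : (Fin n → ℝ) → ℝ} (H : Amp S h) (Hχ : Amp S χ) (hχ : ∀ x, |h x| ≤ χ x)
    {c : ENNReal} (hc0 : c ≠ 0) (hcT : c ≠ ⊤)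
    (hc : ∀ ε : ℝ, 0 < ε → (volume : Measure (Fin n → ℝ)) =
      (c * ENNReal.ofReal ((ε ^ ρ)⁻¹)) • Measure.map (Γ.T ε) volume) :
    Integrable (fun p : (Fin ρ → ℝ) × (Fin (n - ρ) → ℝ) =>
        h 0 * (Γ.W p.1 * pPow (Γ.F₀ S.g p.2) s₀)) ∧
      Tendsto (fun ε : ℝ => (ε : ℂ) ^ ρ * J S ((s₀ + ε : ℝ) : ℂ) (mh 0 h)) (𝓝[>] 0)
        (𝓝 ((c.toReal * ∫ p : (Fin ρ → ℝ) × (Fin (n - ρ) → ℝ),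
          h 0 * (Γ.W p.1 * pPow (Γ.F₀ S.g p.2) s₀) : ℝ) : ℂ)) := by
  have hχ0 : ∀ x, 0 ≤ χ x := fun x => (abs_nonneg _).trans (hχ x)
  have hMp := fun u => Mf_pos S.hA u
  obtain ⟨Bχ, hBχ⟩ : ∃ B, ∀ x, ‖χ x‖ ≤ B :=
    Hχ.compact.exists_bound_of_continuous Hχ.smooth.continuous
  have hBχ' : ∀ x, χ x ≤ Bχ := fun x => (le_abs_self _).trans (hBχ x)
  have hB0 : 0 ≤ Bχ := (hχ0 0).trans (hBχ' 0)
  obtain ⟨D, hD, hD0, hDom⟩ := Γ.domination hs₀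
  set t : ℝ := (1 + s₀) / 2 with ht
  have ht0 : 0 < t := by rw [ht]; linarith
  obtain ⟨C, hC0, hC⟩ := uniform_bound S ht0.le Hχ hχ0
  have hsmall : ∀ᶠ ε in 𝓝[>] (0:ℝ), s₀ + ε < 0 := (Geo.tendsto_s s₀).eventually (gt_mem_nhds hs₀lt)
  have hmmχ : ∀ ε p, |Γ.mm s₀ h ε p| ≤
      Es (Γ.T ε p) * Mf S.A (Γ.T ε p) ^ (s₀ + ε) * χ (ex (Γ.T ε p)) := by
    intro ε p
    rw [Geo.mm, abs_mul, abs_of_nonneg (mul_nonneg (Es_pos _).le (Real.rpow_nonneg (hMp _).le _))]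
    exact mul_le_mul_of_nonneg_left (hχ _) (mul_nonneg (Es_pos _).le (Real.rpow_nonneg (hMp _).le _))
  have hmain := tendsto_integral_of_tail (l := 𝓝[>] (0:ℝ)) (μ := volume)
    (X := Γ.XX S.g s₀) (m := Γ.mm s₀ h) (X₀ := Γ.XX₀ S.g s₀) (m₀ := Γ.mm₀ s₀ h)
    (D := fun p => Bχ * D p) (fun ε => ?_) (fun ε => ?_) (fun _ _ => pPow_nonneg _ _) ?_ ?_
    (fun _ => pPow_nonneg _ _) (hD.const_mul _) ?_ ?_
    (B := fun K => K ^ (-t) * (t⁻¹ * (C * ∫ p, D p))) ?_ ?_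
  · obtain ⟨h1, h2⟩ := hmain
    simp only [Γ.XX₀_mul_mm₀] at h1 h2
    refine ⟨h1, ?_⟩
    have h3 := (Complex.continuous_ofReal.tendsto _).comp (h2.const_mul c.toReal)
    refine h3.congr' ?_
    filter_upwards [self_mem_nhdsWithin] with ε hε
    have hε : (0:ℝ) < ε := hε
    have e1 : J S ((s₀ + ε : ℝ) : ℂ) (mh 0 h) =
        ((∫ u, Es u * (pPow (Fl S.A S.g u) (s₀ + ε) * h (ex u)) : ℝ) : ℂ) := by
      rw [J, ← integral_complex_ofReal]
      refine integral_congr_ae (Eventually.of_forall fun u => ?_)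
      have : mh 0 h u = h (ex u) := by simp [mh, cv, dotR]
      simp only [this]
      rw [cp_ofReal]
      simp
    have e2 := Γ.integral_T hc hε fun u => Es u * (pPow (Fl S.A S.g u) (s₀ + ε) * h (ex u))
    rw [e1, ← Complex.ofReal_pow, ← Complex.ofReal_mul, e2]
    simp only [Function.comp]
    congr 3
    funext p
    rw [Geo.XX, Geo.mm, pPow_div (hMp _)]
    have e : Mf S.A (Γ.T ε p) ^ (-(s₀ + ε)) * Mf S.A (Γ.T ε p) ^ (s₀ + ε) = 1 := by
      rw [← Real.rpow_add (hMp _)]; simp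
    linear_combination (pPow (Fl S.A S.g (Γ.T ε p)) (s₀ + ε) * Es (Γ.T ε p) * h (ex (Γ.T ε p))) * e
  · exact (measurable_pPow _).comp ((S.measurable_Fl.comp (Γ.continuous_T ε).measurable).div
      ((measurable_Mf _).comp (Γ.continuous_T ε).measurable))
  · have hT := (Γ.continuous_T ε).measurable
    exact ((continuous_Es.measurable.comp hT).mul
      (((measurable_Mf _).comp hT).pow_const _)).mul
      ((H.smooth.continuous.comp continuous_ex).measurable.comp hT)
  · exact (measurable_pPow _).comp (((Γ.continuous_F₀ S.g).measurable.comp measurable_snd).div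
      (Γ.continuous_M₀.measurable.comp measurable_snd))
  · exact (Γ.measurable_W.comp measurable_fst).mul
      (((Γ.continuous_M₀.measurable.comp measurable_snd).pow_const _).mul_const _)
  · filter_upwards [hDom] with ε hε p
    refine (hmmχ ε p).trans ?_
    by_cases hb : Γ.T ε p ∈ S.box
    · rw [mul_comm Bχ]
      exact mul_le_mul (hε p fun i => S.box_neg hb i) (hBχ' _) (hχ0 _) (hD0 p)
    · have : χ (ex (Γ.T ε p)) = 0 := Hχ.box _ hb
      rw [this, mul_zero]
      exact mul_nonneg hB0 (hD0 p)
  · have g1 : ∀ᵐ p : (Fin ρ → ℝ) × (Fin (n - ρ) → ℝ), (∀ i, Γ.ℓ p.1 i ≠ 0) ∧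
        ∀ α ∈ S.A, α ∉ Γ.At → dotR (dv t₀ α) (Γ.ℓ p.1) ≠ 0 :=
      Measure.quasiMeasurePreserving_fst.ae Γ.ae_generic
    have g2 : ∀ᵐ p : (Fin ρ → ℝ) × (Fin (n - ρ) → ℝ), Γ.F₀ S.g p.2 ≠ 0 :=
      Measure.quasiMeasurePreserving_snd.ae (Γ.ae_F₀_ne hnd)
    filter_upwards [g1, g2] with p h1 h2
    by_cases hp : -(Γ.ℓ p.1) ∈ Pc S.A t₀
    · exact Or.inl (Γ.tendsto_good (fun α => (S.hg α).continuous) H.smooth.continuous hs₀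
        h1.1 h1.2 h2 hp)
    · exact Or.inr (Γ.tendsto_bad (fun x => (hχ x).trans (hBχ' x)) H.box hs₀ hp)
  · simpa using (tendsto_rpow_neg_atTop ht0).mul_const (t⁻¹ * (C * ∫ p, D p))
  · intro K hK
    have hK0 : 0 < K := by linarith
    have hlt : ∀ᶠ ε in 𝓝[>] (0:ℝ), ε < t := by
      have := (Geo.tendsto_s 0).eventually (gt_mem_nhds ht0)
      simpa using this
    filter_upwards [hDom, hsmall, hlt, self_mem_nhdsWithin] with ε hε hs hεt hε0
    have hε0 : (0:ℝ) < ε := hε0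
    set q : ℝ := s₀ + ε - t with hq
    have hq1 : q + 1 = t + ε := by rw [hq, ht]; ring
    have hqC := hC q (by linarith) (by linarith)
    have hqt : q + t = s₀ + ε := by rw [hq]; ring
    rw [hqt, ← lintegral_indicator S.measurableSet_box] at hqC
    have h1 := Γ.lintegral_T_le hc0 hcT hc hε0 hqC
    have hle : ∀ p, (if K < Γ.XX S.g s₀ ε p then Γ.XX S.g s₀ ε p else 0) * |Γ.mm s₀ h ε p| ≤
        K ^ (-t) * t⁻¹ * ((q + 1) * (Es (Γ.T ε p) * (pPow (Fl S.A S.g (Γ.T ε p)) q *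
          (Mf S.A (Γ.T ε p) ^ t * χ (ex (Γ.T ε p)))))) := by
      intro p
      set u := Γ.T ε p with hu
      have h2 := tail_pointwise (F := Fl S.A S.g u) (hMp u) hK hs (by linarith) ht0
      have hY : 0 ≤ Es u * χ (ex u) := mul_nonneg (Es_pos u).le (hχ0 _)
      have hZ : 0 ≤ Es u * (pPow (Fl S.A S.g u) q * (Mf S.A u ^ t * χ (ex u))) :=
        mul_nonneg (Es_pos u).le (mul_nonneg (pPow_nonneg _ _)
          (mul_nonneg (Real.rpow_nonneg (hMp u).le _) (hχ0 _)))
      have hX0 : 0 ≤ if K < Γ.XX S.g s₀ ε p then Γ.XX S.g s₀ ε p else 0 := by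
        split_ifs
        · exact pPow_nonneg _ _
        · exact le_rfl
      calc _ ≤ (if K < Γ.XX S.g s₀ ε p then Γ.XX S.g s₀ ε p else 0) *
            (Es u * Mf S.A u ^ (s₀ + ε) * χ (ex u)) :=
            mul_le_mul_of_nonneg_left (hmmχ ε p) hX0
        _ = ((if K < Γ.XX S.g s₀ ε p then Γ.XX S.g s₀ ε p else 0) * Mf S.A u ^ (s₀ + ε)) *
            (Es u * χ (ex u)) := by ring
        _ ≤ (K ^ (-t) * (pPow (Fl S.A S.g u) q * Mf S.A u ^ t)) * (Es u * χ (ex u)) :=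
            mul_le_mul_of_nonneg_right h2 hY
        _ = K ^ (-t) * (1 * (Es u * (pPow (Fl S.A S.g u) q * (Mf S.A u ^ t * χ (ex u))))) := by ring
        _ ≤ K ^ (-t) * ((t⁻¹ * (q + 1)) *
            (Es u * (pPow (Fl S.A S.g u) q * (Mf S.A u ^ t * χ (ex u))))) := by
            refine mul_le_mul_of_nonneg_left (mul_le_mul_of_nonneg_right ?_ hZ)
              (Real.rpow_nonneg hK0.le _)
            rw [hq1, mul_add, inv_mul_cancel₀ ht0.ne']
            have : 0 < t⁻¹ * ε := by positivity
            linarith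
        _ = _ := by ring
    have hk : 0 ≤ K ^ (-t) * t⁻¹ := by positivity
    calc _ ≤ ∫⁻ p, ENNReal.ofReal (K ^ (-t) * t⁻¹) * ENNReal.ofReal
          ((q + 1) * (Es (Γ.T ε p) * (pPow (Fl S.A S.g (Γ.T ε p)) q *
          (Mf S.A (Γ.T ε p) ^ t * χ (ex (Γ.T ε p)))))) := by
          refine lintegral_mono fun p => ?_
          rw [← ENNReal.ofReal_mul hk]
          exact ENNReal.ofReal_le_ofReal (hle p)
      _ = ENNReal.ofReal (K ^ (-t) * t⁻¹) * ∫⁻ p, ENNReal.ofReal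
          ((q + 1) * (Es (Γ.T ε p) * (pPow (Fl S.A S.g (Γ.T ε p)) q *
          (Mf S.A (Γ.T ε p) ^ t * χ (ex (Γ.T ε p)))))) :=
          lintegral_const_mul' _ _ ENNReal.ofReal_ne_top
      _ ≤ ENNReal.ofReal (K ^ (-t) * t⁻¹) * ∫⁻ p, ENNReal.ofReal (C * D p) := by
          refine mul_le_mul' le_rfl (h1.trans (lintegral_mono fun p => ?_))
          by_cases hb : Γ.T ε p ∈ S.box
          · rw [Set.indicator_of_mem hb]
            exact ENNReal.ofReal_le_ofReal
              (mul_le_mul_of_nonneg_left (hε p fun i => S.box_neg hb i) hC0)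
          · rw [Set.indicator_of_notMem hb]
            exact zero_le
      _ = _ := by
          rw [← ofReal_integral_eq_lintegral_ofReal (hD.const_mul _)
            (Eventually.of_forall fun p => mul_nonneg hC0 (hD0 p)), ← ENNReal.ofReal_mul hk,
            integral_const_mul]
          congr 1
          ring

/-- Below the abscissa `s₀` nothing is needed: the integral already converges for `Re s > s₀`. -/
theorem differentiableOn_J {s₀ : ℝ} (hs₀ : s₀ = -1 / t₀) (hs₀gt : -1 < s₀) (hs₀lt : s₀ < 0)
    (Γ : Geo S.A t₀ ρ)
    {h χ : (Fin n → ℝ) → ℝ} (H : Amp S h) (Hχ : Amp S χ) (hχ : ∀ x, |h x| ≤ χ x) :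
    DifferentiableOn ℂ (fun s => J S s (mh 0 h)) {s | s₀ < s.re} := by
  have hχ0 : ∀ x, 0 ≤ χ x := fun x => (abs_nonneg _).trans (hχ x)
  have hMp := fun u => Mf_pos S.hA u
  have hmh : ∀ u, mh 0 h u = h (ex u) := fun u => by simp [mh, cv, dotR]
  obtain ⟨C₁, hC₁⟩ := S.Fl_bound
  set B := max C₁ 1 with hB
  have hcont : Continuous fun u => h (ex u) := H.smooth.continuous.comp continuous_ex
  have hbox : ∀ u, h (ex u) ≠ 0 → Fl S.A S.g u ≤ B := by
    intro u hu
    have hb : u ∈ S.box := by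
      by_contra hb
      exact hu (H.box u hb)
    exact (le_abs_self _).trans ((hC₁ u fun i => S.box_neg hb i).trans (le_max_left _ _))
  have key := differentiableOn_cp_integral (μ := volume) S.measurable_Fl
    (k := fun u => ((Es u * h (ex u) : ℝ) : ℂ)) (C := B) (a := s₀)
    (Complex.continuous_ofReal.comp (continuous_Es.mul hcont)).aestronglyMeasurable
    (fun u hu => hbox u fun h0 => hu (by simp [h0])) ?_
  · refine key.congr fun s hs => ?_
    rw [J]
    refine integral_congr_ae (Eventually.of_forall fun u => ?_)
    simp only [hmh, Complex.real_smul, Complex.ofReal_mul]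
    ring
  · intro σ hσ
    set p := min σ (s₀ / 2) with hp
    have hp1 : s₀ < p := lt_min hσ (by linarith)
    have hp2 : p < 0 := (min_le_right _ _).trans_lt (by linarith)
    have hpσ : p ≤ σ := min_le_left _ _
    obtain ⟨C, hC0, hC⟩ := uniform_bound S le_rfl Hχ hχ0
    have h1 := hC p (by linarith) hp2
    have hfin : ∫⁻ u in S.box, ENNReal.ofReal (C * (Es u * Mf S.A u ^ (p + 0))) ≠ ⊤ := by
      have hk : 0 < 1 + t₀ * p := by
        have := Γ.t₀_pos
        have e : t₀ * s₀ = -1 := by rw [hs₀]; field_simp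
        have : t₀ * s₀ < t₀ * p := mul_lt_mul_of_pos_left hp1 this
        linarith
      have hItg := ((integrable_exp_orthant n _ hk).const_mul C).lintegral_lt_top
      refine ne_top_of_le_ne_top hItg.ne ?_
      rw [← lintegral_indicator S.measurableSet_box]
      refine lintegral_mono fun u => ?_
      by_cases hb : u ∈ S.box
      · rw [Set.indicator_of_mem hb, if_pos fun i => (S.box_neg hb i).le]
        refine ENNReal.ofReal_le_ofReal (mul_le_mul_of_nonneg_left ?_ hC0)
        rw [add_zero]
        calc Es u * Mf S.A u ^ p ≤ Real.exp (∑ i, u i) * Real.exp (t₀ * ∑ i, u i) ^ p := by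
              refine mul_le_mul_of_nonneg_left ?_ (Es_pos u).le
              exact Real.rpow_le_rpow_of_nonpos (Real.exp_pos _) (Γ.exp_le_Mf' u) hp2.le
          _ = Real.exp ((1 + t₀ * p) * ∑ i, u i) := by
              rw [← Real.exp_mul, ← Real.exp_add]; congr 1; ring
      · rw [Set.indicator_of_notMem hb]
        exact zero_le
    have hI : Integrable fun u => (p + 1) * (Es u * (pPow (Fl S.A S.g u) p *
        (Mf S.A u ^ (0:ℝ) * χ (ex u)))) := by
      refine ⟨?_, ?_⟩
      · refine Measurable.aestronglyMeasurable ?_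
        exact (continuous_Es.measurable.mul (((measurable_pPow _).comp S.measurable_Fl).mul
          (((measurable_Mf _).pow_const _).mul
          (Hχ.smooth.continuous.comp continuous_ex).measurable))).const_mul _
      · rw [hasFiniteIntegral_iff_ofReal]
        · exact h1.trans_lt hfin.lt_top
        · refine Eventually.of_forall fun u => ?_
          exact mul_nonneg (by linarith) (mul_nonneg (Es_pos u).le (mul_nonneg (pPow_nonneg _ _)
            (mul_nonneg (Real.rpow_nonneg (hMp u).le _) (hχ0 _))))
    refine (hI.const_mul (B ^ (σ - p) * (p + 1)⁻¹)).mono'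
      (((measurable_cp _).comp S.measurable_Fl).mul (Complex.measurable_ofReal.comp
        (continuous_Es.mul hcont).measurable)).aestronglyMeasurable
      (Eventually.of_forall fun u => ?_)
    have hp0 : p + 1 ≠ 0 := by linarith
    have e1 : B ^ (σ - p) * (p + 1)⁻¹ * ((p + 1) * (Es u * (pPow (Fl S.A S.g u) p *
        (Mf S.A u ^ (0:ℝ) * χ (ex u))))) =
        (B ^ (σ - p) * pPow (Fl S.A S.g u) p) * (Es u * χ (ex u)) := by
      rw [Real.rpow_zero]
      field_simp
    rw [e1, cp_ofReal, norm_mul, Complex.norm_real, Complex.norm_real, Real.norm_eq_abs,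
      Real.norm_eq_abs, abs_of_nonneg (pPow_nonneg _ _), abs_mul, abs_of_pos (Es_pos u)]
    by_cases h0 : h (ex u) = 0
    · rw [h0, abs_zero, mul_zero, mul_zero]
      exact mul_nonneg (mul_nonneg (by positivity) (pPow_nonneg _ _))
        (mul_nonneg (Es_pos u).le (hχ0 _))
    · refine mul_le_mul ?_ (mul_le_mul_of_nonneg_left (hχ _) (Es_pos u).le)
        (mul_nonneg (Es_pos u).le (abs_nonneg _))
        (mul_nonneg (by positivity) (pPow_nonneg _ _))
      unfold pPow
      split_ifs with hF
      · have : Fl S.A S.g u ^ σ = Fl S.A S.g u ^ (σ - p) * Fl S.A S.g u ^ p := by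
          rw [← Real.rpow_add hF]; ring_nf
        rw [this]
        exact mul_le_mul_of_nonneg_right (Real.rpow_le_rpow hF.le (hbox u h0) (by linarith))
          (Real.rpow_nonneg hF.le _)
      · rw [mul_zero]

end limit

/-! ### The splitting and the volume of `C` -/

section geo_construction

variable {n : ℕ}

/-- The hypotheses on the facet normals produce the splitting: the normals of the faces through
`(t₀, …, t₀)` lie in the span of the `ξ_j`, which has dimension `ρ`. -/
lemma exists_geo {ρ r : ℕ} (hρn : ρ ≤ n) {a : (Fin n → ℕ) → ℝ} {A : Finset (Fin n → ℕ)}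
    (hA : ∀ α ∈ A, a α ≠ 0) (hmin : ∀ α, a α ≠ 0 → ∃ β ∈ A, β ≤ α) {t₀ : ℝ} (ht₀ : 0 < t₀)
    {Γ τ₀ : Set (Fin n → ℝ)} (hΓ : Γ = newtonPolyhedron {α | a α ≠ 0})
    (ht : (fun _ => t₀) ∈ Γ) (hτface : IsFaceOf Γ τ₀) (hτmem : (fun _ => t₀) ∈ τ₀)
    (hτmin : ∀ τ : Set (Fin n → ℝ), IsFaceOf Γ τ → (fun _ => t₀) ∈ τ → τ₀ ⊆ τ)
    (hτcomp : IsCompact τ₀) {ξ : Fin r → Fin n → ℕ} (hξ0 : ∀ j, ξ j ≠ 0)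
    (hξτ : ∀ j, τ₀ ⊆ traceFace Γ (fun i => (ξ j i : ℝ)))
    (hξall : ∀ τ : Set (Fin n → ℝ), IsFaceOf Γ τ → faceDim τ = n - 1 → τ₀ ⊆ τ →
      ∃ j, τ = traceFace Γ (fun i => (ξ j i : ℝ)))
    (hcompl : IsCompl (Submodule.span ℝ (Set.range fun j => fun i => (ξ j i : ℝ)))
      (Submodule.span ℝ {x : Fin n → ℝ | ∃ i : Fin n, ρ ≤ (i : ℕ) ∧ x = Pi.single i 1}))
    (hrank : Module.finrank ℝ (Submodule.span ℝ (Set.range fun j => fun i => (ξ j i : ℝ))) = ρ) :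
    ∃ G : Geo A t₀ ρ, τ₀ = traceFace Γ G.u₀ := by
  obtain ⟨u₀, hu₀, rfl⟩ := hτface
  have hpos : ∀ i, 0 < u₀ i := by
    subst hΓ
    exact pos_of_compact hu₀ hτcomp hτmem
  have hmem : u₀ ∈ Pc A t₀ := by
    subst hΓ
    exact (mem_Pc_iff hA hmin ht hu₀).2 hτmem
  have htne : ∃ α ∈ A, dotR (dv t₀ α) u₀ = 0 := by
    by_contra! hcon
    have hlt : ∀ α ∈ A, dotR u₀ (fun _ => t₀) < dotR u₀ (cv α) := by
      intro α hα
      have h1 := (hmem.2 α hα).lt_of_ne (hcon α hα).symm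
      rw [dotR_dv'] at h1
      linarith
    obtain ⟨c, hc, hcA⟩ : ∃ c, dotR u₀ (fun _ => t₀) < c ∧ ∀ α ∈ A, c ≤ dotR u₀ (cv α) := by
      rcases A.eq_empty_or_nonempty with rfl | hne
      · exact ⟨_, lt_add_one _, by simp⟩
      · obtain ⟨β, hβ, hb⟩ := A.exists_min_image (fun α => dotR u₀ (cv α)) hne
        exact ⟨_, hlt β hβ, hb⟩
    subst hΓ
    have := newton_ge hmin hu₀ hcA ht
    linarith
  set W := Submodule.span ℝ (Set.range fun j => fun i => (ξ j i : ℝ)) with hW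
  let e : (Fin ρ → ℝ) ≃ₗ[ℝ] W := LinearEquiv.ofFinrankEq _ _ (by rw [hrank]; simp)
  let ℓ : (Fin ρ → ℝ) →ₗ[ℝ] (Fin n → ℝ) := W.subtype ∘ₗ e.toLinearMap
  have hℓW : ∀ a, ℓ a ∈ W := fun a => (e a).2
  have hℓr : ∀ w ∈ W, ∃ a, ℓ a = w := fun w hw => ⟨e.symm ⟨w, hw⟩, by simp [ℓ]⟩
  have hbij : Function.Bijective (ℓ.coprod (iota n ρ)) := by
    have hsurj : Function.Surjective (ℓ.coprod (iota n ρ)) := by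
      intro z
      have hz : z ∈ W ⊔ Submodule.span ℝ
          {x : Fin n → ℝ | ∃ i : Fin n, ρ ≤ (i : ℕ) ∧ x = Pi.single i 1} := by
        rw [hcompl.sup_eq_top]; trivial
      obtain ⟨w, hw, y, hy, rfl⟩ := Submodule.mem_sup.1 hz
      rw [← range_iota hρn] at hy
      obtain ⟨b, rfl⟩ := hy
      obtain ⟨a, rfl⟩ := hℓr w hw
      exact ⟨(a, b), by simp⟩
    exact ⟨(LinearMap.injective_iff_surjective_of_finrank_eq_finrank (by simp [hρn])).2 hsurj,
      hsurj⟩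
  refine ⟨⟨hρn, ht₀, u₀, hpos, hmem.2, htne, ℓ, ?_, ?_, LinearEquiv.ofBijective _ hbij, ?_⟩, rfl⟩
  · intro v hv
    obtain ⟨c, -, rfl⟩ := cone_gen hA hmin hΓ ht hτmin hξ0 hξall hv
    exact hℓr _ (Submodule.sum_mem _ fun j _ =>
      Submodule.smul_mem _ _ (Submodule.subset_span ⟨j, rfl⟩))
  · intro α hα h0 a
    have hα' : cv α ∈ traceFace Γ u₀ := by
      refine ⟨hΓ ▸ cv_mem_newton (hA _ hα), fun z hz => ?_⟩
      rw [dotR_dv'] at h0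
      have := hτmem.2 z hz
      linarith
    have hle : W ≤ LinearMap.ker (dotL (dv t₀ α)) := by
      rw [hW, Submodule.span_le]
      rintro _ ⟨j, rfl⟩
      show dotR (dv t₀ α) (cv (ξ j)) = 0
      rw [dotR_dv', sub_eq_zero]
      exact traceFace_eq_val (hξτ j hα') (hξτ j hτmem)
    exact hle (hℓW a)
  · intro p
    simp

/-- Nonnegative combinations of points of `P`, in the form used by `hull_eq_slice`, are closed
under addition. -/
lemma comb_add {P : Set (Fin n → ℝ)} {x y : Fin n → ℝ}
    (hx : ∃ (s : Finset (Fin n → ℝ)) (c : (Fin n → ℝ) → ℝ), (∀ p ∈ s, p ∈ P ∧ 0 ≤ c p) ∧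
      x = ∑ p ∈ s, c p • p)
    (hy : ∃ (s : Finset (Fin n → ℝ)) (c : (Fin n → ℝ) → ℝ), (∀ p ∈ s, p ∈ P ∧ 0 ≤ c p) ∧
      y = ∑ p ∈ s, c p • p) :
    ∃ (s : Finset (Fin n → ℝ)) (c : (Fin n → ℝ) → ℝ), (∀ p ∈ s, p ∈ P ∧ 0 ≤ c p) ∧
      x + y = ∑ p ∈ s, c p • p := by
  obtain ⟨s, c, hs, rfl⟩ := hx
  obtain ⟨t, d, ht, rfl⟩ := hy
  refine ⟨s ∪ t, fun p => (if p ∈ s then c p else 0) + (if p ∈ t then d p else 0), ?_, ?_⟩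
  · intro p hp
    refine ⟨(Finset.mem_union.1 hp).elim (fun h => (hs p h).1) fun h => (ht p h).1, ?_⟩
    refine add_nonneg ?_ ?_
    · split_ifs with h
      · exact (hs p h).2
      · exact le_rfl
    · split_ifs with h
      · exact (ht p h).2
      · exact le_rfl
  · simp only [add_smul, ite_smul, zero_smul, Finset.sum_add_distrib, Finset.sum_ite_mem]
    rw [Finset.union_inter_cancel_left, Finset.union_inter_cancel_right]

lemma comb_sum {P : Set (Fin n → ℝ)} {ι : Type*} (t : Finset ι) (c : ι → ℝ) (p : ι → Fin n → ℝ)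
    (hc : ∀ i ∈ t, c i = 0 ∨ (0 ≤ c i ∧ p i ∈ P)) :
    ∃ (s : Finset (Fin n → ℝ)) (d : (Fin n → ℝ) → ℝ), (∀ p ∈ s, p ∈ P ∧ 0 ≤ d p) ∧
      ∑ i ∈ t, c i • p i = ∑ p ∈ s, d p • p := by
  refine Finset.sum_induction _ (fun x => ∃ (s : Finset (Fin n → ℝ)) (d : (Fin n → ℝ) → ℝ),
    (∀ p ∈ s, p ∈ P ∧ 0 ≤ d p) ∧ x = ∑ p ∈ s, d p • p) (fun _ _ => comb_add) ⟨∅, 0, by simp⟩ ?_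
  intro i hi
  rcases hc i hi with h | ⟨h1, h2⟩
  · exact ⟨∅, 0, by simp [h]⟩
  · exact ⟨{p i}, fun _ => c i, by simpa using ⟨h2, h1⟩, by simp⟩

/-- The integral of `exp (-∑ b)` over the nonnegative orthant is `1`. -/
lemma lintegral_exp_neg_sum (m : ℕ) : ∫⁻ b : Fin m → ℝ,
    (if ∀ k, 0 ≤ b k then ENNReal.ofReal (Real.exp (-∑ k, b k)) else 0) = 1 := by
  set f : ℝ → ℝ := (Set.Ici (0:ℝ)).indicator fun x => Real.exp (-x) with hf
  have hfi : Integrable f := by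
    rw [hf, integrable_indicator_iff measurableSet_Ici, integrableOn_Ici_iff_integrableOn_Ioi]
    exact integrableOn_exp_neg_Ioi 0
  have hf1 : ∫ x, f x = 1 := by
    rw [hf, integral_indicator measurableSet_Ici, integral_Ici_eq_integral_Ioi]
    exact integral_exp_neg_Ioi_zero
  have hf0 : ∀ x, 0 ≤ f x := fun x => Set.indicator_nonneg (fun _ _ => (Real.exp_pos _).le) x
  have h1 : ∫ b : Fin m → ℝ, ∏ k, f (b k) = 1 := by
    rw [integral_fintype_prod_volume_eq_prod (fun _ : Fin m => f)]
    simp [hf1]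
  have h2 : Integrable fun b : Fin m → ℝ => ∏ k, f (b k) :=
    Integrable.fintype_prod (𝕜 := ℝ) (μ := fun _ : Fin m => volume) fun _ => hfi
  have h3 := ofReal_integral_eq_lintegral_ofReal h2
    (Eventually.of_forall fun b => Finset.prod_nonneg fun k _ => hf0 _)
  rw [h1, ENNReal.ofReal_one] at h3
  rw [h3]
  refine lintegral_congr fun b => ?_
  split_ifs with h
  · congr 1
    rw [← Finset.sum_neg_distrib, Real.exp_sum]
    refine Finset.prod_congr rfl fun k _ => ?_
    rw [hf, Set.indicator_of_mem (show b k ∈ Set.Ici (0:ℝ) from h k)]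
  · push Not at h
    obtain ⟨k, hk⟩ := h
    rw [Finset.prod_eq_zero (Finset.mem_univ k), ENNReal.ofReal_zero]
    rw [hf, Set.indicator_of_notMem]
    simpa using hk

lemma isClosed_Pc (A : Finset (Fin n → ℕ)) (t₀ : ℝ) : IsClosed (Pc A t₀) := by
  have e : Pc A t₀ = (⋂ i, {v : Fin n → ℝ | 0 ≤ v i}) ∩ ⋂ α ∈ A, {v | 0 ≤ dotR (dv t₀ α) v} := by
    ext v; simp [Pc]
  rw [e]
  refine (isClosed_iInter fun i => isClosed_le continuous_const (continuous_apply i)).inter ?_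
  exact isClosed_biInter fun α _ => isClosed_le continuous_const (continuous_dotR _)

lemma Pc_add {A : Finset (Fin n → ℕ)} {t₀ : ℝ} {x y : Fin n → ℝ} (hx : x ∈ Pc A t₀)
    (hy : y ∈ Pc A t₀) : x + y ∈ Pc A t₀ :=
  ⟨fun i => add_nonneg (hx.1 i) (hy.1 i), fun α hα => by
    rw [dotR_add_right]; exact add_nonneg (hx.2 α hα) (hy.2 α hα)⟩

lemma Pc_smul {A : Finset (Fin n → ℕ)} {t₀ : ℝ} {c : ℝ} (hc : 0 ≤ c) {x : Fin n → ℝ}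
    (hx : x ∈ Pc A t₀) : c • x ∈ Pc A t₀ :=
  ⟨fun i => mul_nonneg hc (hx.1 i), fun α hα => by
    rw [dotR_smul_right]; exact mul_nonneg hc (hx.2 α hα)⟩

/-- The volume of the polytope `C` as an integral over the cone of normals. -/
lemma volume_hull {A : Finset (Fin n → ℕ)} {t₀ : ℝ} {ρ r : ℕ} (Γ : Geo A t₀ ρ)
    {ξ : Fin r → Fin n → ℕ} (hξ0 : ∀ j, ξ j ≠ 0) (hξP : ∀ j, cv (ξ j) ∈ Pc A t₀)
    (hgen : ∀ v ∈ Pc A t₀, ∃ c : Fin r → ℝ, (∀ j, 0 ≤ c j) ∧ v = ∑ j, c j • cv (ξ j))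
    {N : Fin r → ℝ} (hN : ∀ j, N j = t₀ * ∑ i, (ξ j i : ℝ)) {C : Set (Fin n → ℝ)}
    (hC : C = convexHull ℝ (insert (0 : Fin n → ℝ)
      ((Set.range fun j => fun i => (ξ j i : ℝ) / N j) ∪
        {x : Fin n → ℝ | ∃ i : Fin n, ρ ≤ (i : ℕ) ∧ x = Pi.single i 1})))
    {c : ENNReal} (hc : ∀ ε : ℝ, 0 < ε → (volume : Measure (Fin n → ℝ)) =
      (c * ENNReal.ofReal ((ε ^ ρ)⁻¹)) • Measure.map (Γ.T ε) volume) :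
    (n.factorial : ℝ) * (volume C).toReal = c.toReal * ∫ a, Γ.W a := by
  set P : Set (Fin n → ℝ) := (Set.range fun j => fun i => (ξ j i : ℝ) / N j) ∪
        {x : Fin n → ℝ | ∃ i : Fin n, ρ ≤ (i : ℕ) ∧ x = Pi.single i 1} with hP
  have hNpos : ∀ j, 0 < N j := by
    intro j
    rw [hN]
    refine mul_pos Γ.t₀_pos ?_
    obtain ⟨i, hi⟩ := Function.ne_iff.1 (hξ0 j)
    exact Finset.sum_pos' (fun _ _ => Nat.cast_nonneg _)
      ⟨i, Finset.mem_univ _, by exact_mod_cast Nat.pos_of_ne_zero hi⟩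
  have hℓc : Continuous Γ.ℓ := LinearMap.continuous_of_finiteDimensional _
  have hΦc : Continuous Γ.Φ.symm := Γ.Φ.symm.toContinuousLinearEquiv.continuous
  set Cn : Set (Fin n → ℝ) := {z | Γ.ℓ (Γ.Φ.symm z).1 ∈ Pc A t₀ ∧ ∀ k, 0 ≤ (Γ.Φ.symm z).2 k} with hCn
  let L₀ : ((Fin ρ → ℝ) × (Fin (n - ρ) → ℝ)) →ₗ[ℝ] ℝ :=
    (t₀ • ((∑ i, LinearMap.proj i) ∘ₗ Γ.ℓ)).coprod (∑ k, LinearMap.proj k)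
  have hL₀ : ∀ p, L₀ p = t₀ * ∑ i, Γ.ℓ p.1 i + ∑ k, p.2 k := fun p => by
    simp [L₀, LinearMap.sum_apply]
  let L : (Fin n → ℝ) →ₗ[ℝ] ℝ := L₀ ∘ₗ Γ.Φ.symm.toLinearMap
  have hL : ∀ p, L (Γ.Φ p) = t₀ * ∑ i, Γ.ℓ p.1 i + ∑ k, p.2 k := fun p => by
    simp [L, hL₀]
  have hmemCn : ∀ p, Γ.Φ p ∈ Cn ↔ Γ.ℓ p.1 ∈ Pc A t₀ ∧ ∀ k, 0 ≤ p.2 k := fun p => by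
    simp [hCn]
  have hCm : MeasurableSet Cn := by
    apply IsClosed.measurableSet
    have e : Cn = (fun z => Γ.ℓ (Γ.Φ.symm z).1) ⁻¹' (Pc A t₀) ∩
        ⋂ k, {z | 0 ≤ (Γ.Φ.symm z).2 k} := by
      ext z; simp [hCn]
    rw [e]
    exact ((isClosed_Pc A t₀).preimage (hℓc.comp hΦc.fst)).inter (isClosed_iInter fun k =>
      isClosed_le continuous_const ((continuous_apply k).comp hΦc.snd))
  have hCs : ∀ c : ℝ, 0 < c → ∀ z ∈ Cn, c • z ∈ Cn := by
    rintro c hc z ⟨h1, h2⟩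
    refine ⟨?_, fun k => ?_⟩
    · rw [map_smul, Prod.smul_fst, map_smul]
      exact Pc_smul hc.le h1
    · rw [map_smul]
      exact mul_nonneg hc.le (h2 k)
  have hadd : ∀ x ∈ Cn, ∀ y ∈ Cn, x + y ∈ Cn := by
    rintro x ⟨h1, h2⟩ y ⟨h3, h4⟩
    refine ⟨?_, fun k => ?_⟩
    · rw [map_add, Prod.fst_add, map_add]
      exact Pc_add h1 h3
    · rw [map_add]
      exact add_nonneg (h2 k) (h4 k)
  have h0 : (0 : Fin n → ℝ) ∈ Cn := by
    refine ⟨?_, fun k => ?_⟩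
    · rw [map_zero, Prod.fst_zero, map_zero]
      exact ⟨fun _ => le_rfl, fun α _ => by simp [dotR]⟩
    · rw [map_zero]; exact le_rfl
  have hL0 : ∀ z ∈ Cn, 0 ≤ L z := by
    rintro z ⟨h1, h2⟩
    obtain ⟨p, rfl⟩ := Γ.Φ.surjective z
    rw [LinearEquiv.symm_apply_apply] at h1 h2
    rw [hL]
    exact add_nonneg (mul_nonneg Γ.t₀_pos.le (Finset.sum_nonneg fun i _ => h1.1 i))
      (Finset.sum_nonneg fun k _ => h2 k)
  -- the two kinds of generators
  have hfst : ∀ v ∈ Pc A t₀, v ∈ Cn ∧ L v = t₀ * ∑ i, v i := by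
    intro v hv
    obtain ⟨a, rfl⟩ := Γ.mem_range v hv
    have e : Γ.ℓ a = Γ.Φ (a, 0) := by rw [Γ.Φ_apply]; simp
    refine ⟨?_, ?_⟩
    · rw [e, hmemCn]; exact ⟨hv, fun _ => le_rfl⟩
    · conv_lhs => rw [e, hL]
      simp
  have hsnd : ∀ b : Fin (n - ρ) → ℝ, (∀ k, 0 ≤ b k) → iota n ρ b ∈ Cn ∧
      L (iota n ρ b) = ∑ i, iota n ρ b i := by
    intro b hb
    have e : iota n ρ b = Γ.Φ (0, b) := by rw [Γ.Φ_apply]; simp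
    refine ⟨?_, ?_⟩
    · rw [e, hmemCn]
      exact ⟨by simpa using ⟨fun _ => le_rfl, fun α _ => by simp [dotR]⟩, hb⟩
    · rw [sum_iota Γ.hρ]
      rw [e, hL]
      simp
  have hsingle : ∀ i : Fin n, ρ ≤ (i : ℕ) → ∃ b : Fin (n - ρ) → ℝ, (∀ k, 0 ≤ b k) ∧
      iota n ρ b = Pi.single i 1 := by
    intro i hi
    have h1 : (Pi.single i 1 : Fin n → ℝ) ∈ LinearMap.range (iota n ρ) := by
      rw [range_iota Γ.hρ]
      exact Submodule.subset_span ⟨i, hi, rfl⟩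
    obtain ⟨b, hb⟩ := h1
    refine ⟨b, fun k => ?_, hb⟩
    have h2 := congrFun hb ⟨ρ + k, by omega⟩
    have h3 : iota n ρ b ⟨ρ + k, by omega⟩ = b k := by simp [iota_apply]
    rw [← h3, h2, Pi.single_apply]
    split_ifs <;> norm_num
  have hξN : ∀ j, (fun i => (ξ j i : ℝ) / N j) = (N j)⁻¹ • cv (ξ j) := fun j => by
    ext i; simp [cv, div_eq_inv_mul]
  have hPC : ∀ p ∈ P, p ∈ Cn ∧ L p = 1 := by
    rintro _ (⟨j, rfl⟩ | ⟨i, hi, rfl⟩)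
    · obtain ⟨h1, h2⟩ := hfst _ (hξP j)
      beta_reduce
      rw [hξN]
      refine ⟨hCs _ (inv_pos.2 (hNpos j)) _ h1, ?_⟩
      rw [map_smul, h2, smul_eq_mul]
      have : t₀ * ∑ i, cv (ξ j) i = N j := (hN j).symm
      rw [this, inv_mul_cancel₀ (hNpos j).ne']
    · obtain ⟨b, hb, e⟩ := hsingle i hi
      rw [← e]
      refine ⟨(hsnd b hb).1, ?_⟩
      rw [(hsnd b hb).2, e]
      simp
  have hgen' : ∀ z ∈ Cn, ∃ (s : Finset (Fin n → ℝ)) (c : (Fin n → ℝ) → ℝ),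
      (∀ p ∈ s, p ∈ P ∧ 0 ≤ c p) ∧ z = ∑ p ∈ s, c p • p := by
    rintro z ⟨h1, h2⟩
    obtain ⟨⟨a, b⟩, rfl⟩ := Γ.Φ.surjective z
    rw [LinearEquiv.symm_apply_apply] at h1 h2
    rw [Γ.Φ_apply]
    refine comb_add ?_ ?_
    · obtain ⟨c, hc, e⟩ := hgen _ h1
      have e2 : ∑ j, c j • cv (ξ j) = ∑ j, (c j * N j) • (fun i => (ξ j i : ℝ) / N j) := by
        refine Finset.sum_congr rfl fun j _ => ?_
        rw [hξN, smul_smul, mul_assoc, mul_inv_cancel₀ (hNpos j).ne', mul_one]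
      rw [e, e2]
      exact comb_sum _ _ _ fun j _ => Or.inr ⟨mul_nonneg (hc j) (hNpos j).le, Or.inl ⟨j, rfl⟩⟩
    · have e : iota n ρ b = ∑ i, iota n ρ b i • (Pi.single i 1 : Fin n → ℝ) :=
        pi_eq_sum_univ' (iota n ρ b) |>.trans (by simp)
      show ∃ (s : Finset (Fin n → ℝ)) (c : (Fin n → ℝ) → ℝ), (∀ p ∈ s, p ∈ P ∧ 0 ≤ c p) ∧
        iota n ρ b = ∑ p ∈ s, c p • p
      rw [e]
      refine comb_sum _ _ _ fun i _ => ?_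
      by_cases h : (i : ℕ) < ρ
      · left; simp [iota_apply, h]
      · right
        refine ⟨?_, Or.inr ⟨i, not_lt.1 h, rfl⟩⟩
        rw [iota_apply, dif_neg h]
        exact h2 _
  have hslice := hull_eq_slice L (fun p hp => (hPC p hp).2) (fun p hp => (hPC p hp).1) h0 hadd hCs
    hgen'
  have hcone := lintegral_cone hCm hCs L hL0
  rw [← hslice, ← hC] at hcone
  have hW0 : ∀ a, 0 ≤ Γ.W a := fun a => by
    unfold Geo.W; split_ifs <;> positivity
  have hItg : ∫⁻ z in Cn, ENNReal.ofReal (Real.exp (-L z)) = c * ∫⁻ a, ENNReal.ofReal (Γ.W a) := by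
    rw [← lintegral_indicator hCm]
    have hc1 := hc 1 one_pos
    simp only [one_pow, inv_one, ENNReal.ofReal_one, mul_one] at hc1
    rw [hc1, lintegral_smul_measure, (Γ.measurableEmbedding_T one_ne_zero).lintegral_map, smul_eq_mul]
    congr 1
    have e : ∀ p, Cn.indicator (fun z => ENNReal.ofReal (Real.exp (-L z))) (Γ.T 1 p) =
        ENNReal.ofReal (Γ.W (-p.1)) *
          (if ∀ k, 0 ≤ p.2 k then ENNReal.ofReal (Real.exp (-∑ k, p.2 k)) else 0) := by
      intro p
      have e1 : Γ.T 1 p = Γ.Φ p := by simp [Geo.T]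
      rw [e1]
      unfold Geo.W
      rw [map_neg, neg_neg]
      by_cases h1 : Γ.ℓ p.1 ∈ Pc A t₀ <;> by_cases h2 : ∀ k, 0 ≤ p.2 k
      · rw [Set.indicator_of_mem ((hmemCn p).2 ⟨h1, h2⟩), hL, if_pos h1, if_pos h2, ← ENNReal.ofReal_mul (Real.exp_pos _).le,
          ← Real.exp_add]
        congr 2
        simp only [Pi.neg_apply, Finset.sum_neg_distrib]
        ring
      · rw [Set.indicator_of_notMem (fun h => h2 ((hmemCn p).1 h).2), if_neg h2, mul_zero]
      · rw [Set.indicator_of_notMem (fun h => h1 ((hmemCn p).1 h).1), if_neg h1, ENNReal.ofReal_zero, zero_mul]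
      · rw [Set.indicator_of_notMem (fun h => h1 ((hmemCn p).1 h).1), if_neg h1, ENNReal.ofReal_zero, zero_mul]
    rw [lintegral_congr e, Measure.volume_eq_prod,
      lintegral_prod_mul (f := fun a => ENNReal.ofReal (Γ.W (-a)))
        (g := fun b : Fin (n - ρ) → ℝ =>
          if ∀ k, 0 ≤ b k then ENNReal.ofReal (Real.exp (-∑ k, b k)) else 0)]
    · rw [lintegral_exp_neg_sum, mul_one]
      exact lintegral_neg_eq_self (μ := (volume : Measure (Fin ρ → ℝ)))
        (fun a => ENNReal.ofReal (Γ.W a))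
    · exact ((Γ.measurable_W.comp measurable_neg).ennreal_ofReal).aemeasurable
    · refine Measurable.aemeasurable (Measurable.ite ?_ ?_ measurable_const)
      · have : {b : Fin (n - ρ) → ℝ | ∀ k, 0 ≤ b k} = ⋂ k, {b | 0 ≤ b k} := by ext; simp
        rw [this]
        exact MeasurableSet.iInter fun k => measurableSet_le measurable_const (measurable_pi_apply k)
      · fun_prop
  rw [hItg] at hcone
  have := congrArg ENNReal.toReal hcone
  rw [ENNReal.toReal_mul, ENNReal.toReal_mul, ENNReal.toReal_natCast] at this
  rw [← this, integral_eq_lintegral_of_nonneg_ae (Eventually.of_forall hW0)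
    Γ.measurable_W.aestronglyMeasurable]

end geo_construction

/-! ### The residue formula -/

section assembly

variable {n : ℕ}

namespace Geo

variable {A : Finset (Fin n → ℕ)} {t₀ : ℝ} {ρ : ℕ}

/-- `W` is positive on an open set: near `-u₀` every point of the span of the normals is, up to
sign, again a normal. -/
lemma exists_W_ne (Γ : Geo A t₀ ρ) : ∃ O : Set (Fin ρ → ℝ), IsOpen O ∧ O.Nonempty ∧
    ∀ a ∈ O, Γ.W a ≠ 0 := by
  have hℓc : Continuous Γ.ℓ := LinearMap.continuous_of_finiteDimensional _
  obtain ⟨a₀, ha₀⟩ := Γ.mem_range _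
    (show Γ.u₀ ∈ Pc A t₀ from ⟨fun i => (Γ.u₀_pos i).le, Γ.u₀_mem⟩)
  refine ⟨(⋂ i, {a | 0 < (-(Γ.ℓ a)) i}) ∩ ⋂ α ∈ A \ Γ.At, {a | 0 < dotR (dv t₀ α) (-(Γ.ℓ a))},
    ?_, ⟨-a₀, ?_⟩, ?_⟩
  · refine (isOpen_iInter_of_finite fun i => isOpen_lt continuous_const
      ((continuous_apply i).comp hℓc.neg)).inter ?_
    exact isOpen_biInter_finset fun α _ => isOpen_lt continuous_const
      ((continuous_dotR _).comp hℓc.neg)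
  · refine ⟨Set.mem_iInter.2 fun i => ?_, Set.mem_iInter₂.2 fun α hα => ?_⟩
    · show 0 < (-(Γ.ℓ (-a₀))) i
      rw [map_neg, neg_neg, ha₀]
      exact Γ.u₀_pos i
    · show 0 < dotR (dv t₀ α) (-(Γ.ℓ (-a₀)))
      rw [map_neg, neg_neg, ha₀]
      exact Γ.pos_of_not_tight (Finset.mem_sdiff.1 hα).1 (Finset.mem_sdiff.1 hα).2
  · rintro a ⟨h1, h2⟩
    rw [Set.mem_iInter] at h1
    rw [Set.mem_iInter₂] at h2
    have hP : -(Γ.ℓ a) ∈ Pc A t₀ := by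
      refine ⟨fun i => (h1 i).le, fun α hα => ?_⟩
      by_cases ht : α ∈ Γ.At
      · rw [← map_neg, Γ.tight α hα (Γ.mem_At.1 ht).2]
      · exact (h2 α (Finset.mem_sdiff.2 ⟨hα, ht⟩)).le
    unfold W
    rw [if_pos hP]
    exact (Real.exp_pos _).ne'

/-- The transversal integrand is the face polynomial restricted to `(1, …, 1, y)`, in logarithmic
coordinates; the Jacobian comes from `s₀ t₀ = -1`. -/
lemma pPow_F₀ (Γ : Geo A t₀ ρ) {a : (Fin n → ℕ) → ℝ}
    {g : (Fin n → ℕ) → (Fin n → ℝ) → ℝ} (hga : ∀ α ∈ A, g α 0 = a α)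
    {P : (Fin n → ℝ) → ℝ} (hP : ∀ x, P x = ∑ α ∈ Amin A Γ.u₀, a α * mon α x)
    {s₀ : ℝ} (hs₀ : s₀ = -1 / t₀) (b : Fin (n - ρ) → ℝ) :
    pPow (Γ.F₀ g b) s₀ = Es b * pPow (P (padR ρ (ex b))) s₀ := by
  have e : Γ.F₀ g b = P (padR ρ (ex b)) * Real.exp (-(t₀ * ∑ k, b k)) := by
    rw [hP, Γ.Amin_eq, Finset.sum_mul, F₀]
    refine Finset.sum_congr rfl fun α hα => ?_
    rw [hga α (Γ.mem_At.1 hα).1, ← ex_iota]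
    have h1 : mon α (ex (iota n ρ b)) = Real.exp (dotR (cv α) (iota n ρ b)) := mon_exp α _
    rw [h1, exp_cv t₀, sum_iota Γ.hρ, mul_assoc, mul_assoc, ← Real.exp_add, add_neg_cancel,
      Real.exp_zero, mul_one, mul_comm]
  rw [e, pPow_mul (Real.exp_pos _), ← Real.exp_mul, mul_comm, Es]
  congr 2
  rw [hs₀]
  have := Γ.t₀_pos.ne'
  field_simp

end Geo

/-- The residue formula for the positive part of `f`. -/
theorem residue_core {ρ r : ℕ} (hρn : ρ ≤ n)
    (f : (Fin n → ℝ) → ℝ) (a : (Fin n → ℕ) → ℝ)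
    (hfa : ∀ᶠ x in 𝓝 (0 : Fin n → ℝ), HasSum (fun α => a α * ∏ i, x i ^ α i) (f x))
    (hnc : ∃ α : Fin n → ℕ, a α ≠ 0)
    (Γ : Set (Fin n → ℝ)) (hΓ : Γ = newtonPolyhedron {α | a α ≠ 0})
    (hnd : NonDegenerateR a Γ)
    (t₀ s₀ : ℝ) (ht₀pos : 0 < t₀) (ht₀mem : (fun _ => t₀) ∈ Γ)
    (hs₀ : s₀ = -1 / t₀) (hs₀gt : -1 < s₀) (hs₀lt : s₀ < 0)
    (τ₀ : Set (Fin n → ℝ)) (hτface : IsFaceOf Γ τ₀) (hτmem : (fun _ => t₀) ∈ τ₀)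
    (hτmin : ∀ τ : Set (Fin n → ℝ), IsFaceOf Γ τ → (fun _ => t₀) ∈ τ → τ₀ ⊆ τ)
    (hτcomp : IsCompact τ₀) (ξ : Fin r → Fin n → ℕ) (hξ0 : ∀ j, ξ j ≠ 0)
    (hξτ : ∀ j, τ₀ ⊆ traceFace Γ (fun i => (ξ j i : ℝ)))
    (hξall : ∀ τ : Set (Fin n → ℝ), IsFaceOf Γ τ → faceDim τ = n - 1 → τ₀ ⊆ τ →
      ∃ j, τ = traceFace Γ (fun i => (ξ j i : ℝ)))
    (N : Fin r → ℝ)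
    (hN : ∀ j, IsLeast {v : ℝ | ∃ z ∈ Γ, v = dotR (fun i => (ξ j i : ℝ)) z} (N j))
    (hcompl : IsCompl (Submodule.span ℝ (Set.range fun j => fun i => (ξ j i : ℝ)))
      (Submodule.span ℝ {x : Fin n → ℝ | ∃ i : Fin n, ρ ≤ (i : ℕ) ∧ x = Pi.single i 1}))
    (hrank : Module.finrank ℝ (Submodule.span ℝ (Set.range fun j => fun i => (ξ j i : ℝ))) = ρ)
    (C : Set (Fin n → ℝ))
    (hC : C = convexHull ℝ (insert (0 : Fin n → ℝ)
      ((Set.range fun j => fun i => (ξ j i : ℝ) / N j) ∪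
        {x : Fin n → ℝ | ∃ i : Fin n, ρ ≤ (i : ℕ) ∧ x = Pi.single i 1}))) :
    IntegrableOn (fun y : Fin (n - ρ) → ℝ => pPow (facePoly a τ₀ (padR ρ y)) s₀)
        (posOrthant (n - ρ)) ∧
    ∃ U : Set (Fin n → ℝ), IsOpen U ∧ (0 : Fin n → ℝ) ∈ U ∧
      ∀ φ : (Fin n → ℝ) → ℝ, ContDiff ℝ (⊤ : ℕ∞) φ → HasCompactSupport φ → tsupport φ ⊆ U →
      ∀ G : ℂ → ℂ,
        IsMeroCont (fun s => ∫ x in posOrthant n, cp s (f x) * (φ x : ℂ)) (s₀ : ℂ) G →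
        Tendsto (fun s : ℂ => (s - (s₀ : ℂ)) ^ ρ * G s) (𝓝[≠] (s₀ : ℂ))
          (𝓝 ((n.factorial : ℂ) * ((volume C).toReal : ℂ) * (φ 0 : ℂ) *
            ((∫ y in posOrthant (n - ρ), pPow (facePoly a τ₀ (padR ρ y)) s₀ : ℝ) : ℂ))) := by
  obtain ⟨A, g, hA, hmin, -, hg, hgc, hga, hfg⟩ := exists_data f a hfa
  have hne : A.Nonempty := by
    obtain ⟨α, hα⟩ := hnc
    obtain ⟨β, hβ, -⟩ := hmin α hα
    exact ⟨β, hβ⟩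
  have hnd' : ∀ v : Fin n → ℝ, (∀ i, 0 < v i) → ∀ y : Fin n → ℝ,
      ∃ i, ∑ α ∈ Amin A v, (α i : ℝ) * g α 0 * Real.exp (dotR (cv α) y) ≠ 0 := by
    intro v hv y
    obtain ⟨i, hi⟩ := nondeg_log hA hmin hne (hΓ ▸ hnd) hv y
    refine ⟨i, ?_⟩
    convert hi using 4 with α hα
    exact hga α (Finset.mem_filter.1 hα).1
  obtain ⟨G₀, hG₀⟩ := exists_geo hρn hA hmin ht₀pos hΓ ht₀mem hτface hτmem hτmin hτcomp hξ0 hξτ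
    hξall hcompl hrank
  obtain ⟨S, rfl, rfl⟩ := exists_setup hne hg hgc hnd'
  obtain ⟨c, hc0, hcT, hc⟩ := G₀.exists_volume
  have hndu := hnd' G₀.u₀ G₀.u₀_pos
  -- the volume of `C`
  have hvol : (n.factorial : ℝ) * (volume C).toReal = c.toReal * ∫ a, G₀.W a := by
    refine volume_hull G₀ hξ0 (fun j => ?_) (fun v hv => ?_) (fun j => ?_) hC hc
    · have h1 : (fun _ => t₀) ∈ traceFace Γ (cv (ξ j)) := hξτ j hτmem
      rw [hΓ] at h1 ht₀mem
      exact (mem_Pc_iff hA hmin ht₀mem fun i => Nat.cast_nonneg _).2 h1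
    · exact cone_gen hA hmin hΓ ht₀mem hτmin hξ0 hξall hv
    · have h1 := hξτ j hτmem
      obtain ⟨z, hz, e⟩ := (hN j).1
      have h2 := h1.2 z hz
      have h3 := (hN j).2 ⟨_, ht₀mem, rfl⟩
      have h4 : N j = dotR (fun i => (ξ j i : ℝ)) (fun _ => t₀) := le_antisymm h3 (e ▸ h2)
      rw [h4, dotR, ← Finset.sum_mul, mul_comm]
  -- the transversal integral
  have hface : ∀ x, facePoly a τ₀ x = ∑ α ∈ Amin S.A G₀.u₀, a α * mon α x := by
    intro x
    rw [hG₀, hΓ]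
    exact facePoly_eq hA hmin G₀.u₀_pos x
  have hF : ∀ b, pPow (G₀.F₀ S.g b) s₀ = Es b * pPow (facePoly a τ₀ (padR ρ (ex b))) s₀ :=
    fun b => G₀.pPow_F₀ hga hface hs₀ b
  have hFint : ∫ b, pPow (G₀.F₀ S.g b) s₀ =
      ∫ y in posOrthant (n - ρ), pPow (facePoly a τ₀ (padR ρ y)) s₀ := by
    rw [integral_orthant fun y : Fin (n - ρ) → ℝ => pPow (facePoly a τ₀ (padR ρ y)) s₀]
    simp only [hF, smul_eq_mul]
  -- a cutoff function which is `1` near the origin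
  let χ₀ : ContDiffBump (0 : Fin n → ℝ) := ⟨S.r / 2, S.r, by have := S.r_pos; positivity,
    by have := S.r_pos; linarith⟩
  have hbox : ∀ (x : Fin n → ℝ), x ∈ Metric.ball (0 : Fin n → ℝ) S.r → ∀ i, x i ≤ S.r := by
    intro x hx i
    rw [mem_ball_zero_iff] at hx
    exact (le_abs_self _).trans ((norm_le_pi_norm x i).trans hx.le)
  have Hχ : ∀ B : ℝ, Amp S fun x => B * χ₀ x := by
    intro B
    refine ⟨contDiff_const.mul χ₀.contDiff, χ₀.hasCompactSupport.mul_left, fun u hu => ?_⟩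
    have : χ₀ (ex u) = 0 := by
      by_contra h
      have h1 : ex u ∈ Function.support χ₀ := h
      rw [χ₀.support_eq] at h1
      exact hu (hbox _ h1)
    simp [this]
  have hχ1 : χ₀ 0 = 1 := χ₀.one_of_mem_closedBall (by
    simpa using (show (0:ℝ) ≤ S.r / 2 by have := S.r_pos; positivity))
  refine ⟨?_, ?_⟩
  · rw [integrableOn_orthant]
    have h1 := (main_limit G₀ hndu hs₀ hs₀gt hs₀lt (Hχ 1) (Hχ 1) (fun x => by
      rw [abs_of_nonneg (by simpa using χ₀.nonneg)]) hc0 hcT hc).1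
    have h2 := Integrable.prod_right_ae h1
    obtain ⟨O, hO, hOne, hOW⟩ := G₀.exists_W_ne
    obtain ⟨a₁, ha₁, h3⟩ := (Measure.dense_of_ae h2).inter_open_nonempty O hO hOne
    have h3 : Integrable fun b : Fin (n - ρ) → ℝ =>
      (1 * χ₀ 0) * (G₀.W a₁ * pPow (G₀.F₀ S.g b) s₀) := h3
    have h4 := h3.const_mul (G₀.W a₁)⁻¹
    refine h4.congr (Eventually.of_forall fun b => ?_)
    have hW := hOW a₁ ha₁
    simp only [hχ1, smul_eq_mul, ← hF]
    field_simp
  obtain ⟨δ, hδ, hfδ⟩ := Metric.eventually_nhds_iff_ball.1 hfg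
  refine ⟨Metric.ball 0 (min δ (S.r / 2)), Metric.isOpen_ball, Metric.mem_ball_self
    (lt_min hδ (by have := S.r_pos; positivity)), fun φ hφ hφc hφU G hG => ?_⟩
  have hφz : ∀ x, x ∉ Metric.ball (0 : Fin n → ℝ) (min δ (S.r / 2)) → φ x = 0 := fun x hx =>
    image_eq_zero_of_notMem_tsupport fun h => hx (hφU h)
  have Hφ : Amp S φ := by
    refine ⟨hφ, hφc, fun u hu => hφz _ fun h => hu (hbox _ (Metric.ball_subset_ball ?_ h))⟩
    have := S.r_pos
    exact (min_le_right _ _).trans (by linarith)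
  obtain ⟨B, hB⟩ := hφc.exists_bound_of_continuous hφ.continuous
  have hB0 : 0 ≤ B := (norm_nonneg _).trans (hB 0)
  have hφχ : ∀ x, |φ x| ≤ B * χ₀ x := by
    intro x
    by_cases hx : x ∈ Metric.ball (0 : Fin n → ℝ) (min δ (S.r / 2))
    · rw [χ₀.one_of_mem_closedBall (Metric.ball_subset_closedBall
        (Metric.ball_subset_ball (min_le_right _ _) hx)), mul_one]
      exact hB x
    · rw [hφz x hx, abs_zero]
      exact mul_nonneg hB0 χ₀.nonneg
  have hmh : ∀ u, mh 0 φ u = φ (ex u) := fun u => by simp [mh, cv, dotR]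
  have hZJ : (fun s => ∫ x in posOrthant n, cp s (f x) * (φ x : ℂ)) = fun s => J S s (mh 0 φ) := by
    funext s
    rw [integral_orthant fun x => cp s (f x) * (φ x : ℂ), J]
    refine integral_congr_ae (Eventually.of_forall fun u => ?_)
    beta_reduce
    rw [hmh]
    by_cases hx : ex u ∈ Metric.ball (0 : Fin n → ℝ) (min δ (S.r / 2))
    · rw [hfδ _ (Metric.ball_subset_ball (min_le_left _ _) hx)]
      congr 3
      refine Finset.sum_congr rfl fun α _ => ?_
      congr 1
      exact mon_exp α u
    · rw [hφz _ hx]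
      simp
  rw [hZJ] at hG
  obtain ⟨hI, hlim⟩ := main_limit G₀ hndu hs₀ hs₀gt hs₀lt Hφ (Hχ B) hφχ hc0 hcT hc
  have hval : c.toReal * ∫ p : (Fin ρ → ℝ) × (Fin (n - ρ) → ℝ),
      φ 0 * (G₀.W p.1 * pPow (G₀.F₀ S.g p.2) s₀) =
      n.factorial * (volume C).toReal * φ 0 *
        ∫ y in posOrthant (n - ρ), pPow (facePoly a τ₀ (padR ρ y)) s₀ := by
    rw [integral_const_mul, Measure.volume_eq_prod,
      integral_prod_mul (fun a => G₀.W a) (fun b => pPow (G₀.F₀ S.g b) s₀), hFint, hvol]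
    ring
  rw [hval] at hlim
  have := mero_limit hs₀lt (fun K => by simpa using cont_mh K 0 0 φ Hφ)
    (differentiableOn_J hs₀ hs₀gt hs₀lt G₀ Hφ (Hχ B) hφχ) hG hlim
  simpa only [Complex.ofReal_mul, Complex.ofReal_natCast] using this

lemma facePoly_smul (σ : ℝ) (a : (Fin n → ℕ) → ℝ) (γ : Set (Fin n → ℝ)) :
    facePoly (σ • a) γ = fun x => σ * facePoly a γ x := by
  funext x
  unfold facePoly
  rw [← tsum_mul_left]
  refine tsum_congr fun α => ?_
  split_ifs <;> simp [mul_assoc]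

end assembly

/-- Real residue formula in the convergent case `-1 < s₀ < 0`: the principal-value
integral converges and gives the leading coefficient directly. -/
theorem real_residue_formula_convergent
    {n ρ r : ℕ} (hn : 1 ≤ n) (hρn : ρ ≤ n)
    (f : (Fin n → ℝ) → ℝ) (a : (Fin n → ℕ) → ℝ)
    (hfa : ∀ᶠ x in 𝓝 (0 : Fin n → ℝ), HasSum (fun α => a α * ∏ i, x i ^ α i) (f x))
    (hf0 : f 0 = 0) (hcrit : fderiv ℝ f 0 = 0)
    (hnc : ∃ α : Fin n → ℕ, α ≠ 0 ∧ a α ≠ 0)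
    (Γ : Set (Fin n → ℝ)) (hΓ : Γ = newtonPolyhedron {α | a α ≠ 0})
    (hnd : NonDegenerateR a Γ)
    (t₀ s₀ : ℝ) (ht₀pos : 0 < t₀)
    (ht₀mem : (fun _ => t₀) ∈ Γ)
    (ht₀min : ∀ t : ℝ, 0 < t → (fun _ => t) ∈ Γ → t₀ ≤ t)
    (hs₀ : s₀ = -1 / t₀) (hs₀Z : ∀ m : ℤ, s₀ ≠ (m : ℝ))
    (hs₀gt : -1 < s₀) (hs₀lt : s₀ < 0)
    (τ₀ : Set (Fin n → ℝ)) (hτface : IsFaceOf Γ τ₀)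
    (hτmem : (fun _ => t₀) ∈ τ₀)
    (hτmin : ∀ τ : Set (Fin n → ℝ), IsFaceOf Γ τ → (fun _ => t₀) ∈ τ → τ₀ ⊆ τ)
    (hτcomp : IsCompact τ₀)
    (hρ : ρ = n - faceDim τ₀)
    (ξ : Fin r → Fin n → ℕ) (hξinj : Function.Injective ξ)
    (hξprim : ∀ j, Finset.univ.gcd (ξ j) = 1)
    (hξfacet : ∀ j, faceDim (traceFace Γ (fun i => (ξ j i : ℝ))) = n - 1 ∧
      τ₀ ⊆ traceFace Γ (fun i => (ξ j i : ℝ)))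
    (hξall : ∀ τ : Set (Fin n → ℝ), IsFaceOf Γ τ → faceDim τ = n - 1 → τ₀ ⊆ τ →
      ∃ j, τ = traceFace Γ (fun i => (ξ j i : ℝ)))
    (N : Fin r → ℝ)
    (hN : ∀ j, IsLeast {v : ℝ | ∃ z ∈ Γ, v = dotR (fun i => (ξ j i : ℝ)) z} (N j))
    (hcompl : IsCompl (Submodule.span ℝ (Set.range fun j => fun i => (ξ j i : ℝ)))
      (Submodule.span ℝ {x : Fin n → ℝ | ∃ i : Fin n, ρ ≤ (i : ℕ) ∧ x = Pi.single i 1}))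
    (hrank : Module.finrank ℝ (Submodule.span ℝ (Set.range fun j => fun i => (ξ j i : ℝ))) = ρ)
    (C : Set (Fin n → ℝ))
    (hC : C = convexHull ℝ (insert (0 : Fin n → ℝ)
      ((Set.range fun j => fun i => (ξ j i : ℝ) / N j) ∪
        {x : Fin n → ℝ | ∃ i : Fin n, ρ ≤ (i : ℕ) ∧ x = Pi.single i 1}))) :
    (∀ σ : ℝ, σ = 1 ∨ σ = -1 →
      IntegrableOn (fun y : Fin (n - ρ) → ℝ =>
          pPow (sgnPart σ (facePoly a τ₀ (padR ρ y))) s₀)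
        (posOrthant (n - ρ))) ∧
    ∃ U : Set (Fin n → ℝ), IsOpen U ∧ (0 : Fin n → ℝ) ∈ U ∧
      ∀ φ : (Fin n → ℝ) → ℝ, ContDiff ℝ (⊤ : ℕ∞) φ → HasCompactSupport φ → tsupport φ ⊆ U →
      ∀ σ : ℝ, σ = 1 ∨ σ = -1 →
      ∀ G : ℂ → ℂ,
        IsMeroCont (fun s => ∫ x in posOrthant n,
          ((sgnPart σ (f x) : ℝ) : ℂ) ^ s * (φ x : ℂ)) (s₀ : ℂ) G →
        Tendsto (fun s : ℂ => (s - (s₀ : ℂ)) ^ ρ * G s) (𝓝[≠] (s₀ : ℂ))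
          (𝓝 ((n.factorial : ℂ) * ((volume C).toReal : ℂ) * (φ 0 : ℂ) *
            ((∫ y in posOrthant (n - ρ),
              pPow (sgnPart σ (facePoly a τ₀ (padR ρ y))) s₀ : ℝ) : ℂ))) := by
  have hmain : ∀ σ : ℝ, σ = 1 ∨ σ = -1 →
      IntegrableOn (fun y : Fin (n - ρ) → ℝ => pPow (facePoly (σ • a) τ₀ (padR ρ y)) s₀)
        (posOrthant (n - ρ)) ∧
      ∃ U : Set (Fin n → ℝ), IsOpen U ∧ (0 : Fin n → ℝ) ∈ U ∧
        ∀ φ : (Fin n → ℝ) → ℝ, ContDiff ℝ (⊤ : ℕ∞) φ → HasCompactSupport φ → tsupport φ ⊆ U →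
        ∀ G : ℂ → ℂ,
          IsMeroCont (fun s => ∫ x in posOrthant n, cp s (σ * f x) * (φ x : ℂ)) (s₀ : ℂ) G →
          Tendsto (fun s : ℂ => (s - (s₀ : ℂ)) ^ ρ * G s) (𝓝[≠] (s₀ : ℂ))
            (𝓝 ((n.factorial : ℂ) * ((volume C).toReal : ℂ) * (φ 0 : ℂ) *
              ((∫ y in posOrthant (n - ρ),
                pPow (facePoly (σ • a) τ₀ (padR ρ y)) s₀ : ℝ) : ℂ))) := by
    intro σ hσ
    have hσ0 : σ ≠ 0 := by rcases hσ with rfl | rfl <;> norm_num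
    refine residue_core hρn (fun x => σ * f x) (σ • a) ?_ ?_ Γ ?_ ?_ t₀ s₀ ht₀pos ht₀mem hs₀ hs₀gt
      hs₀lt τ₀ hτface hτmem hτmin hτcomp ξ ?_ (fun j => (hξfacet j).2) hξall N hN hcompl hrank C hC
    · filter_upwards [hfa] with x hx
      simpa only [Pi.smul_apply, smul_eq_mul, mul_assoc] using hx.mul_left σ
    · obtain ⟨α, -, hα⟩ := hnc
      exact ⟨α, mul_ne_zero hσ0 hα⟩
    · rw [hΓ]
      congr 1
      ext α
      simp [hσ0]
    · intro γ hγ hγc x hx h0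
      refine hnd γ hγ hγc x hx ?_
      rw [facePoly_smul] at h0
      change fderiv ℝ (σ • facePoly a γ) x = 0 at h0
      rw [fderiv_const_smul_field] at h0
      exact (smul_eq_zero.1 h0).resolve_left hσ0
    · intro j hj
      have := hξprim j
      rw [hj] at this
      simp [Finset.gcd_eq_zero_iff.2] at this
  have hpp : ∀ σ u s : ℝ, pPow (sgnPart σ u) s = pPow (σ * u) s := by
    intro σ u s
    unfold pPow sgnPart
    rcases le_or_gt (σ * u) 0 with h | h
    · rw [max_eq_right h, if_neg (lt_irrefl _), if_neg h.not_gt]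
    · rw [max_eq_left h.le]
  have hfp : ∀ (σ : ℝ) (x : Fin n → ℝ), pPow (sgnPart σ (facePoly a τ₀ x)) s₀ =
      pPow (facePoly (σ • a) τ₀ x) s₀ := by
    intro σ x
    rw [hpp, facePoly_smul]
  simp only [hfp]
  refine ⟨fun σ hσ => (hmain σ hσ).1, ?_⟩
  obtain ⟨-, U₁, hU₁, h₁, H₁⟩ := hmain 1 (Or.inl rfl)
  obtain ⟨-, U₂, hU₂, h₂, H₂⟩ := hmain (-1) (Or.inr rfl)
  refine ⟨U₁ ∩ U₂, hU₁.inter hU₂, ⟨h₁, h₂⟩, fun φ hφ hφc hφU σ hσ G hG => ?_⟩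
  have hG' : IsMeroCont (fun s => ∫ x in posOrthant n, cp s (σ * f x) * (φ x : ℂ)) (s₀ : ℂ) G := by
    obtain ⟨V, hV1, hV2, hV3, hV4, hV5⟩ := hG
    refine ⟨V, hV1, hV2, hV3, hV4, fun s hs => ?_⟩
    rw [hV5 s hs]
    beta_reduce
    congr 1
    funext x
    congr 1
    have hs0 : s ≠ 0 := by rintro rfl; simp at hs
    unfold cp sgnPart
    split_ifs with h
    · rw [max_eq_left h.le]
    · rw [max_eq_right (not_lt.1 h), Complex.ofReal_zero, Complex.zero_cpow hs0]
  rcases hσ with rfl | rfl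
  · exact H₁ φ hφ hφc (hφU.trans Set.inter_subset_left) G hG'
  · exact H₂ φ hφ hφc (hφU.trans Set.inter_subset_right) G hG'
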